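/- There exists a constant c₅ > 0 such that R_{g,t}(x) = M_{g,t}(x) + O(x·e^{−c₅√(log x)}). -/

import Mathlib

/-!
Write `k = gcd (2h, t)` and `n = t / k`. The sets of `d` in the definitions of `L` and `Q` together
form the divisors of `k`, and for `p ≡ 1 (mod t)` the sum of `ψ_d(p)` over `d ∣ k` is `k` or `0`
according to whether `g` is a `k`-th power modulo `p` (`sum_psiSum`). On the other hand, `t ∣ r_g(p)`
means that `p ≡ 1 (mod t)` and `g` is a `t`-th power modulo `p` (`dvd_resIndex_iff`). Hence `R - M`
counts primes `p ≡ 1 (mod t)` for which `g` is a `t`-th power, minus `1 / n` times those for which `g`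
is a `k`-th power (`Rgt_sub_Mgt`).

Let `β ^ t = g`, `L = ℚ(ζ_t, β)` and `F = ℚ(ζ_t, β ^ n)`. For almost all `p` the number `a_L(p)` of
ideals of norm `p` in `L` is `[L : ℚ]` if `p ≡ 1 (mod t)` and `g` is a `t`-th power modulo `p`, and `0`
otherwise; likewise for `F` with `k`-th powers (`aK_kummer`). Moreover `[L : F] = n`
(`natDegree_minpoly_eq`): if `β ^ j ∈ ℚ(ζ_t)`, then `|β ^ j|²` is rational because complex conjugation
is central in the abelian Galois group of `ℚ(ζ_t)` (`exists_rat_norm_sq`), and `g₀` is not a perfect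
power. Therefore `R - M` is, up to `O(1)`, equal to `1 / [L : ℚ]` times the sum of `a_L(p) - a_F(p)`
over `p ≤ x`, and the main terms cancel by the prime ideal theorem with the classical error term,
applied to the two fields (`aK_sub_aK`).

The prime ideal theorem is proved without the functional equation of the Dedekind zeta function.
* Ideals are counted with a Lipschitz weight. The sum over an ideal class becomes a sum over a lattice
  of a Lipschitz function on the Minkowski space: a partition of unity on the logarithmic space of
  units takes the place of the fundamental cone. This gives a main term `κ x³` with a power saving
  (`lattice_sum`, `tentSum_aK`).
* The Mellin transform of this count continues `(s - 1) ζ_K(s)` to a half plane `Re s > 1 - δ`, with a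
  polynomial bound (`exists_continuation`). Its pole, its Euler product (`eulerLike_aK`) and this bound
  are the only properties used afterwards (`ZetaLike`).
* The logarithmic derivative of a bounded function on a disc is, up to `O(log)`, the sum of
  `1 / (s - ρ)` over nearby zeros (`landau_lemma`). With `3 + 4 cos θ + cos 2θ ≥ 0` this yields the
  zero-free region and a bound for the logarithmic derivative in it (`ZetaLike.zero_free`,
  `ZetaLike.logDeriv_bound`).
* A Perron formula for the Cesàro mean, a shift of the contour and differencing give the summatory
  function of the ideal von Mangoldt function (`ZetaLike.psi`, `psi_lamK`); prime powers and primes of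
  higher degree are discarded (`theta_aK`), and the logarithmic weight is removed by partial summation.
-/

open Polynomial Filter
open scoped Classical Pointwise

noncomputable section

/-- The reduction of a rational number mod `p`. -/
def ratRed (g : ℚ) (p : ℕ) : ZMod p := (g.num : ZMod p) * ((g.den : ℕ) : ZMod p)⁻¹

/-- `ord_p(g) = 0`: `p` divides neither the numerator nor the denominator of `g`. -/
def OrdZero (g : ℚ) (p : ℕ) : Prop := ¬ (p : ℤ) ∣ g.num ∧ ¬ p ∣ g.den

/-- The residual index `r_g(p) = [(ℤ/pℤ)^* : ⟨g mod p⟩]`. -/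
def resIndex (g : ℚ) (p : ℕ) : ℕ := (p - 1) / orderOf (ratRed g p)

/-- The decomposition `g = ± g₀ ^ h` with `g₀ > 0` not an exact power of a rational,
`h ≥ 1`, for `g ∈ ℚ ∖ {-1,0,1}`. -/
structure Decomp (g g₀ : ℚ) (h : ℕ) : Prop where
  ne_neg_one : g ≠ -1
  ne_zero : g ≠ 0
  ne_one : g ≠ 1
  g₀_pos : 0 < g₀
  not_power : ¬ ∃ (r : ℚ) (k : ℕ), 2 ≤ k ∧ r ^ k = g₀
  h_pos : 1 ≤ h
  eq : g = g₀ ^ h ∨ g = -(g₀ ^ h)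

instance (f : ℚ[X]) : NumberField (SplittingField f) where

/-- The splitting field `ℚ(ζ_m, g^{1/m})` of `X^m - g` over `ℚ`. -/
abbrev splitField (g : ℚ) (m : ℕ) : Type := SplittingField (X ^ m - C g)

/-- The quadratic field `ℚ(√g₀)`, realised as the splitting field of `X² - g₀`. -/
abbrev quadField (g₀ : ℚ) : Type := SplittingField (X ^ 2 - C g₀)

/-- `d(g₀)`, the discriminant of the quadratic field `ℚ(√g₀)`. -/
def discQuad (g₀ : ℚ) : ℤ := NumberField.discr (quadField g₀)

/-- The field `ℚ(ζ_m, √g₀)`. -/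
abbrev cycQuadField (g₀ : ℚ) (m : ℕ) : Type :=
  SplittingField ((X ^ m - 1) * (X ^ 2 - C g₀))

/-- A rational prime `p` splits completely in the number field `K`:
there are `[K:ℚ]` maximal ideals of the ring of integers above `p`. -/
def SplitsCompletely (K : Type*) [Field K] [NumberField K] (p : ℕ) : Prop :=
  Nat.card {P : Ideal (NumberField.RingOfIntegers K) //
      P.IsMaximal ∧ (p : NumberField.RingOfIntegers K) ∈ P} = Module.finrank ℚ K

/-- The number of primes `p ≤ x` satisfying the predicate `P`. -/
def countPrimes (x : ℝ) (P : ℕ → Prop) : ℕ :=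
  ((Finset.range (⌊x⌋₊ + 1)).filter fun p => p.Prime ∧ P p).card

/-- `N_{g,t}(x)`: the number of odd primes `p ≤ x` with `ord_p(g) = 0` and `r_g(p) = t`. -/
def Ngt (g : ℚ) (t : ℕ) (x : ℝ) : ℕ :=
  countPrimes x fun p => Odd p ∧ OrdZero g p ∧ resIndex g p = t

/-- `R_{g,t}(x)`: the number of odd primes `p ≤ x` with `ord_p(g) = 0` and `t ∣ r_g(p)`. -/
def Rgt (g : ℚ) (t : ℕ) (x : ℝ) : ℕ :=
  countPrimes x fun p => Odd p ∧ OrdZero g p ∧ t ∣ resIndex g p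

/-- `π(x; m, 1)`: the number of odd primes `p ≤ x` with `ord_p(g) = 0` and `p ≡ 1 (mod m)`. -/
def piCount (g : ℚ) (m : ℕ) (x : ℝ) : ℕ :=
  countPrimes x fun p => Odd p ∧ OrdZero g p ∧ p ≡ 1 [MOD m]

/-- `P_K(x)` restricted to odd primes `p` with `ord_p(g) = 0`. -/
def PKg (g : ℚ) (K : Type*) [Field K] [NumberField K] (x : ℝ) : ℕ :=
  countPrimes x fun p => Odd p ∧ OrdZero g p ∧ SplitsCompletely K p

/-- The logarithmic integral `Li(x) = ∫₂ˣ dt / log t`. -/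
def Li (x : ℝ) : ℝ := ∫ t in (2:ℝ)..x, 1 / Real.log t

/-- `ψ_d(p) = Σ_{ord χ = d} χ(g mod p)`, the sum over the complex multiplicative
characters of `(ℤ/pℤ)^*` of order exactly `d`. -/
def psiSum (g : ℚ) (p d : ℕ) : ℂ :=
  ∑ᶠ χ ∈ {χ : MulChar (ZMod p) ℂ | orderOf χ = d}, χ (ratRed g p)

/-- The finset of odd primes `p ≤ x` with `ord_p(g) = 0` and `p ≡ 1 (mod t)`. -/
def primesTo (g : ℚ) (t : ℕ) (x : ℝ) : Finset ℕ :=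
  (Finset.range (⌊x⌋₊ + 1)).filter fun p => p.Prime ∧ Odd p ∧ OrdZero g p ∧ p ≡ 1 [MOD t]

/-- The `linear' contribution `L_{g,t}(x)`. -/
def Lgt (g : ℚ) (h t : ℕ) (x : ℝ) : ℂ :=
  (1 / (t : ℂ)) * ∑ p ∈ primesTo g t x, ∑ d ∈ (Nat.gcd h t).divisors, psiSum g p d

/-- The `quadratic' contribution `Q_{g,t}(x)`. -/
def Qgt (g : ℚ) (h t : ℕ) (x : ℝ) : ℂ :=
  (1 / (t : ℂ)) * ∑ p ∈ primesTo g t x,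
    ∑ d ∈ (Nat.gcd (2 * h) t).divisors.filter (fun d => ¬ d ∣ h), psiSum g p d

/-- `M_{g,t}(x) = L_{g,t}(x) + Q_{g,t}(x)`. -/
def Mgt (g : ℚ) (h t : ℕ) (x : ℝ) : ℂ := Lgt g h t x + Qgt g h t x

/-- The weight `w_{g,t}(p)` of Theorem 1 of the paper. -/
def wgt (g g₀ : ℚ) (h t p : ℕ) : ℚ :=
  let e := padicValNat 2 h
  let τ := padicValNat 2 t
  let ht := h / Nat.gcd h t
  let ε₁ : ℚ := if τ < e then 0 else if τ = e then -1 else 1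
  if 0 < g ∧ p ≡ 1 [MOD t] ∧ Nat.gcd ((p - 1) / t) ht = 1 then
    1 + ε₁ / 2 * (1 + (-1 : ℚ) ^ ((p - 1) / 2 ^ e)) * (jacobiSym (discQuad g₀) p : ℚ)
  else if g < 0 ∧ ¬ 2 ∣ ht ∧ p ≡ 1 [MOD Nat.lcm (2 ^ (e + 1)) t] ∧
      Nat.gcd ((p - 1) / t) ht = 1 then
    1 + ε₁ * (-1 : ℚ) ^ ((p - 1) / 2 ^ (e + 1)) * (jacobiSym (discQuad g₀) p : ℚ)
  else if g < 0 ∧ 2 ∣ ht ∧ p ≡ 1 [MOD 2 * t] ∧ Nat.gcd ((p - 1) / (2 * t)) ht = 1 then 2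
  else 0

/-- `G^m = {x^m : x ∈ G}`. -/
def powSet (G : Type*) [Monoid G] (m : ℕ) : Set G := Set.range fun x : G => x ^ m

/-- `ρ`: the density `|a·G^{2h} ∩ G^t| / |G^{2h}|` in a group `G` of order `n`
(and `0` if `t ∤ n`). -/
def rhoDen (G : Type*) [Group G] (n : ℕ) (a : G) (h t : ℕ) : ℚ :=
  if t ∣ n then
    (((a • powSet G (2 * h)) ∩ powSet G t).ncard : ℚ) / ((powSet G (2 * h)).ncard : ℚ)
  else 0

/-- `r_{g,t}(p) = t_h · ρ_{sgn g, (d(g₀)/p), t}`, computed with respect to the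
generator `γ` of `(ℤ/pℤ)^*`. -/
def rgt (g g₀ : ℚ) (h t p : ℕ) (γ : (ZMod p)ˣ) : ℚ :=
  (t / Nat.gcd t h : ℕ) *
    rhoDen (ZMod p)ˣ (p - 1)
      ((if 0 < g then 1 else -1) * (if jacobiSym (discQuad g₀) p = 1 then 1 else γ ^ h)) h t

/-- The coefficients of the Dedekind zeta function of `K`: the number of ideals of
the ring of integers of `K` of absolute norm `n`. -/
def zetaCoeff (K : Type*) [Field K] [NumberField K] (n : ℕ) : ℂ :=
  (Nat.card {I : Ideal (NumberField.RingOfIntegers K) // Ideal.absNorm I = n} : ℂ)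

/-- The Riemann Hypothesis for the Dedekind zeta function `ζ_K` of a number field `K`:
any analytic continuation of the Dirichlet series `Σ_I N(I)^{-s}` off `s = 1` has all
its zeros in the critical strip on the line `Re s = 1/2`. -/
def DedekindRH (K : Type*) [Field K] [NumberField K] : Prop :=
  ∀ Z : ℂ → ℂ, (∀ s : ℂ, s ≠ 1 → AnalyticAt ℂ Z s) →
    (∀ s : ℂ, 1 < s.re → Z s = LSeries (zetaCoeff K) s) →
    ∀ s : ℂ, 0 < s.re → s.re < 1 → Z s = 0 → s.re = 1 / 2

/-- The Ramanujan sum `c_d(m)`. -/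
def ramanujanSum (d m : ℕ) : ℂ :=
  ∑ k ∈ (Finset.Icc 1 d).filter (fun k => Nat.gcd k d = 1),
    Complex.exp (2 * Real.pi * Complex.I * k * m / d)

/-- The sum `Σ_{ord χ = d} χ(γ)` over the complex characters of `G` of order exactly `d`. -/
def charOrdSum {G : Type*} [Group G] (d : ℕ) (γ : G) : ℂ :=
  ∑ᶠ χ ∈ {χ : G →* ℂˣ | orderOf χ = d}, ((χ γ : ℂˣ) : ℂ)

end

/-! ### Landau's lemma on the logarithmic derivative -/

/-- A Blaschke factor with zero `ρ` has modulus one on the unit circle. -/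
theorem blaschke_norm_eq {z ρ : ℂ} (hz : ‖z‖ = 1) :
    ‖1 - (starRingEnd ℂ) ρ * z‖ = ‖z - ρ‖ := by
  have h1 : z * (starRingEnd ℂ) z = 1 := by
    rw [Complex.mul_conj, Complex.normSq_eq_norm_sq, hz]; simp
  have : (1 - (starRingEnd ℂ) ρ * z) = z * (starRingEnd ℂ) (z - ρ) := by
    rw [map_sub, mul_sub, h1]; ring
  rw [this, norm_mul, hz, one_mul, Complex.norm_conj]

/-- Replacing the linear factors `z - ρᵢ` by `1 - ρ̄ᵢ z` does not change the modulus on the unit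
circle, so the bound for `f` passes to `g · ∏ (1 - ρ̄ᵢ z)` by the maximum principle. -/
theorem landau_factor_bound {f : ℂ → ℂ} {M : ℝ}
    (hb : ∀ z, ‖z‖ ≤ 1 → ‖f z‖ ≤ Real.exp M * ‖f 0‖)
    {k : ℕ} {ρ : Fin k → ℂ} (hρ : ∀ i, ‖ρ i‖ ≤ 1 / 2) {g : ℂ → ℂ}
    (hg : DifferentiableOn ℂ g (Metric.ball 0 2))
    (hfg : ∀ z ∈ Metric.ball (0 : ℂ) 2, f z = (∏ i, (z - ρ i)) * g z) :
    (∀ z, ‖z‖ ≤ 1 → ‖g z * ∏ i, (1 - (starRingEnd ℂ) (ρ i) * z)‖ ≤ Real.exp M * ‖f 0‖) ∧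
      2 ^ k * ‖f 0‖ ≤ ‖g 0‖ := by
  set G : ℂ → ℂ := fun z => g z * ∏ i, (1 - (starRingEnd ℂ) (ρ i) * z) with hG
  have hGd : DifferentiableOn ℂ G (Metric.ball 0 2) := by
    apply hg.mul
    fun_prop
  have hcl : closure (Metric.ball (0 : ℂ) 1) = Metric.closedBall 0 1 := closure_ball _ one_ne_zero
  have hsub : Metric.closedBall (0 : ℂ) 1 ⊆ Metric.ball 0 2 :=
    Metric.closedBall_subset_ball (by norm_num)
  constructor
  · intro z hz
    have hd : DiffContOnCl ℂ G (Metric.ball 0 1) :=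
      (hGd.mono (hcl ▸ hsub)).diffContOnCl
    refine Complex.norm_le_of_forall_mem_frontier_norm_le (U := Metric.ball 0 1)
      Metric.isBounded_ball hd ?_ (z := z) (by rw [hcl]; simpa using hz)
    intro w hw
    rw [frontier_ball _ one_ne_zero] at hw
    have hw1 : ‖w‖ = 1 := by simpa using hw
    have : ‖G w‖ = ‖f w‖ := by
      rw [hfg w (hsub (by simp [hw1])), hG]
      simp only [norm_mul, norm_prod, blaschke_norm_eq hw1]
      ring
    rw [this]
    exact hb w hw1.le
  · have h0 : ‖f 0‖ = (∏ i, ‖ρ i‖) * ‖g 0‖ := by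
      rw [hfg 0 (by simp)]; simp
    have h1 : (∏ i, ‖ρ i‖) ≤ (1 / 2) ^ k := by
      calc (∏ i, ‖ρ i‖) ≤ ∏ i : Fin k, (1 / 2 : ℝ) :=
            Finset.prod_le_prod (fun i _ => norm_nonneg _) (fun i _ => hρ i)
        _ = _ := by simp
    calc 2 ^ k * ‖f 0‖ = 2 ^ k * ((∏ i, ‖ρ i‖) * ‖g 0‖) := by rw [h0]
      _ ≤ 2 ^ k * ((1 / 2) ^ k * ‖g 0‖) := by gcongr
      _ = ‖g 0‖ := by rw [← mul_assoc, ← mul_pow]; norm_num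

/-- A form of Jensen's inequality: the number of zeros in the half disc is bounded by the growth. -/
theorem landau_card_bound {f : ℂ → ℂ} {M : ℝ} (hf0 : f 0 ≠ 0)
    (hb : ∀ z, ‖z‖ ≤ 1 → ‖f z‖ ≤ Real.exp M * ‖f 0‖)
    {k : ℕ} {ρ : Fin k → ℂ} (hρ : ∀ i, ‖ρ i‖ ≤ 1 / 2) {g : ℂ → ℂ}
    (hg : DifferentiableOn ℂ g (Metric.ball 0 2))
    (hfg : ∀ z ∈ Metric.ball (0 : ℂ) 2, f z = (∏ i, (z - ρ i)) * g z) : (k : ℝ) ≤ 2 * M := by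
  obtain ⟨h1, h2⟩ := landau_factor_bound hb hρ hg hfg
  have h3 := h1 0 (by simp)
  simp at h3
  have h4 : (2 : ℝ) ^ k ≤ Real.exp M := by
    have : 0 < ‖f 0‖ := norm_pos_iff.mpr hf0
    nlinarith
  have h5 : (k : ℝ) * Real.log 2 ≤ M := by
    have := Real.log_le_log (by positivity) h4
    rwa [Real.log_exp, Real.log_pow] at this
  have := Real.log_two_gt_d9
  have hk : (0 : ℝ) ≤ k := by positivity
  nlinarith

/-- Existence of a factorization collecting all zeros in the disc of radius `1/2`: a factorization
with the largest possible number of linear factors leaves no zero behind. -/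
theorem landau_factorization {f : ℂ → ℂ} {M : ℝ} (hf : DifferentiableOn ℂ f (Metric.ball 0 2))
    (hf0 : f 0 ≠ 0) (hb : ∀ z, ‖z‖ ≤ 1 → ‖f z‖ ≤ Real.exp M * ‖f 0‖) :
    ∃ (k : ℕ) (ρ : Fin k → ℂ) (g : ℂ → ℂ), (∀ i, ‖ρ i‖ ≤ 1 / 2) ∧
      DifferentiableOn ℂ g (Metric.ball 0 2) ∧
      (∀ z ∈ Metric.ball (0 : ℂ) 2, f z = (∏ i, (z - ρ i)) * g z) ∧
      ∀ z, ‖z‖ ≤ 1 / 2 → g z ≠ 0 := by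
  let P : ℕ → Prop := fun k => ∃ (ρ : Fin k → ℂ) (g : ℂ → ℂ), (∀ i, ‖ρ i‖ ≤ 1 / 2) ∧
      DifferentiableOn ℂ g (Metric.ball 0 2) ∧
      (∀ z ∈ Metric.ball (0 : ℂ) 2, f z = (∏ i, (z - ρ i)) * g z)
  have hP0 : P 0 := ⟨Fin.elim0, f, fun i => i.elim0, hf, by simp⟩
  have hbd : ∀ k, P k → k ≤ ⌊2 * M⌋₊ := by
    rintro k ⟨ρ, g, h1, h2, h3⟩
    exact Nat.le_floor (landau_card_bound hf0 hb h1 h2 h3)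
  set k := Nat.findGreatest P ⌊2 * M⌋₊ with hk
  have hPk : P k := Nat.findGreatest_spec (Nat.zero_le _) hP0
  obtain ⟨ρ, g, h1, h2, h3⟩ := hPk
  refine ⟨k, ρ, g, h1, h2, h3, ?_⟩
  intro z hz hgz
  have hzb : z ∈ Metric.ball (0 : ℂ) 2 := by
    rw [mem_ball_zero_iff]; linarith
  have hP : P (k + 1) := by
    refine ⟨Fin.cons z ρ, dslope g z, ?_, ?_, ?_⟩
    · intro i
      refine Fin.cases ?_ ?_ i
      · simpa using hz
      · intro j; simpa using h1 j
    · exact (Complex.differentiableOn_dslope (Metric.isOpen_ball.mem_nhds hzb)).mpr h2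
    · intro w hw
      have h4 : (w - z) * dslope g z w = g w := by
        have := sub_smul_dslope g z w
        rwa [hgz, sub_zero, smul_eq_mul] at this
      rw [h3 w hw, Fin.prod_univ_succ]
      simp only [Fin.cons_zero, Fin.cons_succ]
      rw [← h4]; ring
  have := Nat.le_findGreatest (hbd _ hP) hP
  omega

/-- For a zero-free function, a bound on its modulus bounds its logarithmic derivative. -/
theorem logDeriv_bound_of_ne_zero {G : ℂ → ℂ} {M : ℝ} (hM : 0 < M)
    (hG : DifferentiableOn ℂ G (Metric.ball 0 2)) (hne : ∀ z, ‖z‖ ≤ 1 / 2 → G z ≠ 0)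
    (hb : ∀ z, ‖z‖ ≤ 1 → ‖G z‖ ≤ Real.exp M * ‖G 0‖) {z : ℂ} (hz : ‖z‖ ≤ 1 / 4) :
    ‖logDeriv G z‖ ≤ 48 * M := by
  have hsub : Metric.ball (0 : ℂ) (1 / 2) ⊆ Metric.ball 0 2 :=
    Metric.ball_subset_ball (by norm_num)
  have hG' : DifferentiableOn ℂ (logDeriv G) (Metric.ball 0 (1 / 2)) := by
    apply DifferentiableOn.div ((hG.deriv Metric.isOpen_ball).mono hsub) (hG.mono hsub)
    intro x hx
    exact hne x (mem_ball_zero_iff.mp hx).le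
  -- a holomorphic logarithm `H` of `G / G 0` with `H 0 = 0`
  obtain ⟨H0, hH0⟩ := hG'.isExactOn_ball
  set H : ℂ → ℂ := fun z => H0 z - H0 0
  have hH : ∀ z ∈ Metric.ball (0 : ℂ) (1 / 2), HasDerivAt H (logDeriv G z) z :=
    fun z hz => (hH0 z hz).sub_const _
  have hHd : DifferentiableOn ℂ H (Metric.ball 0 (1 / 2)) :=
    fun z hz => (hH z hz).differentiableAt.differentiableWithinAt
  have hG0 : G 0 ≠ 0 := hne 0 (by simp)
  have hexp : ∀ z ∈ Metric.ball (0 : ℂ) (1 / 2), G z = G 0 * Complex.exp (H z) := by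
    intro z hz
    have hc : ∀ w ∈ Metric.ball (0 : ℂ) (1 / 2),
        HasDerivAt (fun w => G w * Complex.exp (-H w)) 0 w := by
      intro w hw
      have hGw : HasDerivAt G (deriv G w) w :=
        (hG.differentiableAt (Metric.isOpen_ball.mem_nhds (hsub hw))).hasDerivAt
      have := hGw.mul ((hH w hw).neg.cexp)
      refine this.congr_deriv ?_
      have hw0 : G w ≠ 0 := hne w (mem_ball_zero_iff.mp hw).le
      rw [logDeriv_apply]
      field_simp
      ring
    have := Metric.isOpen_ball.is_const_of_deriv_eq_zero
      (convex_ball (0 : ℂ) (1 / 2)).isPreconnected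
      (f := fun w => G w * Complex.exp (-H w))
      (fun w hw => (hc w hw).differentiableAt.differentiableWithinAt)
      (fun w hw => (hc w hw).deriv) hz (Metric.mem_ball_self (by norm_num))
    have hH00 : H 0 = 0 := sub_self _
    simp only [hH00, neg_zero, Complex.exp_zero, mul_one] at this
    rw [← this, mul_assoc, ← Complex.exp_add]
    simp
  have hre : Set.MapsTo H (Metric.ball 0 (1 / 2)) {z | z.re ≤ M} := by
    intro w hw
    have hw' := hb w ((mem_ball_zero_iff.mp hw).le.trans (by norm_num))
    rw [hexp w hw, norm_mul, Complex.norm_exp, mul_comm] at hw'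
    have := le_of_mul_le_mul_right hw' (norm_pos_iff.mpr hG0)
    exact Real.exp_le_exp.mp this
  -- Borel–Carathéodory turns the bound for `Re H` into one for `|H|`, and Cauchy's estimate on
  -- circles of radius `1/8` bounds the derivative of `H`
  have hHb : ∀ w, ‖w‖ ≤ 3 / 8 → ‖H w‖ ≤ 6 * M := by
    intro w hw
    have hwb : w ∈ Metric.ball (0 : ℂ) (1 / 2) := by
      rw [mem_ball_zero_iff]; linarith
    have h1 := Complex.borelCaratheodory_zero hM hHd hre (by norm_num) hwb (sub_self _)
    refine h1.trans ?_
    rw [div_le_iff₀ (by linarith)]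
    nlinarith
  have hzb : z ∈ Metric.ball (0 : ℂ) (1 / 2) := by
    rw [mem_ball_zero_iff]; linarith
  rw [← (hH z hzb).deriv]
  have h8 : Metric.closedBall z (1 / 8) ⊆ Metric.closedBall 0 (3 / 8) := by
    apply Metric.closedBall_subset_closedBall'
    rw [dist_zero_right]; linarith
  have := Complex.norm_deriv_le_of_forall_mem_sphere_norm_le (c := z) (R := 1 / 8) (C := 6 * M)
    (f := H) (by norm_num) ?_ ?_
  · refine this.trans (le_of_eq ?_); ring
  · have hcl : closure (Metric.ball z (1 / 8)) = Metric.closedBall z (1 / 8) :=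
      closure_ball _ (by norm_num)
    refine DifferentiableOn.diffContOnCl ?_
    rw [hcl]
    refine hHd.mono (h8.trans (Metric.closedBall_subset_ball (by norm_num)))
  · intro w hw
    exact hHb w (by simpa using h8 (Metric.sphere_subset_closedBall hw))

/-- **Landau's lemma.** Inside a disc where `f` is not much larger than at the centre, the
logarithmic derivative of `f` is, up to a bounded error, the sum of the polar parts at the zeros
of `f`. -/
theorem landau_lemma {f : ℂ → ℂ} {M : ℝ} (hM : 0 < M)
    (hf : DifferentiableOn ℂ f (Metric.ball 0 2))
    (hf0 : f 0 ≠ 0) (hb : ∀ z, ‖z‖ ≤ 1 → ‖f z‖ ≤ Real.exp M * ‖f 0‖) :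
    ∃ (k : ℕ) (ρ : Fin k → ℂ), (k : ℝ) ≤ 2 * M ∧ (∀ i, ‖ρ i‖ ≤ 1 / 2 ∧ f (ρ i) = 0) ∧
      (∀ z, ‖z‖ ≤ 1 / 2 → f z = 0 → ∃ i, ρ i = z) ∧
      ∀ z, ‖z‖ ≤ 1 / 4 → f z ≠ 0 → ‖logDeriv f z - ∑ i, 1 / (z - ρ i)‖ ≤ 50 * M := by
  obtain ⟨k, ρ, g, h1, h2, h3, h4⟩ := landau_factorization hf hf0 hb
  have hk := landau_card_bound hf0 hb h1 h2 h3
  obtain ⟨h5, h6⟩ := landau_factor_bound hb h1 h2 h3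
  refine ⟨k, ρ, hk, ?_, ?_, ?_⟩
  · intro i
    refine ⟨h1 i, ?_⟩
    rw [h3 _ (by rw [mem_ball_zero_iff]; linarith [h1 i])]
    rw [Finset.prod_eq_zero (Finset.mem_univ i) (sub_self _), zero_mul]
  · intro z hz hfz
    rw [h3 z (by rw [mem_ball_zero_iff]; linarith)] at hfz
    rcases mul_eq_zero.mp hfz with h | h
    · obtain ⟨i, -, hi⟩ := Finset.prod_eq_zero_iff.mp h
      exact ⟨i, (sub_eq_zero.mp hi).symm⟩
    · exact absurd h (h4 z hz)
  · intro z hz hfz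
    have hzb : z ∈ Metric.ball (0 : ℂ) 2 := by rw [mem_ball_zero_iff]; linarith
    have hden : ∀ i, ∀ w : ℂ, ‖w‖ ≤ 1 → 1 / 2 ≤ ‖1 - (starRingEnd ℂ) (ρ i) * w‖ := by
      intro i w hw
      have h7 : ‖(starRingEnd ℂ) (ρ i) * w‖ ≤ 1 / 2 := by
        rw [norm_mul, Complex.norm_conj]
        have := h1 i
        nlinarith [norm_nonneg (ρ i), norm_nonneg w]
      have h8 := norm_sub_norm_le (1 : ℂ) ((starRingEnd ℂ) (ρ i) * w)
      rw [norm_one] at h8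
      linarith
    have hden0 : ∀ i, ∀ w : ℂ, ‖w‖ ≤ 1 → 1 - (starRingEnd ℂ) (ρ i) * w ≠ 0 := by
      intro i w hw h
      have := hden i w hw
      rw [h, norm_zero] at this
      linarith
    -- `G = g B` has no zeros in the half disc, and `B'/B` is bounded term by term
    set B : ℂ → ℂ := fun w => ∏ i, (1 - (starRingEnd ℂ) (ρ i) * w)
    have hBd : Differentiable ℂ B := by fun_prop
    set G : ℂ → ℂ := fun w => g w * B w with hG
    have hGb := logDeriv_bound_of_ne_zero (G := G) hM (h2.mul hBd.differentiableOn) (fun w hw =>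
      mul_ne_zero (h4 w hw) (Finset.prod_ne_zero_iff.mpr fun i _ =>
        hden0 i w (by linarith))) (by
        intro w hw
        refine (h5 w hw).trans ?_
        gcongr
        have : G 0 = g 0 := by simp [hG, B]
        rw [this]
        refine le_trans ?_ h6
        exact le_mul_of_one_le_left (norm_nonneg _) (one_le_pow₀ (by norm_num))) hz
    have hgd : DifferentiableAt ℂ g z := h2.differentiableAt (Metric.isOpen_ball.mem_nhds hzb)
    have hz1 : ‖z‖ ≤ 1 := by linarith
    have hL1 : logDeriv G z = logDeriv g z + logDeriv B z :=
      logDeriv_mul z (h4 z (by linarith)) (Finset.prod_ne_zero_iff.mpr fun i _ => hden0 i z hz1)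
        hgd hBd.differentiableAt
    have hρz : ∀ i, z - ρ i ≠ 0 := by
      intro i hi
      apply hfz
      rw [h3 z hzb, Finset.prod_eq_zero (Finset.mem_univ i) hi, zero_mul]
    have hL2 : logDeriv f z = (∑ i, 1 / (z - ρ i)) + logDeriv g z := by
      have he : f =ᶠ[nhds z] fun w => (∏ i, (w - ρ i)) * g w := by
        filter_upwards [Metric.isOpen_ball.mem_nhds hzb] with w hw using h3 w hw
      have hl : logDeriv f z = logDeriv (fun w => (∏ i, (w - ρ i)) * g w) z := by
        rw [logDeriv_apply, logDeriv_apply, he.deriv_eq, he.eq_of_nhds]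
      rw [hl, logDeriv_mul z (Finset.prod_ne_zero_iff.mpr fun i _ => hρz i)
        (h4 z (by linarith)) (by fun_prop) hgd]
      congr 1
      rw [logDeriv_prod (f := fun i w => w - ρ i) (fun i _ => hρz i)
        (fun i _ => by fun_prop)]
      refine Finset.sum_congr rfl fun i _ => ?_
      rw [logDeriv_apply]; simp
    have hL3 : logDeriv B z =
        ∑ i, -(starRingEnd ℂ) (ρ i) / (1 - (starRingEnd ℂ) (ρ i) * z) := by
      rw [logDeriv_prod (f := fun i w => 1 - (starRingEnd ℂ) (ρ i) * w)
        (fun i _ => hden0 i z hz1) (fun i _ => by fun_prop)]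
      refine Finset.sum_congr rfl fun i _ => ?_
      rw [logDeriv_apply]
      congr 1
      have : HasDerivAt (fun w : ℂ => 1 - (starRingEnd ℂ) (ρ i) * w)
          (-((starRingEnd ℂ) (ρ i) * 1)) z := ((hasDerivAt_id z).const_mul _).const_sub 1
      rw [this.deriv, mul_one]
    have hBb : ‖logDeriv B z‖ ≤ k := by
      rw [hL3]
      refine (norm_sum_le _ _).trans ?_
      calc _ ≤ ∑ i : Fin k, (1 : ℝ) := Finset.sum_le_sum fun i _ => ?_
        _ = k := by simp
      rw [norm_div, norm_neg, Complex.norm_conj]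
      exact div_le_one_of_le₀ ((h1 i).trans (hden i z hz1)) (norm_nonneg _)
    have : logDeriv f z - ∑ i, 1 / (z - ρ i) = logDeriv G z - logDeriv B z := by
      rw [hL1, hL2]; ring
    rw [this]
    refine (norm_sub_le _ _).trans ?_
    linarith

/-! ### The zero-free region -/

/-- The analytic input for the prime number theorem: `f(s) = (s-1) Z(s)` is holomorphic and of
polynomial growth slightly to the left of `Re s = 1`, does not vanish at `1`, and
`-Z'/Z` is the Dirichlet series of the nonnegative sequence `Λ` on `Re s > 1`. Moreover `|f|` is
bounded below on every vertical line to the right of `1`. -/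
structure ZetaLike (f : ℂ → ℂ) (Λ : ℕ → ℝ) (δ C : ℝ) : Prop where
  δ_pos : 0 < δ
  δ_le : δ ≤ 1
  C_pos : 0 < C
  diff : DifferentiableOn ℂ f {s | 1 - δ < s.re}
  bound : ∀ s : ℂ, 1 - δ < s.re → s.re ≤ 3 → ‖f s‖ ≤ C * (‖s‖ + 1) ^ 3
  one_ne : f 1 ≠ 0
  nonneg : ∀ n, 0 ≤ Λ n
  summable : ∀ s : ℂ, 1 < s.re → LSeriesSummable (fun n => (Λ n : ℂ)) s
  ne_zero : ∀ s : ℂ, 1 < s.re → f s ≠ 0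
  eq : ∀ s : ℂ, 1 < s.re → LSeries (fun n => (Λ n : ℂ)) s = 1 / (s - 1) - logDeriv f s
  lower : ∀ σ : ℝ, 1 < σ → ∃ c : ℝ, 0 < c ∧ ∀ t : ℝ, c ≤ ‖f (σ + t * Complex.I)‖

/-- The logarithmic size of the height `t`. -/
noncomputable def ell (t : ℝ) : ℝ := Real.log (|t| + 3)

lemma one_le_ell (t : ℝ) : 1 ≤ ell t := by
  rw [ell, Real.le_log_iff_exp_le (by positivity)]
  have := Real.exp_one_lt_d9
  have := abs_nonneg t
  linarith

lemma ell_mono {s t : ℝ} (h : |s| ≤ |t|) : ell s ≤ ell t :=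
  Real.log_le_log (by positivity) (by linarith)

lemma ell_add {s t : ℝ} (h : |s| ≤ 2 * |t| + 2) : ell s ≤ 2 * ell t := by
  rw [ell, ell, ← Real.log_rpow (by positivity)]
  apply Real.log_le_log (by positivity)
  norm_num
  nlinarith [abs_nonneg t]

/-- Local form of the Hadamard product: near height `t`, `f'/f` is the sum over the
nearby zeros up to `O(log t)`. -/
lemma ZetaLike.near_height {f : ℂ → ℂ} {Λ : ℕ → ℝ} {δ C : ℝ} (hf : ZetaLike f Λ δ C) :
    ∃ A : ℝ, 1 ≤ A ∧ ∀ t : ℝ, ∃ (k : ℕ) (ρ : Fin k → ℂ), (k : ℝ) ≤ A * ell t ∧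
      (∀ i, ‖ρ i - ((1 + δ / 16 : ℝ) + t * Complex.I)‖ ≤ δ / 4 ∧ f (ρ i) = 0) ∧
      (∀ s, ‖s - ((1 + δ / 16 : ℝ) + t * Complex.I)‖ ≤ δ / 4 → f s = 0 → ∃ i, ρ i = s) ∧
      ∀ s, ‖s - ((1 + δ / 16 : ℝ) + t * Complex.I)‖ ≤ δ / 8 → f s ≠ 0 →
        ‖logDeriv f s - ∑ i, 1 / (s - ρ i)‖ ≤ A * ell t := by
  have hδ := hf.δ_pos
  have hδ1 := hf.δ_le
  obtain ⟨c, hc, hlow⟩ := hf.lower (1 + δ / 16) (by linarith)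
  -- the growth of `f` relative to its lower bound `c` at the centre is at most `exp (A₀ ell t)`
  obtain ⟨A₀, hA₀1, hA₀⟩ : ∃ A₀ : ℝ, 1 ≤ A₀ ∧ ∀ t : ℝ, ∀ s : ℂ, ‖s‖ ≤ |t| + 2 →
      C * (‖s‖ + 1) ^ 3 ≤ Real.exp (A₀ * ell t) * c := by
    refine ⟨max 0 (Real.log (C / c)) + 3, by have := le_max_left 0 (Real.log (C/c)); linarith,
      fun t s hs => ?_⟩
    have h1 : (‖s‖ + 1) ^ 3 ≤ Real.exp (3 * ell t) := by
      have : Real.exp (3 * ell t) = (|t| + 3) ^ 3 := by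
        rw [mul_comm, Real.exp_mul, ell, Real.exp_log (by positivity)]
        norm_num
      rw [this]
      exact pow_le_pow_left₀ (by positivity) (by linarith) 3
    have h2 : C / c ≤ Real.exp (max 0 (Real.log (C / c)) * ell t) := by
      calc C / c = Real.exp (Real.log (C / c)) := (Real.exp_log (div_pos hf.C_pos hc)).symm
        _ ≤ _ := by
          apply Real.exp_le_exp.mpr
          calc _ ≤ max 0 (Real.log (C / c)) * 1 := by simp
            _ ≤ _ := by gcongr; exact one_le_ell t
    rw [add_mul, Real.exp_add]
    rw [div_le_iff₀ hc] at h2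
    calc C * (‖s‖ + 1) ^ 3 ≤ (Real.exp (max 0 (Real.log (C / c)) * ell t) * c) *
          Real.exp (3 * ell t) := by gcongr
      _ = _ := by ring
  refine ⟨100 / δ * A₀, ?_, fun t => ?_⟩
  · calc (1 : ℝ) = 1 * 1 := by norm_num
      _ ≤ _ := by
        gcongr
        rw [le_div_iff₀ hδ]; linarith
  -- Landau's lemma is applied after rescaling to the disc of centre `s₀` and radius `R = δ / 2`, which
  -- contains the line `Re s = 1` near height `t`
  set s₀ : ℂ := (1 + δ / 16 : ℝ) + t * Complex.I with hs₀
  set R : ℂ := ((δ / 2 : ℝ) : ℂ) with hR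
  have hRn : ‖R‖ = δ / 2 := by rw [hR, Complex.norm_real, Real.norm_of_nonneg (by linarith)]
  have hR0 : R ≠ 0 := by rw [← norm_pos_iff, hRn]; linarith
  have hs0re : s₀.re = 1 + δ / 16 := by simp [hs₀]
  have hs0n : ‖s₀‖ ≤ |t| + (1 + δ / 16) := by
    rw [hs₀]
    refine (norm_add_le _ _).trans ?_
    rw [Complex.norm_real, Real.norm_of_nonneg (by linarith)]
    simp
    linarith
  have hM : 0 < A₀ * ell t := by have := one_le_ell t; positivity
  have hre : ∀ z : ℂ, ‖z‖ < 2 → 1 - δ < (s₀ + R * z).re := by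
    intro z hz
    have h1 : |(R * z).re| ≤ ‖R * z‖ := Complex.abs_re_le_norm _
    rw [norm_mul, hRn] at h1
    rw [Complex.add_re, hs0re]
    have := neg_abs_le (R * z).re
    nlinarith
  have hd : DifferentiableOn ℂ (fun z => f (s₀ + R * z)) (Metric.ball 0 2) := by
    refine hf.diff.comp (by fun_prop) ?_
    intro z hz
    exact hre z (by simpa using hz)
  obtain ⟨k, ρ, hk, h1, h2, h3⟩ := landau_lemma (f := fun z => f (s₀ + R * z)) hM hd
    (by
      simp only [mul_zero, add_zero]
      rw [hs₀]
      exact norm_pos_iff.mp (hc.trans_le (hlow t)))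
    (by
      intro z hz
      have h1 : ‖R * z‖ ≤ δ / 2 := by
        rw [norm_mul, hRn]; nlinarith
      have h4 : |(R * z).re| ≤ ‖R * z‖ := Complex.abs_re_le_norm _
      refine (hf.bound _ (hre z (by linarith)) ?_).trans ((hA₀ t _ ?_).trans ?_)
      · rw [Complex.add_re, hs0re]
        have := le_abs_self (R * z).re
        linarith
      · refine (norm_add_le _ _).trans ?_
        linarith
      · simp only [mul_zero, add_zero]
        gcongr
        exact hlow t)
  have hAA : 2 * (A₀ * ell t) ≤ 100 / δ * A₀ * ell t := by
    have : 2 ≤ 100 / δ := by rw [le_div_iff₀ hδ]; linarith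
    nlinarith
  have conv : ∀ s : ℂ, s₀ + R * ((s - s₀) / R) = s := fun s => by field_simp; ring
  have convn : ∀ s : ℂ, ‖(s - s₀) / R‖ = ‖s - s₀‖ / (δ / 2) := fun s => by rw [norm_div, hRn]
  refine ⟨k, fun i => s₀ + R * ρ i, by linarith, fun i => ⟨?_, (h1 i).2⟩, ?_, ?_⟩
  · rw [add_sub_cancel_left, norm_mul, hRn]
    have := (h1 i).1
    nlinarith
  · intro s hs hfs
    obtain ⟨i, hi⟩ := h2 ((s - s₀) / R) (by rw [convn, div_le_iff₀ (by linarith)]; linarith)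
      (by simp only [conv]; exact hfs)
    exact ⟨i, by simp only [hi, conv]⟩
  · intro s hs hfs
    have hz4 : ‖(s - s₀) / R‖ ≤ 1 / 4 := by rw [convn, div_le_iff₀ (by linarith)]; linarith
    have h5 := h3 ((s - s₀) / R) hz4 (by simp only [conv]; exact hfs)
    have hfd : DifferentiableAt ℂ f s := by
      have := hre ((s - s₀) / R) (by linarith)
      rw [conv] at this
      exact hf.diff.differentiableAt
        ((isOpen_lt continuous_const Complex.continuous_re).mem_nhds this)
    have h6 : logDeriv (fun z => f (s₀ + R * z)) ((s - s₀) / R) = R * logDeriv f s := by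
      rw [logDeriv_apply, logDeriv_apply]
      have e1 : HasDerivAt (fun z : ℂ => s₀ + R * z) (R * 1) ((s - s₀) / R) :=
        ((hasDerivAt_id _).const_mul R).const_add s₀
      have e2 : HasDerivAt f (deriv f s) (s₀ + R * ((s - s₀) / R)) := by
        rw [conv]; exact hfd.hasDerivAt
      have e3 := (HasDerivAt.comp (h := fun z : ℂ => s₀ + R * z) _ e2 e1).deriv
      simp only [Function.comp_def] at e3
      rw [e3, conv]
      ring
    have h7 : logDeriv f s - ∑ i, 1 / (s - (s₀ + R * ρ i)) =
        R⁻¹ * (logDeriv (fun z => f (s₀ + R * z)) ((s - s₀) / R) -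
          ∑ i, 1 / ((s - s₀) / R - ρ i)) := by
      rw [h6, mul_sub, inv_mul_cancel_left₀ hR0, Finset.mul_sum]
      congr 1
      refine Finset.sum_congr rfl fun i _ => ?_
      have : s - (s₀ + R * ρ i) = R * ((s - s₀) / R - ρ i) := by field_simp; ring
      rw [this, one_div, one_div, mul_inv]
    rw [h7, norm_mul, norm_inv, hRn]
    calc (δ / 2)⁻¹ * _ ≤ (δ / 2)⁻¹ * (50 * (A₀ * ell t)) := by gcongr
      _ = _ := by field_simp; ring

/-- The inequality `3 + 4 cos θ + cos 2θ ≥ 0`, transported to the Dirichlet series. -/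
lemma ZetaLike.three_four_one {f : ℂ → ℂ} {Λ : ℕ → ℝ} {δ C : ℝ} (hf : ZetaLike f Λ δ C)
    {σ : ℝ} (hσ : 1 < σ) (t : ℝ) :
    0 ≤ 3 * (LSeries (fun n => (Λ n : ℂ)) σ).re +
      4 * (LSeries (fun n => (Λ n : ℂ)) (σ + t * Complex.I)).re +
      (LSeries (fun n => (Λ n : ℂ)) (σ + (2 * t : ℝ) * Complex.I)).re := by
  have s1 := hf.summable (σ : ℂ) (by simpa using hσ)
  have s2 := hf.summable (σ + t * Complex.I) (by simpa using hσ)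
  have s3 := hf.summable (σ + (2 * t : ℝ) * Complex.I) (by simpa using hσ)
  unfold LSeries
  rw [Complex.re_tsum s1, Complex.re_tsum s2, Complex.re_tsum s3, ← tsum_mul_left, ← tsum_mul_left,
    ← Summable.tsum_add, ← Summable.tsum_add]
  rotate_left
  · exact ((Complex.hasSum_re s1.hasSum).summable.mul_left 3).add
      ((Complex.hasSum_re s2.hasSum).summable.mul_left 4)
  · exact (Complex.hasSum_re s3.hasSum).summable
  · exact ((Complex.hasSum_re s1.hasSum).summable.mul_left 3)
  · exact ((Complex.hasSum_re s2.hasSum).summable.mul_left 4)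
  refine tsum_nonneg fun n => ?_
  rcases eq_or_ne n 0 with rfl | hn
  · simp
  have hn' : (0 : ℝ) < n := by positivity
  have key : ∀ u : ℝ, (LSeries.term (fun n => (Λ n : ℂ)) (σ + u * Complex.I) n).re =
      Λ n * (n : ℝ) ^ (-σ) * Real.cos (u * Real.log n) := by
    intro u
    rw [LSeries.term_of_ne_zero hn, div_eq_mul_inv, ← Complex.cpow_neg, Complex.re_ofReal_mul,
      Complex.cpow_def_of_ne_zero (by exact_mod_cast hn), mul_assoc]
    congr 1
    rw [Complex.natCast_log.symm, Complex.exp_re, Real.rpow_def_of_pos hn']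
    simp only [Complex.mul_re, Complex.mul_im, Complex.neg_re, Complex.neg_im, Complex.add_re,
      Complex.add_im, Complex.ofReal_re, Complex.ofReal_im, Complex.I_re, Complex.I_im]
    simp only [mul_zero, zero_mul, sub_zero, add_zero, mul_one, zero_add]
    rw [show Real.log n * -u = -(u * Real.log n) by ring, Real.cos_neg]
  have k1 := key 0
  simp only [Complex.ofReal_zero, zero_mul, add_zero, Real.cos_zero, mul_one] at k1
  rw [k1, key t, key (2 * t), mul_assoc 2 t, Real.cos_two_mul]
  have : 0 ≤ Λ n * (n : ℝ) ^ (-σ) := mul_nonneg (hf.nonneg n) (by positivity)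
  -- `3 + 4 cos θ + cos 2θ = 2 (1 + cos θ) ^ 2`
  nlinarith [mul_nonneg this (sq_nonneg (Real.cos (t * Real.log n) + 1))]


/-- Every zero `ρ` has `Re ρ ≤ 1`, so to the right of `Re s = 1` the real parts of all terms
`1 / (s - ρ)` are nonnegative and may be dropped, with the exception of any chosen one. -/
lemma ZetaLike.re_logDeriv_ge {f : ℂ → ℂ} {Λ : ℕ → ℝ} {δ C : ℝ} (hf : ZetaLike f Λ δ C) :
    ∃ A : ℝ, 1 ≤ A ∧
      (∀ σ t : ℝ, 1 < σ → σ ≤ 1 + δ / 8 →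
        -(A * ell t) ≤ (logDeriv f (σ + t * Complex.I)).re) ∧
      ∀ σ t β : ℝ, 1 < σ → σ ≤ 1 + δ / 8 → 1 - δ / 8 ≤ β → f (β + t * Complex.I) = 0 →
        1 / (σ - β) - A * ell t ≤ (logDeriv f (σ + t * Complex.I)).re := by
  obtain ⟨A, hA, hloc⟩ := hf.near_height
  have hδ := hf.δ_pos
  have hzero : ∀ s : ℂ, f s = 0 → s.re ≤ 1 := fun s hs => by
    by_contra! h
    exact hf.ne_zero s h hs
  have hpos : ∀ s ρ : ℂ, 1 < s.re → ρ.re ≤ 1 → 0 ≤ (1 / (s - ρ)).re := by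
    intro s ρ hs hρ
    rw [one_div, Complex.inv_re]
    apply div_nonneg _ (Complex.normSq_nonneg _)
    simp only [Complex.sub_re]; linarith
  have hsub : ∀ a b t : ℝ, (a + t * Complex.I : ℂ) - ((b : ℝ) + t * Complex.I) = ((a - b : ℝ) : ℂ) := by
    intro a b t; push_cast; ring
  refine ⟨A, hA, ?_, ?_⟩
  · intro σ t h1 h2
    obtain ⟨k, ρ, hk, r1, r2, r3⟩ := hloc t
    have := r3 (σ + t * Complex.I) (by
      rw [hsub, Complex.norm_real, Real.norm_eq_abs, abs_le]
      constructor <;> linarith) (hf.ne_zero _ (by simpa using h1))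
    have h4 := (Complex.abs_re_le_norm _).trans this
    rw [Complex.sub_re, Complex.re_sum, abs_le] at h4
    have : 0 ≤ ∑ i, (1 / ((σ + t * Complex.I : ℂ) - ρ i)).re :=
      Finset.sum_nonneg fun i _ => hpos _ _ (by simpa using h1) (hzero _ (r1 i).2)
    linarith
  · intro σ t β h1 h2 hβ hz
    obtain ⟨k, ρ, hk, r1, r2, r3⟩ := hloc t
    have := r3 (σ + t * Complex.I) (by
      rw [hsub, Complex.norm_real, Real.norm_eq_abs, abs_le]
      constructor <;> linarith) (hf.ne_zero _ (by simpa using h1))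
    have h4 := (Complex.abs_re_le_norm _).trans this
    rw [Complex.sub_re, Complex.re_sum, abs_le] at h4
    have hβ1 : β ≤ 1 := by simpa using hzero _ hz
    obtain ⟨i, hi⟩ := r2 (β + t * Complex.I) (by
      rw [hsub, Complex.norm_real, Real.norm_eq_abs, abs_le]
      constructor <;> linarith) hz
    have := Finset.single_le_sum (f := fun i => (1 / ((σ + t * Complex.I : ℂ) - ρ i)).re)
      (fun i _ => hpos _ _ (by simpa using h1) (hzero _ (r1 i).2)) (Finset.mem_univ i)
    have e : (1 / ((σ + t * Complex.I : ℂ) - ρ i)).re = 1 / (σ - β) := by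
      rw [hi, hsub, one_div, one_div, ← Complex.ofReal_inv, Complex.ofReal_re]
    rw [e] at this
    linarith

set_option maxHeartbeats 800000 in
/-- The classical zero-free region. -/
lemma ZetaLike.zero_free {f : ℂ → ℂ} {Λ : ℕ → ℝ} {δ C : ℝ} (hf : ZetaLike f Λ δ C) :
    ∃ c : ℝ, 0 < c ∧ ∀ s : ℂ, 1 - c / ell s.im < s.re → f s ≠ 0 := by
  obtain ⟨A, hA, hlow, hlowz⟩ := hf.re_logDeriv_ge
  have hδ := hf.δ_pos
  have hδ1 := hf.δ_le
  -- zeros close to `1` are excluded because `f 1 ≠ 0`; the others have `|Im s| ≥ t₁`, so that the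
  -- pole at `1` contributes a bounded amount at heights `γ` and `2γ`
  obtain ⟨r, hr, hr1⟩ : ∃ r > 0, ∀ s : ℂ, ‖s - 1‖ < r → f s ≠ 0 := by
    have hc : ContinuousAt f 1 := (hf.diff.differentiableAt
        ((isOpen_lt continuous_const Complex.continuous_re).mem_nhds
          (by simp [hδ]))).continuousAt
    obtain ⟨r, hr, h⟩ := Metric.eventually_nhds_iff.mp (hc.eventually_ne hf.one_ne)
    exact ⟨r, hr, fun s hs => h (by rwa [dist_eq_norm])⟩
  set t₁ := r / 2 with ht₁
  have ht₁0 : 0 < t₁ := by positivity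
  set B : ℝ := 9 * A + 5 / t₁ ^ 2 with hB
  have hB9 : 9 ≤ B := by
    have : 0 ≤ 5 / t₁ ^ 2 := by positivity
    linarith
  set a : ℝ := δ / (16 * B) with ha
  have ha0 : 0 < a := by positivity
  have haB : a * B = δ / 16 := by rw [ha]; field_simp
  have ha1 : a ≤ δ / 16 := by
    rw [← haB]; nlinarith
  refine ⟨min (a / 7) (r / 2), by positivity, ?_⟩
  intro s hs hz
  have hℓ := one_le_ell s.im
  set ℓ := ell s.im with hℓd
  have hℓ0 : 0 < ℓ := by linarith
  have hs1 : s.re ≤ 1 := by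
    by_contra! h
    exact hf.ne_zero s h hz
  have hc1 : 1 - s.re < a / 7 / ℓ := by
    have : min (a / 7) (r / 2) / ℓ ≤ a / 7 / ℓ := by gcongr; exact min_le_left _ _
    linarith
  have hc2 : 1 - s.re < r / 2 := by
    have : min (a / 7) (r / 2) / ℓ ≤ r / 2 := by
      apply (div_le_self (by positivity) hℓ).trans (min_le_right _ _)
    linarith
  rcases lt_or_ge |s.im| t₁ with him | him
  · refine hr1 s ?_ hz
    refine (Complex.norm_le_abs_re_add_abs_im _).trans_lt ?_
    simp only [Complex.sub_re, Complex.one_re, Complex.sub_im, Complex.one_im, sub_zero]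
    rw [abs_sub_comm, abs_of_nonneg (by linarith)]
    linarith
  -- the inequality `3 + 4 cos θ + cos 2θ ≥ 0` is used on the line `Re s = 1 + η`
  set η := a / ℓ with hη
  have hη0 : 0 < η := by positivity
  have hηa : η ≤ a := div_le_self ha0.le hℓ
  have hηδ : η ≤ δ / 16 := by linarith
  set γ := s.im with hγ
  set β := s.re with hβ
  have hzβ : f (β + γ * Complex.I) = 0 := by rw [hβ, hγ, Complex.re_add_im]; exact hz
  have hβδ : 1 - δ / 8 ≤ β := by
    have : a / 7 / ℓ ≤ a / 7 := div_le_self (by positivity) hℓ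
    linarith
  have e1 := hf.three_four_one (σ := 1 + η) (by linarith) γ
  have p1 : ∀ t : ℝ, (LSeries (fun n => (Λ n : ℂ)) ((1 + η : ℝ) + t * Complex.I)).re =
      η / (η ^ 2 + t ^ 2) - (logDeriv f ((1 + η : ℝ) + t * Complex.I)).re := by
    intro t
    rw [hf.eq _ (by simp [hη0]), Complex.sub_re, one_div, Complex.inv_re, Complex.normSq_apply]
    simp
    ring
  have p0 := p1 0
  simp only [Complex.ofReal_zero, zero_mul, add_zero] at p0
  rw [p0, p1, p1] at e1
  have q0 := hlow (1 + η) 0 (by linarith) (by linarith)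
  have q2 := hlow (1 + η) (2 * γ) (by linarith) (by linarith)
  have q1 := hlowz (1 + η) γ β (by linarith) (by linarith) hβδ hzβ
  simp only [Complex.ofReal_zero, zero_mul, add_zero] at q0
  have l0 : ell 0 ≤ ℓ := ell_mono (by simp)
  have l2 : ell (2 * γ) ≤ 2 * ℓ := by
    rw [hℓd]
    exact ell_add (by rw [abs_mul, abs_two]; linarith)
  have γ2 : t₁ ^ 2 ≤ γ ^ 2 := by rw [← sq_abs γ]; gcongr
  have u0 : η / (η ^ 2 + 0 ^ 2) = 1 / η := by field_simp; ring
  have u1 : η / (η ^ 2 + γ ^ 2) ≤ 1 / t₁ ^ 2 := by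
    apply div_le_div₀ (by norm_num) (by linarith) (by positivity)
    nlinarith
  have u2 : η / (η ^ 2 + (2 * γ) ^ 2) ≤ 1 / t₁ ^ 2 := by
    apply div_le_div₀ (by norm_num) (by linarith) (by positivity)
    nlinarith
  rw [u0] at e1
  have main : 4 / (1 + η - β) ≤ 3 / η + B * ℓ := by
    have A1 : A * ell 0 ≤ A * ℓ := by gcongr
    have A2 : A * ell (2 * γ) ≤ A * (2 * ℓ) := by gcongr
    have A3 : 5 / t₁ ^ 2 ≤ 5 / t₁ ^ 2 * ℓ := le_mul_of_one_le_right (by positivity) hℓ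
    have A4 : 4 / (1 + η - β) = 4 * (1 / (1 + η - β)) := by ring
    have A5 : 3 / η = 3 * (1 / η) := by ring
    have A6 : (5 : ℝ) / t₁ ^ 2 = 5 * (1 / t₁ ^ 2) := by ring
    have A7 : 0 ≤ A * ℓ := by positivity
    rw [← hℓd] at q1
    rw [A4, A5, hB, add_mul]
    rw [A6] at A3 ⊢
    clear_value B a η ℓ β γ t₁
    linarith
  have h1 : 3 / η + B * ℓ ≤ (3 + 1 / 16) / η := by
    have : B * ℓ = (a * B) / η := by rw [hη]; field_simp
    rw [this, haB, ← add_div]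
    gcongr
  have h2 := main.trans h1
  rw [div_le_div_iff₀ (by linarith) hη0] at h2
  have h3 : a / 7 / ℓ = η / 7 := by rw [hη]; ring
  rw [h3] at hc1
  linarith

/-- The region in which `f'/f` is controlled. -/
lemma ZetaLike.logDeriv_bound {f : ℂ → ℂ} {Λ : ℕ → ℝ} {δ C : ℝ} (hf : ZetaLike f Λ δ C) :
    ∃ c B : ℝ, 0 < c ∧ c < δ ∧ 0 < B ∧
      ∀ s : ℂ, 1 - c / ell s.im ≤ s.re → s.re ≤ 1 + c →
        f s ≠ 0 ∧ ‖logDeriv f s‖ ≤ B * ell s.im ^ 2 := by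
  obtain ⟨c, hc, hzf⟩ := hf.zero_free
  obtain ⟨A, hA, hloc⟩ := hf.near_height
  have hδ := hf.δ_pos
  have hδ1 := hf.δ_le
  have hmin : 0 < min (c / 4) (δ / 16) := by positivity
  refine ⟨min (c / 4) (δ / 16), A + A * (4 / c), hmin,
    (min_le_right _ _).trans_lt (by linarith), by positivity, ?_⟩
  intro s h1 h2
  have hℓ := one_le_ell s.im
  set ℓ := ell s.im with hℓd
  have hℓ0 : 0 < ℓ := by linarith
  have m1 : min (c / 4) (δ / 16) / ℓ ≤ c / 4 / ℓ := by gcongr; exact min_le_left _ _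
  have m2 : min (c / 4) (δ / 16) / ℓ ≤ δ / 16 :=
    (div_le_self hmin.le hℓ).trans (min_le_right _ _)
  have m3 := min_le_right (c / 4) (δ / 16)
  have hne : f s ≠ 0 := by
    apply hzf
    have : c / 4 / ℓ < c / ℓ := by gcongr; linarith
    linarith
  refine ⟨hne, ?_⟩
  obtain ⟨k, ρ, hk, r1, r2, r3⟩ := hloc s.im
  have h3 : ‖s - ((1 + δ / 16 : ℝ) + s.im * Complex.I)‖ ≤ δ / 8 := by
    have : s - ((1 + δ / 16 : ℝ) + s.im * Complex.I) = ((s.re - (1 + δ / 16) : ℝ) : ℂ) := by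
      apply Complex.ext <;> simp
    rw [this, Complex.norm_real, Real.norm_eq_abs, abs_le]
    constructor <;> linarith
  have h4 := r3 s h3 hne
  -- the region for `s` is four times narrower than the zero-free region, and the height of a nearby
  -- zero at most doubles the logarithm, so `s` keeps a distance `c / (4ℓ)` from all zeros
  have h5 : ∀ i, ‖1 / (s - ρ i)‖ ≤ 4 / c * ℓ := by
    intro i
    have hi := (r1 i).1
    have im := (Complex.abs_im_le_norm _).trans hi
    simp only [Complex.sub_im, Complex.add_im, Complex.ofReal_im, Complex.mul_im,
      Complex.ofReal_re, Complex.I_im, Complex.I_re, mul_one, mul_zero, add_zero, zero_add] at im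
    have hℓi : ell (ρ i).im ≤ 2 * ℓ := by
      apply ell_add
      have := abs_sub_abs_le_abs_sub (ρ i).im s.im
      have := abs_nonneg s.im
      linarith
    have hre : (ρ i).re ≤ 1 - c / (2 * ℓ) := by
      by_contra! h
      refine hzf _ ?_ (r1 i).2
      have : c / (2 * ℓ) ≤ c / ell (ρ i).im := by
        gcongr
        linarith [one_le_ell (ρ i).im]
      linarith
    have hd : c / (4 * ℓ) ≤ ‖s - ρ i‖ := by
      refine le_trans ?_ (Complex.re_le_norm _)
      rw [Complex.sub_re]
      have e1 : c / 4 / ℓ = c / (4 * ℓ) := by rw [div_div]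
      have e2 : c / (2 * ℓ) = 2 * (c / (4 * ℓ)) := by field_simp; norm_num
      linarith
    rw [norm_div, norm_one]
    calc 1 / ‖s - ρ i‖ ≤ 1 / (c / (4 * ℓ)) := by gcongr
      _ = _ := by field_simp
  have h6 : ‖∑ i, 1 / (s - ρ i)‖ ≤ k * (4 / c * ℓ) := by
    refine (norm_sum_le _ _).trans ((Finset.sum_le_sum fun i _ => h5 i).trans ?_)
    simp
  calc ‖logDeriv f s‖ = ‖(logDeriv f s - ∑ i, 1 / (s - ρ i)) + ∑ i, 1 / (s - ρ i)‖ := by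
        rw [sub_add_cancel]
    _ ≤ A * ℓ + k * (4 / c * ℓ) := (norm_add_le _ _).trans (add_le_add h4 h6)
    _ ≤ A * ℓ ^ 2 + (A * ℓ) * (4 / c * ℓ) := by
        gcongr
        nlinarith
    _ = _ := by ring

/-! ### A smoothed Perron formula -/

lemma HasMellin.congr_Ioi {f g : ℝ → ℂ} {s m m' : ℂ} (h : HasMellin f s m)
    (hfg : ∀ v, 0 < v → f v = g v) (hm : m = m') : HasMellin g s m' := by
  obtain ⟨h1, h2⟩ := h
  have e : Set.EqOn (fun t : ℝ => (t : ℂ) ^ (s - 1) • f t) (fun t : ℝ => (t : ℂ) ^ (s - 1) • g t)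
      (Set.Ioi 0) := fun v hv => by simp only [hfg v hv]
  refine ⟨(MeasureTheory.integrableOn_congr_fun e measurableSet_Ioi).mp h1, ?_⟩
  rw [← hm, ← h2]
  exact (MeasureTheory.setIntegral_congr_fun measurableSet_Ioi e).symm

/-- Mellin transform of the Cesàro weight. -/
lemma hasMellin_weight_one {s : ℂ} (hs : 0 < s.re) :
    HasMellin (fun v : ℝ => ((max 0 (1 - v) : ℝ) : ℂ)) s (1 / (s * (s + 1))) := by
  have h1 := hasMellin_one_Ioc hs
  have h2 := hasMellin_cpow_Ioc 1 (s := s) (by simp; linarith)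
  have h3 := hasMellin_sub h1.1 h2.1
  rw [h1.2, h2.2] at h3
  have hs0 : s ≠ 0 := by rintro rfl; simp at hs
  have hs1 : s + 1 ≠ 0 := by
    intro h; have := congrArg Complex.re h; simp at this; linarith
  refine h3.congr_Ioi (fun v hv => ?_) (by field_simp; ring)
  by_cases hv1 : v ≤ 1
  · simp only [Set.indicator_of_mem (show v ∈ Set.Ioc 0 1 from ⟨hv, hv1⟩)]
    rw [max_eq_right (by linarith)]
    simp
  · simp only [Set.indicator_of_notMem (fun h : v ∈ Set.Ioc 0 1 => hv1 h.2)]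
    rw [max_eq_left (by linarith)]
    simp

/-- The weight whose Mellin transform carries the extra factor `1 / (s - 1)`; it yields the main
term that comes from the pole at `s = 1`. -/
lemma hasMellin_weight_two {s : ℂ} (hs : 1 < s.re) :
    HasMellin (fun v : ℝ => ((max 0 (1 - v) ^ 2 / (2 * v) : ℝ) : ℂ)) s
      (1 / ((s - 1) * (s * (s + 1)))) := by
  have h0 := hasMellin_cpow_Ioc (-1) (s := s) (by simp; linarith)
  have h1 := hasMellin_one_Ioc (s := s) (by linarith)
  have h2 := hasMellin_cpow_Ioc 1 (s := s) (by simp; linarith)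
  have h3 := hasMellin_sub (hasMellin_add h0.1 h2.1).1 (hasMellin_const_smul h1.1 (2 : ℂ)).1
  rw [(hasMellin_add h0.1 h2.1).2, (hasMellin_const_smul h1.1 (2 : ℂ)).2, h0.2, h1.2, h2.2] at h3
  have h4 := hasMellin_const_smul h3.1 (1 / 2 : ℂ)
  rw [h3.2] at h4
  have hs0 : s ≠ 0 := by rintro rfl; simp at hs; linarith
  have hs1 : s + 1 ≠ 0 := by
    intro h; have := congrArg Complex.re h; simp at this; linarith
  have hs2 : s - 1 ≠ 0 := by
    intro h; have := congrArg Complex.re h; simp at this; linarith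
  have hs2' : s + -1 ≠ 0 := by rwa [← sub_eq_add_neg]
  refine h4.congr_Ioi (fun v hv => ?_) ?_
  · have hv' : (v : ℂ) ≠ 0 := by exact_mod_cast hv.ne'
    by_cases hv1 : v ≤ 1
    · simp only [Set.indicator_of_mem (show v ∈ Set.Ioc 0 1 from ⟨hv, hv1⟩)]
      rw [max_eq_right (by linarith), Complex.cpow_neg_one, Complex.cpow_one]
      push_cast
      simp only [smul_eq_mul]
      field_simp
      ring
    · simp only [Set.indicator_of_notMem (fun h : v ∈ Set.Ioc 0 1 => hv1 h.2)]
      rw [max_eq_left (by linarith)]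
      simp
  · simp only [smul_eq_mul]
    rw [show s + -1 = s - 1 by ring]
    field_simp
    ring

/-- The vertical line `Re s = σ`. -/
noncomputable def vline (σ y : ℝ) : ℂ := σ + y * Complex.I

@[simp] lemma vline_re (σ y : ℝ) : (vline σ y).re = σ := by simp [vline]
@[simp] lemma vline_im (σ y : ℝ) : (vline σ y).im = y := by simp [vline]
lemma continuous_vline (σ : ℝ) : Continuous (vline σ) := by unfold vline; fun_prop

lemma le_norm_of_re {s : ℂ} (hs : 1 / 2 ≤ s.re) : (1 + |s.im|) / 3 ≤ ‖s‖ := by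
  have h1 := (le_abs_self _).trans (Complex.abs_re_le_norm s)
  have h2 := Complex.abs_im_le_norm s
  linarith

lemma norm_kernel_le {s : ℂ} (hs : 1 / 2 ≤ s.re) :
    ‖1 / (s * (s + 1))‖ ≤ 9 * (1 + |s.im|) ^ (-2 : ℝ) := by
  have h1 := le_norm_of_re hs
  have h2 := le_norm_of_re (s := s + 1) (by simp; linarith)
  simp only [Complex.add_im, Complex.one_im, add_zero] at h2
  have h3 : 0 < 1 + |s.im| := by positivity
  rw [norm_div, norm_one, norm_mul, Real.rpow_neg h3.le, div_le_iff₀ (by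
    apply mul_pos <;> linarith)]
  norm_num
  calc (1 : ℝ) = 9 * ((1 + |s.im|) ^ 2)⁻¹ * ((1 + |s.im|) / 3 * ((1 + |s.im|) / 3)) := by
        field_simp; norm_num
    _ ≤ _ := by gcongr

lemma integrable_bracket {r : ℝ} (hr : 1 < r) :
    MeasureTheory.Integrable fun y : ℝ => (1 + |y|) ^ (-r) := by
  have := integrable_one_add_norm (E := ℝ) (μ := MeasureTheory.volume) (r := r) (by simpa using hr)
  simpa using this

lemma integrable_vline {F : ℂ → ℂ} {σ K r : ℝ} (hr : 1 < r)
    (hc : ∀ y, ContinuousAt F (vline σ y))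
    (hb : ∀ y : ℝ, ‖F (vline σ y)‖ ≤ K * (1 + |y|) ^ (-r)) :
    MeasureTheory.Integrable fun y : ℝ => F (vline σ y) := by
  refine ((integrable_bracket hr).const_mul K).mono' ?_ (Eventually.of_forall hb)
  refine Continuous.aestronglyMeasurable ?_
  rw [continuous_iff_continuousAt]
  intro y
  exact (hc y).comp_of_eq (continuous_vline σ).continuousAt rfl

lemma ne_zero_of_re {s : ℂ} (hs : 0 < s.re) : s ≠ 0 := by rintro rfl; simp at hs

/-- Mellin inversion of the Cesàro weight along the line `Re s = σ`. -/
lemma perron_weight_one {σ v : ℝ} (hσ : 1 < σ) (hv : 0 < v) :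
    ∫ y : ℝ, (v : ℂ) ^ (-vline σ y) * (1 / (vline σ y * (vline σ y + 1))) =
      2 * Real.pi * ((max 0 (1 - v) : ℝ) : ℂ) := by
  set W : ℝ → ℂ := fun v => ((max 0 (1 - v) : ℝ) : ℂ) with hW
  have hm : ∀ y : ℝ, mellin W (σ + y * Complex.I) = 1 / (vline σ y * (vline σ y + 1)) := fun y =>
    (hasMellin_weight_one (s := vline σ y) (by simp; linarith)).2
  have h := mellinInv_mellin_eq σ W hv
    (hasMellin_weight_one (s := σ) (by simp; linarith)).1 (by
      unfold Complex.VerticalIntegrable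
      simp only [hm]
      refine integrable_vline (F := fun s => 1 / (s * (s + 1))) (K := 9) (r := 2) (by norm_num)
        (fun y => ?_) (fun y => by
          simpa using norm_kernel_le (s := vline σ y) (by simp; linarith))
      have h1 : vline σ y ≠ 0 := ne_zero_of_re (by simp; linarith)
      have h2 : vline σ y + 1 ≠ 0 := ne_zero_of_re (by simp; linarith)
      exact ContinuousAt.div (by fun_prop) (by fun_prop) (mul_ne_zero h1 h2))
    (by rw [hW]; fun_prop)
  unfold mellinInv at h
  simp only [hm, smul_eq_mul] at h
  have e : ∀ I w : ℂ, (1 / (2 * Real.pi) : ℝ) • I = w → I = 2 * Real.pi * w := by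
    rintro I _ rfl
    have : (Real.pi : ℂ) ≠ 0 := by exact_mod_cast Real.pi_ne_zero
    rw [Complex.real_smul]
    push_cast
    field_simp
  exact e _ _ h

lemma integrable_weight_two {σ : ℝ} (hσ : 1 < σ) : MeasureTheory.Integrable fun y : ℝ =>
    1 / ((vline σ y - 1) * (vline σ y * (vline σ y + 1))) := by
  refine integrable_vline (F := fun s => 1 / ((s - 1) * (s * (s + 1))))
    (K := (1 / (σ - 1)) * 9) (r := 2) (by norm_num) (fun y => ?_) (fun y => ?_)
  · have h1 : vline σ y ≠ 0 := ne_zero_of_re (by simp; linarith)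
    have h2 : vline σ y + 1 ≠ 0 := ne_zero_of_re (by simp; linarith)
    have h3 : vline σ y - 1 ≠ 0 := ne_zero_of_re (by simp; linarith)
    exact ContinuousAt.div (by fun_prop) (by fun_prop) (mul_ne_zero h3 (mul_ne_zero h1 h2))
  · rw [← one_div_mul_one_div, norm_mul, mul_assoc]
    gcongr
    · rw [norm_div, norm_one]
      have := Complex.re_le_norm (vline σ y - 1)
      simp only [Complex.sub_re, vline_re, Complex.one_re] at this
      exact one_div_le_one_div_of_le (by linarith) this
    · simpa using norm_kernel_le (s := vline σ y) (by simp; linarith)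

/-- Mellin inversion along the line `Re s = σ` of the weight belonging to the pole at `s = 1`. -/
lemma perron_weight_two {σ v : ℝ} (hσ : 1 < σ) (hv : 0 < v) :
    ∫ y : ℝ, (v : ℂ) ^ (-vline σ y) * (1 / ((vline σ y - 1) * (vline σ y * (vline σ y + 1)))) =
      2 * Real.pi * ((max 0 (1 - v) ^ 2 / (2 * v) : ℝ) : ℂ) := by
  set W : ℝ → ℂ := fun v => ((max 0 (1 - v) ^ 2 / (2 * v) : ℝ) : ℂ) with hW
  have hm : ∀ y : ℝ, mellin W (σ + y * Complex.I) =
      1 / ((vline σ y - 1) * (vline σ y * (vline σ y + 1))) := fun y =>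
    (hasMellin_weight_two (s := vline σ y) (by simp; linarith)).2
  have h := mellinInv_mellin_eq σ W hv
    (hasMellin_weight_two (s := σ) (by simp; linarith)).1 (by
      unfold Complex.VerticalIntegrable
      simp only [hm]
      exact integrable_weight_two hσ)
    (by
      rw [hW]
      refine Complex.continuous_ofReal.continuousAt.comp ?_
      exact ContinuousAt.div (by fun_prop) (by fun_prop) (by positivity))
  unfold mellinInv at h
  simp only [hm, smul_eq_mul] at h
  have e : ∀ I w : ℂ, (1 / (2 * Real.pi) : ℝ) • I = w → I = 2 * Real.pi * w := by
    rintro I _ rfl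
    have : (Real.pi : ℂ) ≠ 0 := by exact_mod_cast Real.pi_ne_zero
    rw [Complex.real_smul]
    push_cast
    field_simp
  exact e _ _ h

lemma norm_cpow_neg_vline {v : ℝ} (hv : 0 < v) (σ y : ℝ) :
    ‖(v : ℂ) ^ (-vline σ y)‖ = v ^ (-σ) := by
  rw [Complex.norm_cpow_eq_rpow_re_of_pos hv]; simp

/-- Smoothed Perron formula: the integral of the Dirichlet series against the Cesàro kernel. -/
lemma ZetaLike.perron {f : ℂ → ℂ} {Λ : ℕ → ℝ} {δ C : ℝ} (hf : ZetaLike f Λ δ C)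
    {σ x : ℝ} (hσ : 1 < σ) (hx : 0 < x) :
    ∫ y : ℝ, (x : ℂ) ^ vline σ y * LSeries (fun n => (Λ n : ℂ)) (vline σ y) *
        (1 / (vline σ y * (vline σ y + 1))) =
      2 * Real.pi * ((∑ n ∈ Finset.Icc 1 ⌊x⌋₊, Λ n * (1 - n / x) : ℝ) : ℂ) := by
  set F : ℕ → ℝ → ℂ := fun n y => (x : ℂ) ^ vline σ y *
    LSeries.term (fun n => (Λ n : ℂ)) (vline σ y) n * (1 / (vline σ y * (vline σ y + 1))) with hF
  have hx' : (x : ℂ) ≠ 0 := by exact_mod_cast hx.ne'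
  have F0 : F 0 = 0 := by ext y; simp [hF]
  have Fn : ∀ n : ℕ, n ≠ 0 → F n = fun y => (Λ n : ℂ) * (((n / x : ℝ) : ℂ) ^ (-vline σ y) *
      (1 / (vline σ y * (vline σ y + 1)))) := by
    intro n hn
    ext y
    have hn' : (0 : ℝ) < n := by positivity
    simp only [hF, LSeries.term_of_ne_zero hn]
    have : ((n / x : ℝ) : ℂ) ^ (-vline σ y) = (x : ℂ) ^ vline σ y * ((n : ℂ) ^ vline σ y)⁻¹ := by
      rw [div_eq_mul_inv, Complex.ofReal_mul,
        Complex.mul_cpow_ofReal_nonneg hn'.le (by positivity), Complex.ofReal_inv,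
        Complex.inv_cpow _ _ (by
          rw [Complex.arg_ofReal_of_nonneg hx.le]; exact Real.pi_pos.ne),
        Complex.cpow_neg, Complex.cpow_neg, inv_inv]
      push_cast
      ring
    rw [this]
    ring
  have hint : ∀ n : ℕ, n ≠ 0 → ∫ y, F n y =
      (2 * Real.pi * (Λ n * max 0 (1 - n / x) : ℝ) : ℂ) := by
    intro n hn
    rw [Fn n hn, MeasureTheory.integral_const_mul, perron_weight_one hσ (by positivity)]
    push_cast; ring
  have kint : MeasureTheory.Integrable fun y : ℝ => ‖1 / (vline σ y * (vline σ y + 1))‖ := by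
    refine MeasureTheory.Integrable.norm ?_
    refine integrable_vline (F := fun s => 1 / (s * (s + 1))) (K := 9) (r := 2) (by norm_num)
        (fun y => ?_) (fun y => by
          simpa using norm_kernel_le (s := vline σ y) (by simp; linarith))
    have h1 : vline σ y ≠ 0 := ne_zero_of_re (by simp; linarith)
    have h2 : vline σ y + 1 ≠ 0 := ne_zero_of_re (by simp; linarith)
    exact ContinuousAt.div (by fun_prop) (by fun_prop) (mul_ne_zero h1 h2)
  have hnorm : ∀ n y, ‖F n y‖ = ‖LSeries.term (fun n => (Λ n : ℂ)) σ n‖ *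
      (x ^ σ * ‖1 / (vline σ y * (vline σ y + 1))‖) := by
    intro n y
    simp only [hF, norm_mul]
    rw [Complex.norm_cpow_eq_rpow_re_of_pos hx, vline_re, LSeries.norm_term_eq,
      LSeries.norm_term_eq, vline_re, Complex.ofReal_re]
    ring
  -- sum and integral are interchanged: the series converges absolutely on the line
  have hsum := MeasureTheory.hasSum_integral_of_summable_integral_norm (F := F)
    (μ := MeasureTheory.volume) (fun n => by
      rcases eq_or_ne n 0 with rfl | hn
      · rw [F0]; exact MeasureTheory.integrable_zero _ _ _
      refine (((kint.const_mul (x ^ σ))).const_mul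
        ‖LSeries.term (fun n => (Λ n : ℂ)) σ n‖).mono' ?_ (Eventually.of_forall fun y =>
          (hnorm n y).le)
      refine Continuous.aestronglyMeasurable ?_
      rw [Fn n hn]
      have hnx : ((n / x : ℝ) : ℂ) ≠ 0 := by
        have : (0 : ℝ) < n / x := by positivity
        exact_mod_cast this.ne'
      refine continuous_const.mul (Continuous.mul ?_ ?_)
      · exact Continuous.const_cpow (continuous_vline σ).neg (Or.inl hnx)
      · refine Continuous.div continuous_const ((continuous_vline σ).mul
          ((continuous_vline σ).add continuous_const)) fun y => ?_
        exact mul_ne_zero (ne_zero_of_re (by simp; linarith)) (ne_zero_of_re (by simp; linarith)))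
    (by
      simp only [hnorm, MeasureTheory.integral_const_mul]
      exact ((hf.summable σ (by simpa using hσ)).norm).mul_right _)
  have htsum : ∀ y, ∑' n, F n y = (x : ℂ) ^ vline σ y *
      LSeries (fun n => (Λ n : ℂ)) (vline σ y) * (1 / (vline σ y * (vline σ y + 1))) := by
    intro y
    simp only [hF]
    rw [tsum_mul_right, tsum_mul_left, LSeries]
  simp only [htsum] at hsum
  -- the weight vanishes for `n > x`
  have hfin : HasSum (fun n => ∫ y, F n y) (∑ n ∈ Finset.Icc 1 ⌊x⌋₊, ∫ y, F n y) := by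
    apply hasSum_sum_of_ne_finset_zero
    intro n hn
    rcases eq_or_ne n 0 with rfl | hn0
    · rw [F0]; simp
    rw [hint n hn0, max_eq_left]
    · simp
    · have : ⌊x⌋₊ < n := by
        by_contra! h
        exact hn (Finset.mem_Icc.mpr ⟨Nat.one_le_iff_ne_zero.mpr hn0, h⟩)
      have := (Nat.floor_lt hx.le).mp this
      rw [sub_nonpos, le_div_iff₀ hx]
      linarith
  rw [hsum.unique hfin]
  push_cast
  rw [Finset.mul_sum]
  refine Finset.sum_congr rfl fun n hn => ?_
  rw [Finset.mem_Icc] at hn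
  rw [hint n (by omega), max_eq_right]
  · push_cast; ring
  · have := (Nat.le_floor_iff hx.le).mp hn.2
    rw [sub_nonneg, div_le_one hx]
    exact this

/-! ### Shifting the contour -/

/-- The relative error term `exp(-c √(log x))`. -/
noncomputable def errFn (c x : ℝ) : ℝ := Real.exp (-c * Real.sqrt (Real.log x))

lemma ell_sq_le (t : ℝ) : ell t ^ 2 ≤ 32 * (1 + |t|) ^ (1 / 2 : ℝ) := by
  have h0 := abs_nonneg t
  have h1 : ell t ≤ (|t| + 3) ^ (1 / 4 : ℝ) / (1 / 4) :=
    Real.log_le_rpow_div (by positivity) (by norm_num)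
  have h2 : ell t ^ 2 ≤ ((|t| + 3) ^ (1 / 4 : ℝ) / (1 / 4)) ^ 2 := by
    have := one_le_ell t
    gcongr
  have h3 : ((|t| + 3) ^ (1 / 4 : ℝ) / (1 / 4)) ^ 2 = 16 * (|t| + 3) ^ (1 / 2 : ℝ) := by
    rw [div_pow, ← Real.rpow_natCast, ← Real.rpow_mul (by positivity)]
    norm_num
    ring
  have h4 : (|t| + 3) ^ (1 / 2 : ℝ) ≤ 2 * (1 + |t|) ^ (1 / 2 : ℝ) := by
    calc (|t| + 3) ^ (1 / 2 : ℝ) ≤ (4 * (1 + |t|)) ^ (1 / 2 : ℝ) := by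
          gcongr; linarith
      _ = _ := by
          rw [Real.mul_rpow (by norm_num) (by positivity)]
          congr 1
          rw [show (4 : ℝ) = 2 ^ (2 : ℝ) by norm_num, ← Real.rpow_mul (by norm_num)]
          norm_num
  linarith

/-- Shifting the contour into the zero-free region. -/
lemma ZetaLike.contour_bound {f : ℂ → ℂ} {Λ : ℕ → ℝ} {δ C c B : ℝ} (hf : ZetaLike f Λ δ C)
    (hc : 0 < c) (hcδ : c < δ) (hc2 : c ≤ 1 / 2) (hB : 0 < B)
    (hreg : ∀ s : ℂ, 1 - c / ell s.im ≤ s.re → s.re ≤ 1 + c →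
        f s ≠ 0 ∧ ‖logDeriv f s‖ ≤ B * ell s.im ^ 2)
    {x σ T : ℝ} (hx : 1 ≤ x) (hσ : 1 < σ) (hσc : σ ≤ 1 + c) (hT : 1 ≤ T) :
    MeasureTheory.Integrable (fun y : ℝ => (x : ℂ) ^ vline σ y * (-logDeriv f (vline σ y)) *
      (1 / (vline σ y * (vline σ y + 1)))) ∧
    ‖∫ y : ℝ, (x : ℂ) ^ vline σ y * (-logDeriv f (vline σ y)) *
      (1 / (vline σ y * (vline σ y + 1)))‖ ≤
      288 * B * (x ^ σ * T ^ (-(1 / 4) : ℝ) * ((∫ y : ℝ, (1 + |y|) ^ (-(5 / 4) : ℝ)) + 4) +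
        x ^ (1 - c / ell T) * ∫ y : ℝ, (1 + |y|) ^ (-(3 / 2) : ℝ)) := by
  have hx0 : 0 < x := by linarith
  have hx' : (x : ℂ) ≠ 0 := by exact_mod_cast hx0.ne'
  set F : ℂ → ℂ := fun s => (x : ℂ) ^ s * (-logDeriv f s) * (1 / (s * (s + 1))) with hF
  have hcl : ∀ t, c / ell t ≤ c := fun t => div_le_self hc.le (one_le_ell t)
  have hFd : ∀ s : ℂ, 1 - c / ell s.im ≤ s.re → s.re ≤ 1 + c → DifferentiableAt ℂ F s := by
    intro s h1 h2
    have h3 := hcl s.im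
    have hs1 : 1 - δ < s.re := by linarith
    have hfo : {s : ℂ | 1 - δ < s.re} ∈ nhds s :=
      (isOpen_lt continuous_const Complex.continuous_re).mem_nhds hs1
    have h4 : DifferentiableAt ℂ f s := hf.diff.differentiableAt hfo
    have h5 : DifferentiableAt ℂ (deriv f) s :=
      (hf.diff.deriv (isOpen_lt continuous_const Complex.continuous_re)).differentiableAt hfo
    have h6 : DifferentiableAt ℂ (logDeriv f) s := h5.div h4 (hreg s h1 h2).1
    have h7 : s ≠ 0 := ne_zero_of_re (by linarith)
    have h8 : s + 1 ≠ 0 := ne_zero_of_re (by simp; linarith)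
    refine DifferentiableAt.mul (DifferentiableAt.mul ?_ h6.neg) ?_
    · exact DifferentiableAt.const_cpow differentiableAt_id (Or.inl hx')
    · exact DifferentiableAt.div (by fun_prop) (by fun_prop) (mul_ne_zero h7 h8)
  have hFb : ∀ s : ℂ, 1 - c / ell s.im ≤ s.re → s.re ≤ 1 + c →
      ‖F s‖ ≤ 288 * B * x ^ s.re * (1 + |s.im|) ^ (-(3 / 2) : ℝ) := by
    intro s h1 h2
    have h3 := hcl s.im
    have hp : 0 < 1 + |s.im| := by positivity
    have h4 := norm_kernel_le (s := s) (by linarith)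
    have h5 := (hreg s h1 h2).2
    have h6 := ell_sq_le s.im
    rw [hF]
    simp only [norm_mul, norm_neg]
    rw [Complex.norm_cpow_eq_rpow_re_of_pos hx0]
    calc _ ≤ x ^ s.re * (B * (32 * (1 + |s.im|) ^ (1 / 2 : ℝ))) *
          (9 * (1 + |s.im|) ^ (-2 : ℝ)) := by
          gcongr
          exact h5.trans (by gcongr)
      _ = 288 * B * x ^ s.re * ((1 + |s.im|) ^ (1 / 2 : ℝ) * (1 + |s.im|) ^ (-2 : ℝ)) := by ring
      _ = _ := by
          rw [← Real.rpow_add hp]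
          norm_num
  have rσ : ∀ y, 1 - c / ell (vline σ y).im ≤ (vline σ y).re := by
    intro y
    rw [vline_re]
    have : 0 < c / ell (vline σ y).im := div_pos hc (by linarith [one_le_ell (vline σ y).im])
    linarith
  have rσ' : ∀ y, (vline σ y).re ≤ 1 + c := fun y => by rw [vline_re]; exact hσc
  have hbσ : ∀ y, ‖F (vline σ y)‖ ≤ 288 * B * x ^ σ * (1 + |y|) ^ (-(3 / 2) : ℝ) := by
    intro y
    simpa using hFb (vline σ y) (rσ y) (rσ' y)
  have hint : MeasureTheory.Integrable fun y : ℝ => F (vline σ y) :=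
    integrable_vline (by norm_num) (fun y => (hFd _ (rσ y) (rσ' y)).continuousAt) hbσ
  refine ⟨hint, ?_⟩
  have hsplit := MeasureTheory.integral_add_compl (s := Set.Ioc (-T) T) measurableSet_Ioc hint
  have hxσ : 0 < x ^ σ := by positivity
  -- the tail `|y| > T`
  have htail : ‖∫ y in (Set.Ioc (-T) T)ᶜ, F (vline σ y)‖ ≤
      288 * B * x ^ σ * T ^ (-(1 / 4) : ℝ) * ∫ y : ℝ, (1 + |y|) ^ (-(5 / 4) : ℝ) := by
    rw [← MeasureTheory.integral_const_mul]
    have hi : MeasureTheory.Integrable fun y : ℝ =>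
        288 * B * x ^ σ * T ^ (-(1 / 4) : ℝ) * (1 + |y|) ^ (-(5 / 4) : ℝ) :=
      (integrable_bracket (by norm_num)).const_mul _
    refine (MeasureTheory.norm_integral_le_of_norm_le hi.integrableOn ?_).trans
      (MeasureTheory.setIntegral_le_integral hi (Eventually.of_forall fun y => by positivity))
    filter_upwards [MeasureTheory.ae_restrict_mem measurableSet_Ioc.compl] with y hy
    have hyT : T ≤ 1 + |y| := by
      by_contra! h
      apply hy
      have := abs_le.mp (show |y| ≤ T by linarith)
      refine ⟨lt_of_le_of_ne this.1 fun h' => ?_, this.2⟩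
      rw [← h', abs_neg, abs_of_pos (by linarith)] at h
      linarith
    refine (hbσ y).trans ?_
    rw [mul_assoc (288 * B * x ^ σ)]
    gcongr
    have hp : 0 < 1 + |y| := by positivity
    calc (1 + |y|) ^ (-(3 / 2) : ℝ) = (1 + |y|) ^ (-(1 / 4) : ℝ) * (1 + |y|) ^ (-(5 / 4) : ℝ) := by
          rw [← Real.rpow_add hp]; norm_num
      _ ≤ _ := by
          gcongr ?_ * _
          exact Real.rpow_le_rpow_of_nonpos (by linarith) hyT (by norm_num)
  set σ₁ := 1 - c / ell T with hσ₁
  have hσ₁c : 1 - c ≤ σ₁ := by have := hcl T; linarith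
  have hσ₁1 : σ₁ < 1 := by
    have : 0 < c / ell T := div_pos hc (by linarith [one_le_ell T])
    linarith
  have hin : ∀ s : ℂ, σ₁ ≤ s.re → |s.im| ≤ T → 1 - c / ell s.im ≤ s.re := by
    intro s h1 h2
    have h3 : ell s.im ≤ ell T := ell_mono (by rwa [abs_of_pos (by linarith : 0 < T)])
    have h4 : c / ell T ≤ c / ell s.im := by
      have := one_le_ell s.im
      gcongr
    linarith
  have hTT : ∀ y ∈ Set.uIoc (-T) T, |y| ≤ T := by
    intro y hy
    rw [Set.uIoc_of_le (by linarith)] at hy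
    exact abs_le.mpr ⟨hy.1.le, hy.2⟩
  -- the integral over the boundary of the rectangle with sides `Re s = σ₁`, `Re s = σ` and
  -- `|Im s| ≤ T` vanishes, since `logDeriv f` has no pole there
  have hrect := Complex.integral_boundary_rect_eq_zero_of_differentiableOn F
    (vline σ₁ (-T)) (vline σ T) (by
      intro s hs
      rw [Complex.mem_reProdIm, vline_re, vline_re, vline_im, vline_im,
        Set.uIcc_of_le (by linarith), Set.uIcc_of_le (by linarith)] at hs
      exact (hFd s (hin s hs.1.1 (abs_le.mpr ⟨hs.2.1, hs.2.2⟩))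
        (hs.1.2.trans hσc)).differentiableWithinAt)
  simp only [vline_re, vline_im] at hrect
  have hhor : ∀ t : ℝ, |t| = T → ‖∫ u : ℝ in σ₁..σ, F (u + t * Complex.I)‖ ≤
      288 * B * x ^ σ * T ^ (-(1 / 4) : ℝ) * 2 := by
    intro t ht
    have : ∀ u ∈ Set.uIoc σ₁ σ, ‖F (u + t * Complex.I)‖ ≤
        288 * B * x ^ σ * T ^ (-(1 / 4) : ℝ) := by
      intro u hu
      rw [Set.uIoc_of_le (by linarith)] at hu
      have h1 := hFb (u + t * Complex.I) (hin _ (by simpa using hu.1.le) (by simp [ht]))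
        (by simpa using hu.2.trans hσc)
      refine h1.trans ?_
      simp only [Complex.add_re, Complex.ofReal_re, Complex.mul_re, Complex.I_re, mul_zero,
        Complex.ofReal_im, Complex.I_im, mul_one, sub_self, add_zero, Complex.add_im,
        Complex.mul_im, zero_add, ht]
      gcongr
      · exact hu.2
      · calc (1 + T) ^ (-(3 / 2) : ℝ) ≤ T ^ (-(3 / 2) : ℝ) :=
              Real.rpow_le_rpow_of_nonpos (by linarith) (by linarith) (by norm_num)
          _ ≤ _ := Real.rpow_le_rpow_of_exponent_le hT (by norm_num)
    refine (intervalIntegral.norm_integral_le_of_norm_le_const this).trans ?_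
    gcongr
    rw [abs_of_nonneg (by linarith)]
    linarith
  have hleft : ‖∫ y : ℝ in (-T)..T, F (σ₁ + y * Complex.I)‖ ≤
      288 * B * x ^ σ₁ * ∫ y : ℝ, (1 + |y|) ^ (-(3 / 2) : ℝ) := by
    rw [intervalIntegral.integral_of_le (by linarith), ← MeasureTheory.integral_const_mul]
    have hi : MeasureTheory.Integrable fun y : ℝ =>
        288 * B * x ^ σ₁ * (1 + |y|) ^ (-(3 / 2) : ℝ) :=
      (integrable_bracket (by norm_num)).const_mul _
    refine (MeasureTheory.norm_integral_le_of_norm_le hi.integrableOn ?_).trans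
      (MeasureTheory.setIntegral_le_integral hi (Eventually.of_forall fun y => by positivity))
    filter_upwards [MeasureTheory.ae_restrict_mem measurableSet_Ioc] with y hy
    have := hFb (vline σ₁ y) (hin _ (by simp) (by simpa using abs_le.mpr ⟨hy.1.le, hy.2⟩))
      (by simp; linarith)
    simp only [vline_re, vline_im] at this
    exact this
  have hmid : ‖∫ y : ℝ in (-T)..T, F (σ + y * Complex.I)‖ ≤
      288 * B * x ^ σ * T ^ (-(1 / 4) : ℝ) * 4 +
      288 * B * x ^ σ₁ * ∫ y : ℝ, (1 + |y|) ^ (-(3 / 2) : ℝ) := by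
    have h1 := hhor (-T) (by rw [abs_neg, abs_of_pos (by linarith)])
    have h2 := hhor T (by rw [abs_of_pos (by linarith)])
    have h3 : Complex.I • (∫ y : ℝ in (-T)..T, F (σ + y * Complex.I)) =
        -(∫ u : ℝ in σ₁..σ, F (u + (-T : ℝ) * Complex.I)) +
        (∫ u : ℝ in σ₁..σ, F (u + T * Complex.I)) +
        Complex.I • (∫ y : ℝ in (-T)..T, F (σ₁ + y * Complex.I)) := by
      linear_combination hrect
    have h4 := congrArg norm h3
    rw [norm_smul, Complex.norm_I, one_mul] at h4
    rw [h4]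
    refine (norm_add₃_le).trans ?_
    rw [norm_neg, norm_smul, Complex.norm_I, one_mul]
    linarith
  have hfin : ‖∫ y : ℝ, F (vline σ y)‖ ≤ 288 * B * x ^ σ * T ^ (-(1 / 4) : ℝ) * 4 +
      288 * B * x ^ σ₁ * (∫ y : ℝ, (1 + |y|) ^ (-(3 / 2) : ℝ)) +
      288 * B * x ^ σ * T ^ (-(1 / 4) : ℝ) * ∫ y : ℝ, (1 + |y|) ^ (-(5 / 4) : ℝ) := by
    rw [← hsplit]
    refine (norm_add_le _ _).trans (add_le_add ?_ htail)
    rw [← intervalIntegral.integral_of_le (by linarith)]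
    exact hmid
  refine hfin.trans (le_of_eq ?_)
  ring

lemma errFn_pos (c x : ℝ) : 0 < errFn c x := Real.exp_pos _

lemma ell_exp_le {u : ℝ} (hu : 2 ≤ u) : ell (Real.exp u) ≤ 2 * u := by
  have h1 : (3 : ℝ) ≤ Real.exp u := by
    have := Real.add_one_le_exp u; linarith
  rw [ell, abs_of_pos (Real.exp_pos u), Real.log_le_iff_le_exp (by positivity), two_mul,
    Real.exp_add]
  nlinarith

/-- The prime number theorem for the Cesàro mean: the line of integration is `σ = 1 + 1 / log x`,
and the part up to height `T = exp √(log x)` is shifted into the zero-free region. -/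
lemma ZetaLike.psi_one {f : ℂ → ℂ} {Λ : ℕ → ℝ} {δ C : ℝ} (hf : ZetaLike f Λ δ C) :
    ∃ c K x₀ : ℝ, 0 < c ∧ 0 < K ∧ ∀ x, x₀ ≤ x →
      |(∑ n ∈ Finset.Icc 1 ⌊x⌋₊, Λ n * (1 - n / x)) - (x - 1) ^ 2 / (2 * x)| ≤
        K * x * errFn c x := by
  obtain ⟨c₀, B, hc₀, hcδ, hB, hreg₀⟩ := hf.logDeriv_bound
  set c := min c₀ (1 / 2) with hc
  have hc0 : 0 < c := by positivity
  have hcc : c ≤ c₀ := min_le_left _ _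
  have hreg : ∀ s : ℂ, 1 - c / ell s.im ≤ s.re → s.re ≤ 1 + c →
        f s ≠ 0 ∧ ‖logDeriv f s‖ ≤ B * ell s.im ^ 2 := by
    intro s h1 h2
    refine hreg₀ s ?_ (by linarith)
    have : c / ell s.im ≤ c₀ / ell s.im := by
      have := one_le_ell s.im
      gcongr
    linarith
  set I₁ := ∫ y : ℝ, (1 + |y|) ^ (-(5 / 4) : ℝ) with hI₁
  set I₂ := ∫ y : ℝ, (1 + |y|) ^ (-(3 / 2) : ℝ) with hI₂
  have hI₁0 : 0 ≤ I₁ := MeasureTheory.integral_nonneg fun y => by positivity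
  have hI₂0 : 0 ≤ I₂ := MeasureTheory.integral_nonneg fun y => by positivity
  set c₁ := min (c / 2) (1 / 4) with hc₁
  refine ⟨c₁, 288 * B * (Real.exp 1 * (I₁ + 4) + I₂), Real.exp (max 4 (1 / c)),
    by positivity, by positivity, fun x hx => ?_⟩
  have hx0 : 0 < x := (Real.exp_pos _).trans_le hx
  set L := Real.log x with hL
  have hLx : max 4 (1 / c) ≤ L := (Real.le_log_iff_exp_le hx0).mpr hx
  have hL4 : 4 ≤ L := (le_max_left _ _).trans hLx
  have hLc : 1 / c ≤ L := (le_max_right _ _).trans hLx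
  set u := Real.sqrt L with hu
  have huL : u ^ 2 = L := Real.sq_sqrt (by linarith)
  have hu2 : 2 ≤ u := by
    rw [hu]; apply Real.le_sqrt_of_sq_le; linarith
  have hxL : x = Real.exp L := (Real.exp_log hx0).symm
  have hx1 : 1 ≤ x := by rw [hxL]; exact Real.one_le_exp (by linarith)
  have hL1 : 1 / L ≤ c := by
    rw [div_le_iff₀ (by linarith)]
    rw [div_le_iff₀ hc0] at hLc
    linarith
  have hσ : 1 < 1 + 1 / L := by
    have : 0 < 1 / L := by positivity
    linarith
  obtain ⟨hint, hbd⟩ := hf.contour_bound hc0 (hcc.trans_lt hcδ) (min_le_right _ _) hB hreg hx1 hσ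
    (by linarith) (T := Real.exp u) (Real.one_le_exp (by linarith))
  rw [← hI₁, ← hI₂] at hbd
  have hx' : (x : ℂ) ≠ 0 := by exact_mod_cast hx0.ne'
  -- the main term comes from the pole at `s = 1`
  have hp2 := perron_weight_two (σ := 1 + 1 / L) (v := 1 / x) hσ (by positivity)
  have hinv : ∀ s : ℂ, ((1 / x : ℝ) : ℂ) ^ (-s) = (x : ℂ) ^ s := by
    intro s
    rw [one_div, Complex.ofReal_inv, Complex.inv_cpow _ _ (by
          rw [Complex.arg_ofReal_of_nonneg hx0.le]; exact Real.pi_pos.ne),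
        Complex.cpow_neg, inv_inv]
  simp only [hinv] at hp2
  have hint2 : MeasureTheory.Integrable fun y : ℝ => (x : ℂ) ^ vline (1 + 1 / L) y *
      (1 / ((vline (1 + 1 / L) y - 1) * (vline (1 + 1 / L) y * (vline (1 + 1 / L) y + 1)))) := by
    refine ((integrable_weight_two hσ).norm.const_mul (x ^ (1 + 1 / L))).mono' ?_
      (Eventually.of_forall fun y => ?_)
    · refine (Continuous.mul ?_ ?_).aestronglyMeasurable
      · exact Continuous.const_cpow (continuous_vline _) (Or.inl hx')
      · have hv := continuous_vline (1 + 1 / L)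
        refine Continuous.div continuous_const ((hv.sub continuous_const).mul (hv.mul
          (hv.add continuous_const))) fun y => ?_
        exact mul_ne_zero (ne_zero_of_re (by simp; linarith)) (mul_ne_zero
          (ne_zero_of_re (by simp; positivity)) (ne_zero_of_re (by simp; positivity)))
    · rw [norm_mul, Complex.norm_cpow_eq_rpow_re_of_pos hx0, vline_re]
  have hp1 := hf.perron hσ hx0
  have hsum : ∀ y : ℝ, (x : ℂ) ^ vline (1 + 1 / L) y *
      LSeries (fun n => (Λ n : ℂ)) (vline (1 + 1 / L) y) *
        (1 / (vline (1 + 1 / L) y * (vline (1 + 1 / L) y + 1))) =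
      (x : ℂ) ^ vline (1 + 1 / L) y * (1 / ((vline (1 + 1 / L) y - 1) *
        (vline (1 + 1 / L) y * (vline (1 + 1 / L) y + 1)))) +
      (x : ℂ) ^ vline (1 + 1 / L) y * (-logDeriv f (vline (1 + 1 / L) y)) *
      (1 / (vline (1 + 1 / L) y * (vline (1 + 1 / L) y + 1))) := by
    intro y
    have he := hf.eq (vline (1 + 1 / L) y) (by simpa using hσ)
    rw [he]
    simp only [one_div, mul_inv]
    ring
  simp only [hsum] at hp1
  rw [MeasureTheory.integral_add hint2 hint, hp2] at hp1
  have hmain : max 0 (1 - 1 / x) ^ 2 / (2 * (1 / x)) = (x - 1) ^ 2 / (2 * x) := by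
    rw [max_eq_right]
    · field_simp
    · rw [sub_nonneg, div_le_one hx0]; exact hx1
  rw [hmain] at hp1
  set S := ∑ n ∈ Finset.Icc 1 ⌊x⌋₊, Λ n * (1 - n / x) with hS
  have hdiff : ((2 * Real.pi * (S - (x - 1) ^ 2 / (2 * x)) : ℝ) : ℂ) =
      ∫ y : ℝ, (x : ℂ) ^ vline (1 + 1 / L) y * (-logDeriv f (vline (1 + 1 / L) y)) *
      (1 / (vline (1 + 1 / L) y * (vline (1 + 1 / L) y + 1))) := by
    push_cast at hp1 ⊢
    linear_combination -hp1
  have h2 : |S - (x - 1) ^ 2 / (2 * x)| ≤ ‖∫ y : ℝ, (x : ℂ) ^ vline (1 + 1 / L) y *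
      (-logDeriv f (vline (1 + 1 / L) y)) *
      (1 / (vline (1 + 1 / L) y * (vline (1 + 1 / L) y + 1)))‖ := by
    rw [← hdiff, Complex.norm_real, Real.norm_eq_abs, abs_mul]
    apply le_mul_of_one_le_left (abs_nonneg _)
    rw [abs_of_pos (by positivity)]
    linarith [Real.pi_gt_three]
  refine h2.trans (hbd.trans ?_)
  have hc₁0 : 0 < c₁ := by positivity
  have hc₁1 : c₁ ≤ c / 2 := min_le_left _ _
  have hc₁2 : c₁ ≤ 1 / 4 := min_le_right _ _
  have e1 : x ^ (1 + 1 / L) = Real.exp 1 * x := by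
    rw [Real.rpow_add hx0, Real.rpow_one, Real.rpow_def_of_pos hx0, ← hL, mul_one_div_cancel
      (by linarith), mul_comm]
  have e2 : Real.exp u ^ (-(1 / 4) : ℝ) ≤ errFn c₁ x := by
    rw [← Real.exp_mul, errFn, ← hL, ← hu]
    apply Real.exp_le_exp.mpr
    nlinarith
  have e3 : x ^ (1 - c / ell (Real.exp u)) ≤ x * errFn c₁ x := by
    rw [Real.rpow_sub hx0, Real.rpow_one, div_eq_mul_inv, ← Real.rpow_neg hx0.le, errFn, ← hL, ← hu]
    gcongr
    rw [Real.rpow_def_of_pos hx0, ← hL]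
    apply Real.exp_le_exp.mpr
    have h3 : c / (2 * u) ≤ c / ell (Real.exp u) := by
      have := one_le_ell (Real.exp u)
      have := ell_exp_le hu2
      gcongr
    have h4 : u ^ 2 * (c / (2 * u)) = c / 2 * u := by field_simp
    rw [← huL]
    nlinarith [mul_le_mul_of_nonneg_left h3 (sq_nonneg u)]
  rw [e1]
  have hE := errFn_pos c₁ x
  calc 288 * B * (Real.exp 1 * x * Real.exp u ^ (-(1 / 4) : ℝ) * (I₁ + 4) +
        x ^ (1 - c / ell (Real.exp u)) * I₂)
      ≤ 288 * B * (Real.exp 1 * x * errFn c₁ x * (I₁ + 4) + x * errFn c₁ x * I₂) := by gcongr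
    _ = _ := by ring

/-! ### Removing the smoothing -/

lemma errFn_half {c x : ℝ} (hc : 0 < c) (hx : 4 ≤ x) {u : ℝ} (hu : x / 2 ≤ u) :
    errFn c u ≤ errFn (c / 2) x := by
  unfold errFn
  apply Real.exp_le_exp.mpr
  have h1 : Real.sqrt (Real.log x) ≤ 2 * Real.sqrt (Real.log u) := by
    have h4 : (2 : ℝ) = Real.sqrt 4 := by
      rw [show (4 : ℝ) = 2 ^ 2 by norm_num, Real.sqrt_sq (by norm_num)]
    rw [h4, ← Real.sqrt_mul (by norm_num)]
    apply Real.sqrt_le_sqrt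
    have h5 : Real.log (x / 2) ≤ Real.log u := Real.log_le_log (by linarith) hu
    rw [Real.log_div (by linarith) (by norm_num)] at h5
    have h6 : Real.log 4 ≤ Real.log x := Real.log_le_log (by norm_num) hx
    rw [show (4 : ℝ) = 2 ^ 2 by norm_num, Real.log_pow] at h6
    push_cast at h6
    have h7 := Real.log_nonneg (by linarith : 1 ≤ x)
    linarith
  nlinarith

lemma errFn_le_one {c x : ℝ} (hc : 0 ≤ c) : errFn c x ≤ 1 := by
  unfold errFn
  apply Real.exp_le_one_iff.mpr
  have := Real.sqrt_nonneg (Real.log x)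
  nlinarith

lemma errFn_sq (c x : ℝ) : errFn c x ^ 2 = errFn (2 * c) x := by
  unfold errFn
  rw [← Real.exp_nat_mul]
  congr 1
  push_cast
  ring

lemma one_le_mul_errFn {c x : ℝ} (hx : Real.exp (c ^ 2) ≤ x) :
    1 ≤ x * errFn c x := by
  have hx0 : 0 < x := (Real.exp_pos _).trans_le hx
  have hl : c ^ 2 ≤ Real.log x := (Real.le_log_iff_exp_le hx0).mpr hx
  have hs : c ≤ Real.sqrt (Real.log x) := Real.le_sqrt_of_sq_le hl
  have h2 := Real.sq_sqrt (le_trans (sq_nonneg c) hl)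
  nth_rewrite 1 [← Real.exp_log hx0]
  rw [errFn, ← Real.exp_add]
  apply Real.one_le_exp
  nlinarith

/-- As `u ↦ max 0 (u - n)` is convex with slope `0` up to `n` and `1` beyond, the increments of the
second-order summatory function bound the first-order one from both sides. -/
lemma smoothed_increment {Λ : ℕ → ℝ} (hΛ : ∀ n, 0 ≤ Λ n) {x y : ℝ} (hy : 0 ≤ y)
    (hyx : y ≤ x) :
    y * ∑ n ∈ Finset.Icc 1 ⌊x⌋₊, Λ n ≤
      ∑ n ∈ Finset.Icc 1 ⌊x + y⌋₊, Λ n * (x + y - n) - ∑ n ∈ Finset.Icc 1 ⌊x⌋₊, Λ n * (x - n) ∧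
    ∑ n ∈ Finset.Icc 1 ⌊x⌋₊, Λ n * (x - n) -
      ∑ n ∈ Finset.Icc 1 ⌊x - y⌋₊, Λ n * (x - y - n) ≤ y * ∑ n ∈ Finset.Icc 1 ⌊x⌋₊, Λ n := by
  have key : ∀ u, 0 ≤ u → ∀ N : ℕ, ⌊u⌋₊ ≤ N → ∑ n ∈ Finset.Icc 1 ⌊u⌋₊, Λ n * (u - n) =
      ∑ n ∈ Finset.Icc 1 N, Λ n * max 0 (u - n) := by
    intro u hu N hN
    rw [← Finset.sum_subset (Finset.Icc_subset_Icc_right hN)]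
    · refine Finset.sum_congr rfl fun n hn => ?_
      rw [Finset.mem_Icc] at hn
      rw [max_eq_right]
      have := (Nat.le_floor_iff hu).mp hn.2
      linarith
    · intro n hn hn'
      rw [Finset.mem_Icc] at hn hn'
      have : ⌊u⌋₊ < n := by omega
      rw [Nat.floor_lt hu] at this
      rw [max_eq_left (by linarith), mul_zero]
  constructor
  · have hN : ⌊x⌋₊ ≤ ⌊x + y⌋₊ := Nat.floor_le_floor (by linarith)
    rw [key x (by linarith) _ hN, key (x + y) (by linarith) _ le_rfl, Finset.mul_sum,
      ← Finset.sum_sub_distrib]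
    refine (Finset.sum_le_sum fun n hn => ?_).trans
      (Finset.sum_le_sum_of_subset_of_nonneg (Finset.Icc_subset_Icc_right hN) fun n _ _ => ?_)
    · rw [Finset.mem_Icc] at hn
      have := (Nat.le_floor_iff (by linarith)).mp hn.2
      rw [max_eq_right (by linarith), max_eq_right (by linarith)]
      linarith
    · rw [← mul_sub]
      apply mul_nonneg (hΛ n)
      rw [sub_nonneg]
      exact max_le_max le_rfl (by linarith)
  · have hN : ⌊x - y⌋₊ ≤ ⌊x⌋₊ := Nat.floor_le_floor (by linarith)
    rw [key x (by linarith) _ le_rfl, key (x - y) (by linarith) _ hN, Finset.mul_sum,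
      ← Finset.sum_sub_distrib]
    refine Finset.sum_le_sum fun n hn => ?_
    rw [← mul_sub, mul_comm y]
    apply mul_le_mul_of_nonneg_left _ (hΛ n)
    have h1 := le_max_right 0 (x - y - n)
    have h2 := le_max_left 0 (x - y - n)
    rcases max_cases 0 (x - n) with h | h <;> linarith

/-- The prime number theorem with classical error term for a zeta-like function. -/
theorem ZetaLike.psi {f : ℂ → ℂ} {Λ : ℕ → ℝ} {δ C : ℝ} (hf : ZetaLike f Λ δ C) :
    ∃ c K x₀ : ℝ, 0 < c ∧ 0 < K ∧ ∀ x, x₀ ≤ x →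
      |(∑ n ∈ Finset.Icc 1 ⌊x⌋₊, Λ n) - x| ≤ K * x * errFn c x := by
  obtain ⟨c, K, x₀, hc, hK, h⟩ := hf.psi_one
  refine ⟨c / 4, 16 * K + 2, max (2 * x₀) (max 4 (Real.exp ((c / 4) ^ 2))), by positivity,
    by positivity, fun x hx => ?_⟩
  have hx1 : 2 * x₀ ≤ x := (le_max_left _ _).trans hx
  have hx2 : 4 ≤ x := (le_max_left _ _).trans ((le_max_right _ _).trans hx)
  have hx3 : Real.exp ((c / 4) ^ 2) ≤ x := (le_max_right _ _).trans ((le_max_right _ _).trans hx)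
  -- differencing with step `y ≍ x η` loses `O(y)` in the main term and divides the error term
  -- `x² η²` by `y`; both are of size `x η`
  set η := errFn (c / 4) x with hη
  have hη0 : 0 < η := errFn_pos _ _
  have hη1 : η ≤ 1 := errFn_le_one (by positivity)
  have hxη : 1 ≤ x * η := one_le_mul_errFn hx3
  have hA : ∀ u, x / 2 ≤ u → u ≤ 2 * x →
      |(∑ n ∈ Finset.Icc 1 ⌊u⌋₊, Λ n * (u - n)) - (u - 1) ^ 2 / 2| ≤ 4 * K * x ^ 2 * η ^ 2 := by
    intro u hu hu2
    have hu0 : 0 < u := by linarith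
    have h1 := h u (by linarith)
    have e1 : (∑ n ∈ Finset.Icc 1 ⌊u⌋₊, Λ n * (u - n)) - (u - 1) ^ 2 / 2 =
        u * ((∑ n ∈ Finset.Icc 1 ⌊u⌋₊, Λ n * (1 - n / u)) - (u - 1) ^ 2 / (2 * u)) := by
      rw [mul_sub, Finset.mul_sum]
      congr 1
      · refine Finset.sum_congr rfl fun n _ => ?_
        field_simp
      · field_simp
    rw [e1, abs_mul, abs_of_pos hu0]
    have h2 : errFn c u ≤ η ^ 2 := by
      rw [hη, errFn_sq]
      exact (errFn_half hc hx2 hu).trans_eq (by congr 1; ring)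
    calc u * _ ≤ u * (K * u * errFn c u) := by gcongr
      _ ≤ (2 * x) * (K * (2 * x) * η ^ 2) := by
        have := (errFn_pos c u).le
        gcongr
      _ = _ := by ring
  set y := x * η / 2 with hy
  have hy0 : 0 < y := by positivity
  have hyx : y ≤ x / 2 := by nlinarith
  obtain ⟨i1, i2⟩ := smoothed_increment hf.nonneg hy0.le (by linarith : y ≤ x)
  have a1 := abs_le.mp (hA x (by linarith) (by linarith))
  have a2 := abs_le.mp (hA (x + y) (by linarith) (by linarith))
  have a3 := abs_le.mp (hA (x - y) (by linarith) (by linarith))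
  set P := ∑ n ∈ Finset.Icc 1 ⌊x⌋₊, Λ n
  have e : 8 * K * x ^ 2 * η ^ 2 = y * (16 * K * x * η) := by rw [hy]; ring
  rw [abs_le]
  constructor
  · have : y * (x - 1 - y / 2 - 16 * K * x * η) ≤ y * P := by nlinarith
    have := le_of_mul_le_mul_left this hy0
    nlinarith
  · have : y * P ≤ y * (x - 1 + y / 2 + 16 * K * x * η) := by nlinarith
    have := le_of_mul_le_mul_left this hy0
    nlinarith

/-! ### Dirichlet series with an Euler product -/

/-- A Dirichlet series with nonnegative coefficients which has an Euler product, in the form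
`a · log = Λ ⍟ a` with `Λ ≥ 0`, converges for `Re s > 1`, and has a simple pole at `1`. -/
structure EulerLike (a Λ : ℕ → ℝ) : Prop where
  a_nonneg : ∀ n, 0 ≤ a n
  nonneg : ∀ n, 0 ≤ Λ n
  a_one : a 1 = 1
  conv : ∀ n, n ≠ 0 → a n * Real.log n = ∑ p ∈ n.divisorsAntidiagonal, Λ p.1 * a p.2
  zero : Λ 0 = 0
  summable : ∀ s : ℂ, 1 < s.re → LSeriesSummable (fun n => (a n : ℂ)) s
  pole : ∃ ρ : ℝ, 0 < ρ ∧ Tendsto (fun s : ℝ => ((s : ℂ) - 1) * LSeries (fun n => (a n : ℂ)) s)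
    (nhdsWithin 1 (Set.Ioi 1)) (nhds ρ)

namespace EulerLike

variable {a Λ : ℕ → ℝ}

lemma abscissa_le (h : EulerLike a Λ) :
    LSeries.abscissaOfAbsConv (fun n => (a n : ℂ)) ≤ (1 : ℝ) :=
  LSeries.abscissaOfAbsConv_le_of_forall_lt_LSeriesSummable fun y hy => h.summable y (by simpa)

lemma abscissa_lt (h : EulerLike a Λ) {s : ℂ} (hs : 1 < s.re) :
    LSeries.abscissaOfAbsConv (fun n => (a n : ℂ)) < s.re :=
  h.abscissa_le.trans_lt (by exact_mod_cast hs)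

lemma Λ_le (h : EulerLike a Λ) (n : ℕ) (hn : n ≠ 0) : Λ n ≤ a n * Real.log n := by
  rw [h.conv n hn]
  refine le_trans (le_of_eq ?_) (Finset.single_le_sum (f := fun p : ℕ × ℕ => Λ p.1 * a p.2)
    (fun p _ => mul_nonneg (h.nonneg _) (h.a_nonneg _)) (a := (n, 1)) (by simp [hn]))
  simp [h.a_one]

lemma Λ_one (h : EulerLike a Λ) : Λ 1 = 0 := by
  have := h.conv 1 one_ne_zero
  simpa [h.a_one] using this.symm

lemma logMul_eq (h : EulerLike a Λ) {n : ℕ} (hn : n ≠ 0) :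
    LSeries.logMul (fun n => (a n : ℂ)) n =
      LSeries.convolution (fun n => (Λ n : ℂ)) (fun n => (a n : ℂ)) n := by
  rw [LSeries.convolution_def]
  have := h.conv n hn
  rw [LSeries.logMul, ← Complex.natCast_log]
  simp only
  rw [mul_comm]
  exact_mod_cast this

lemma summable_Λ (h : EulerLike a Λ) {s : ℂ} (hs : 1 < s.re) :
    LSeriesSummable (fun n => (Λ n : ℂ)) s := by
  have h1 := LSeriesSummable_logMul_of_lt_re (h.abscissa_lt hs)
  rw [LSeriesSummable, ← summable_norm_iff] at h1 ⊢
  refine h1.of_nonneg_of_le (fun n => norm_nonneg _) fun n => ?_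
  refine LSeries.norm_term_le s ?_
  rcases eq_or_ne n 0 with rfl | hn
  · simp [h.zero]
  rw [LSeries.logMul, ← Complex.natCast_log, ← Complex.ofReal_mul, Complex.norm_real,
    Complex.norm_real, Real.norm_of_nonneg (h.nonneg n), mul_comm]
  exact (h.Λ_le n hn).trans (le_abs_self _)

/-- The Dirichlet coefficients of the logarithm of the series. -/
noncomputable def logCoeff (Λ : ℕ → ℝ) (n : ℕ) : ℂ := (Λ n : ℂ) / Real.log n

lemma logMul_logCoeff (h : EulerLike a Λ) :
    LSeries.logMul (logCoeff Λ) = fun n => (Λ n : ℂ) := by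
  ext n
  rw [LSeries.logMul, logCoeff, ← Complex.natCast_log]
  rcases n with _ | _ | n
  · simp [h.zero]
  · simp [h.Λ_one]
  · have : Real.log ((n + 1 + 1 : ℕ) : ℝ) ≠ 0 := (Real.log_pos (by push_cast; linarith [n.cast_nonneg (α := ℝ)])).ne'
    rw [mul_div_cancel₀]
    exact_mod_cast this

lemma summable_logCoeff (h : EulerLike a Λ) {s : ℂ} (hs : 1 < s.re) :
    LSeriesSummable (logCoeff Λ) s := by
  have h1 := (h.summable_Λ hs)
  rw [LSeriesSummable, ← summable_norm_iff] at h1 ⊢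
  refine (h1.mul_left (2 : ℝ)).of_nonneg_of_le (fun n => norm_nonneg _) fun n => ?_
  have h2 : ‖logCoeff Λ n‖ ≤ ‖(2 : ℂ) * Λ n‖ := by
    rw [logCoeff, norm_div, norm_mul]
    rcases n with _ | _ | n
    · simp
    · simp
    · have h3 : Real.log 2 ≤ Real.log ((n + 1 + 1 : ℕ) : ℝ) :=
        Real.log_le_log (by norm_num) (by push_cast; linarith [n.cast_nonneg (α := ℝ)])
      have h4 := Real.log_two_gt_d9
      rw [Complex.norm_real (Real.log _), Real.norm_of_nonneg (by linarith),
        div_le_iff₀ (by linarith)]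
      have := norm_nonneg ((Λ (n + 1 + 1) : ℂ))
      simp only [RCLike.norm_ofNat]
      nlinarith
  refine (LSeries.norm_term_le (g := fun n => (2 : ℂ) * Λ n) s h2).trans (le_of_eq ?_)
  rw [LSeries.norm_term_eq, LSeries.norm_term_eq]
  split_ifs <;> simp [mul_div_assoc]

lemma hasDerivAt (h : EulerLike a Λ) {s : ℂ} (hs : 1 < s.re) :
    HasDerivAt (LSeries (fun n => (a n : ℂ)))
      (-(LSeries (fun n => (Λ n : ℂ)) s * LSeries (fun n => (a n : ℂ)) s)) s := by
  have h1 := LSeries_hasDerivAt (h.abscissa_lt hs)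
  rwa [LSeries_congr (fun {n} hn => h.logMul_eq hn) s,
    LSeries_convolution' (h.summable_Λ hs) (h.summable s hs)] at h1

lemma hasDerivAt_log (h : EulerLike a Λ) {s : ℂ} (hs : 1 < s.re) :
    HasDerivAt (LSeries (logCoeff Λ)) (-(LSeries (fun n => (Λ n : ℂ)) s)) s := by
  have h0 : LSeries.abscissaOfAbsConv (logCoeff Λ) ≤ (1 : ℝ) :=
    LSeries.abscissaOfAbsConv_le_of_forall_lt_LSeriesSummable fun y hy =>
      h.summable_logCoeff (by simpa)
  have h1 := LSeries_hasDerivAt (h0.trans_lt (by exact_mod_cast hs : ((1 : ℝ) : EReal) < s.re))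
  rwa [h.logMul_logCoeff] at h1

/-- On `Re s > 1` the series is a nonzero constant times `exp` of a Dirichlet series: both sides
satisfy the same linear differential equation. -/
lemma exists_eq_exp (h : EulerLike a Λ) : ∃ c : ℂ, c ≠ 0 ∧ ∀ s : ℂ, 1 < s.re →
    LSeries (fun n => (a n : ℂ)) s = c * Complex.exp (LSeries (logCoeff Λ) s) := by
  have hopen : IsOpen {s : ℂ | 1 < s.re} := isOpen_lt continuous_const Complex.continuous_re
  have hconv : IsPreconnected {s : ℂ | 1 < s.re} := (convex_halfSpace_re_gt 1).isPreconnected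
  set H : ℂ → ℂ := fun s => LSeries (fun n => (a n : ℂ)) s *
    Complex.exp (-LSeries (logCoeff Λ) s) with hH
  have hder : ∀ s : ℂ, 1 < s.re → HasDerivAt H 0 s := by
    intro s hs
    have h1 := (h.hasDerivAt hs).mul (h.hasDerivAt_log hs).neg.cexp
    refine h1.congr_deriv ?_
    ring
  have hconst : ∀ s : ℂ, 1 < s.re → H s = H 2 := fun s hs =>
    hopen.is_const_of_deriv_eq_zero hconv
      (fun z hz => (hder z hz).differentiableAt.differentiableWithinAt)
      (fun z hz => (hder z hz).deriv) hs (by simp)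
  have heq : ∀ s : ℂ, 1 < s.re →
      LSeries (fun n => (a n : ℂ)) s = H 2 * Complex.exp (LSeries (logCoeff Λ) s) := by
    intro s hs
    rw [← hconst s hs, hH]
    simp only
    rw [mul_assoc, ← Complex.exp_add]
    simp
  refine ⟨H 2, ?_, heq⟩
  intro h0
  obtain ⟨ρ, hρ, hlim⟩ := h.pole
  have h1 : Tendsto (fun s : ℝ => ((s : ℂ) - 1) * LSeries (fun n => (a n : ℂ)) s)
      (nhdsWithin 1 (Set.Ioi 1)) (nhds 0) := by
    refine tendsto_const_nhds.congr' ?_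
    filter_upwards [self_mem_nhdsWithin] with s hs
    rw [heq s (by simpa using hs), h0]
    simp
  have := tendsto_nhds_unique hlim h1
  exact hρ.ne' (by exact_mod_cast this)

/-- On a vertical line to the right of `1` the series for the logarithm converges absolutely, so
the modulus of the Dirichlet series is bounded below. -/
lemma lower (h : EulerLike a Λ) {σ : ℝ} (hσ : 1 < σ) : ∃ c : ℝ, 0 < c ∧ ∀ t : ℝ,
    c ≤ ‖LSeries (fun n => (a n : ℂ)) (σ + t * Complex.I)‖ := by
  obtain ⟨c, hc, heq⟩ := h.exists_eq_exp
  set M := ∑' n, ‖LSeries.term (logCoeff Λ) σ n‖ with hM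
  have hs0 := (h.summable_logCoeff (s := σ) (by simpa)).norm
  refine ⟨‖c‖ * Real.exp (-M), by positivity, fun t => ?_⟩
  rw [heq _ (by simpa), norm_mul, Complex.norm_exp]
  gcongr
  have h1 : ‖LSeries (logCoeff Λ) (σ + t * Complex.I)‖ ≤ M := by
    have e : ∀ n, ‖LSeries.term (logCoeff Λ) (σ + t * Complex.I) n‖ =
        ‖LSeries.term (logCoeff Λ) σ n‖ := by
      intro n
      rw [LSeries.norm_term_eq, LSeries.norm_term_eq]
      simp
    rw [hM, ← tsum_congr e]
    apply norm_tsum_le_tsum_norm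
    simpa only [e] using hs0
  have h2 := Complex.abs_re_le_norm (LSeries (logCoeff Λ) (σ + t * Complex.I))
  linarith [(abs_le.mp (h2.trans h1)).1]

/-- An Euler product whose pole-free multiple continues with polynomial growth is zeta-like. -/
lemma zetaLike (h : EulerLike a Λ) {f : ℂ → ℂ} {δ C : ℝ} (hδ : 0 < δ) (hδ1 : δ ≤ 1) (hC : 0 < C)
    (hdiff : DifferentiableOn ℂ f {s | 1 - δ < s.re})
    (hb : ∀ s : ℂ, 1 - δ < s.re → s.re ≤ 3 → ‖f s‖ ≤ C * (‖s‖ + 1) ^ 3)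
    (heq : ∀ s : ℂ, 1 < s.re → f s = (s - 1) * LSeries (fun n => (a n : ℂ)) s) :
    ZetaLike f Λ δ C := by
  obtain ⟨c, hc, hexp⟩ := h.exists_eq_exp
  have hZ : ∀ s : ℂ, 1 < s.re → LSeries (fun n => (a n : ℂ)) s ≠ 0 := fun s hs => by
    rw [hexp s hs]; exact mul_ne_zero hc (Complex.exp_ne_zero _)
  have hs1 : ∀ s : ℂ, 1 < s.re → s - 1 ≠ 0 := fun s hs h0 => by
    rw [sub_eq_zero] at h0; simp [h0] at hs
  refine ⟨hδ, hδ1, hC, hdiff, hb, ?_, h.nonneg, fun s hs => h.summable_Λ hs,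
    fun s hs => ?_, fun s hs => ?_, fun σ hσ => ?_⟩
  · obtain ⟨ρ, hρ, hlim⟩ := h.pole
    have hcont : ContinuousAt f 1 := (hdiff.differentiableAt
      ((isOpen_lt continuous_const Complex.continuous_re).mem_nhds (by simpa))).continuousAt
    have h1 : Tendsto (fun s : ℝ => f s) (nhdsWithin 1 (Set.Ioi 1)) (nhds (f 1)) := by
      have : Tendsto (fun s : ℝ => (s : ℂ)) (nhdsWithin 1 (Set.Ioi 1)) (nhds 1) := by
        have := Complex.continuous_ofReal.tendsto 1
        simp only [Complex.ofReal_one] at this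
        exact this.mono_left nhdsWithin_le_nhds
      exact hcont.tendsto.comp this
    have h2 : Tendsto (fun s : ℝ => f s) (nhdsWithin 1 (Set.Ioi 1)) (nhds ρ) := by
      refine hlim.congr' ?_
      filter_upwards [self_mem_nhdsWithin] with s hs
      rw [heq s (by simpa using hs)]
    rw [tendsto_nhds_unique h1 h2]
    exact_mod_cast hρ.ne'
  · rw [heq s hs]
    exact mul_ne_zero (hs1 s hs) (hZ s hs)
  · have hev : f =ᶠ[nhds s] fun z => (z - 1) * LSeries (fun n => (a n : ℂ)) z := by
      filter_upwards [(isOpen_lt continuous_const Complex.continuous_re).mem_nhds hs] with z hz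
      exact heq z hz
    have hd := ((hasDerivAt_id s).sub_const 1).mul (h.hasDerivAt hs)
    have hd' : HasDerivAt f _ s := hd.congr_of_eventuallyEq hev
    rw [logDeriv_apply, hd'.deriv, heq s hs]
    have := hZ s hs
    have := hs1 s hs
    simp only [id]
    field_simp
    ring
  · obtain ⟨c', hc', hl⟩ := h.lower hσ
    refine ⟨(σ - 1) * c', mul_pos (by linarith) hc', fun t => ?_⟩
    rw [heq _ (by simpa), norm_mul]
    have h1 : σ - 1 ≤ ‖(σ + t * Complex.I - 1 : ℂ)‖ := by
      have := Complex.abs_re_le_norm (σ + t * Complex.I - 1 : ℂ)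
      simp at this
      exact (le_abs_self _).trans this
    have := hl t
    gcongr

end EulerLike

/-! ### Tent sums of coefficients as Mellin transforms -/

/-- The Mellin integral of a single tent `max 0 (x - m)`. -/
lemma integral_tent_kernel {s : ℂ} (hs : 1 < s.re) {m : ℕ} (hm : 1 ≤ m) :
    MeasureTheory.IntegrableOn
      (fun x : ℝ => (x : ℂ) ^ (-s - 3) * ((max 0 (x - m) : ℝ) : ℂ)) (Set.Ioi 1) ∧
    ∫ x in Set.Ioi (1 : ℝ), (x : ℂ) ^ (-s - 3) * ((max 0 (x - m) : ℝ) : ℂ) =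
      (m : ℂ) ^ (-s - 1) / ((s + 1) * (s + 2)) := by
  have hm1 : (1 : ℝ) ≤ m := by exact_mod_cast hm
  have hm0 : (0 : ℝ) < m := by linarith
  have hmc : (m : ℂ) ≠ 0 := by exact_mod_cast hm0.ne'
  set F : ℝ → ℂ := fun x => (x : ℂ) ^ (-s - 3) * ((max 0 (x - m) : ℝ) : ℂ) with hF
  set G : ℝ → ℂ := fun x => (x : ℂ) ^ (-s - 2) - m * (x : ℂ) ^ (-s - 3) with hG
  have h2 := integrableOn_Ioi_cpow_of_lt (a := -s - 2) (by simp; linarith) hm0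
  have h3 := integrableOn_Ioi_cpow_of_lt (a := -s - 3) (by simp; linarith) hm0
  have hGi : MeasureTheory.IntegrableOn G (Set.Ioi (m : ℝ)) := h2.sub (h3.const_mul _)
  have hFG : Set.EqOn F ((Set.Ioi (m : ℝ)).indicator G) (Set.Ioi 1) := by
    intro x hx
    have hx0 : (0 : ℝ) < x := by have := Set.mem_Ioi.mp hx; linarith
    have hxc : (x : ℂ) ≠ 0 := by exact_mod_cast hx0.ne'
    by_cases hxm : (m : ℝ) < x
    · rw [Set.indicator_of_mem (Set.mem_Ioi.mpr hxm), hF, hG]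
      simp only
      rw [max_eq_right (by linarith), show -s - 2 = -s - 3 + 1 by ring, Complex.cpow_add _ _ hxc,
        Complex.cpow_one]
      push_cast
      ring
    · rw [Set.indicator_of_notMem (by simpa using hxm), hF]
      simp only
      rw [max_eq_left (by linarith)]
      simp
  have hint : MeasureTheory.IntegrableOn ((Set.Ioi (m : ℝ)).indicator G) (Set.Ioi 1) :=
    (hGi.integrable_indicator measurableSet_Ioi).integrableOn
  refine ⟨hint.congr_fun hFG.symm measurableSet_Ioi, ?_⟩
  rw [MeasureTheory.setIntegral_congr_fun measurableSet_Ioi hFG,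
    MeasureTheory.setIntegral_indicator measurableSet_Ioi, Set.inter_eq_right.mpr
      (Set.Ioi_subset_Ioi hm1), hG, MeasureTheory.integral_sub h2 (h3.const_mul _),
    MeasureTheory.integral_const_mul, integral_Ioi_cpow_of_lt (by simp; linarith) hm0,
    integral_Ioi_cpow_of_lt (by simp; linarith) hm0]
  have e1 : s + 1 ≠ 0 := ne_zero_of_re (by simp; linarith)
  have e2 : s + 2 ≠ 0 := ne_zero_of_re (by simp; linarith)
  have e3 : -s - 2 + 1 = -(s + 1) := by ring
  have e4 : -s - 3 + 1 = -(s + 2) := by ring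
  have e5 : (m : ℂ) ^ (-(s + 1)) = m ^ (-(s + 2)) * m := by
    rw [show -(s + 1) = -(s + 2) + 1 by ring, Complex.cpow_add _ _ hmc, Complex.cpow_one]
  rw [e3, e4, show -s - 1 = -(s + 1) by ring]
  simp only [Complex.ofReal_natCast]
  rw [e5]
  field_simp
  ring

/-- The twice-summed coefficients `∑ a(m) m (x - m)`, over `m ≤ x`. -/
noncomputable def tentSum (a : ℕ → ℝ) (x : ℝ) : ℝ :=
  ∑ m ∈ Finset.Icc 1 ⌊x⌋₊, a m * m * (x - m)

lemma tentSum_eq {a : ℕ → ℝ} {x : ℝ} (hx : 0 ≤ x) (m : ℕ) (hm : m ∉ Finset.Icc 1 ⌊x⌋₊) :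
    a m * m * max 0 (x - m) = 0 := by
  rcases Nat.eq_zero_or_pos m with rfl | h
  · simp
  rw [Finset.mem_Icc] at hm
  have : ⌊x⌋₊ < m := by by_contra h'; exact hm ⟨h, by omega⟩
  rw [Nat.floor_lt hx] at this
  rw [max_eq_left (by linarith), mul_zero]

lemma tentSum_max (a : ℕ → ℝ) {x : ℝ} (hx : 0 ≤ x) :
    tentSum a x = ∑ m ∈ Finset.Icc 1 ⌊x⌋₊, a m * m * max 0 (x - m) := by
  refine Finset.sum_congr rfl fun m hm => ?_
  rw [Finset.mem_Icc] at hm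
  have := (Nat.le_floor_iff hx).mp hm.2
  rw [max_eq_right (by linarith)]

lemma tentSum_mono {a : ℕ → ℝ} (ha : ∀ n, 0 ≤ a n) : Monotone (tentSum a) := by
  intro x y hxy
  rcases le_or_gt 0 x with hx | hx
  · rw [tentSum_max a hx, tentSum_max a (hx.trans hxy)]
    refine (Finset.sum_le_sum fun m _ => ?_).trans (Finset.sum_le_sum_of_subset_of_nonneg
      (Finset.Icc_subset_Icc_right (Nat.floor_le_floor hxy)) fun m _ _ => ?_)
    · have := ha m
      gcongr
    · have := ha m
      positivity
  · have h0 : tentSum a x = 0 := by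
      rw [tentSum, Nat.floor_of_nonpos hx.le]; simp
    rw [h0]
    rcases le_or_gt 0 y with hy | hy
    · rw [tentSum_max a hy]
      refine Finset.sum_nonneg fun m _ => ?_
      have := ha m
      positivity
    · rw [tentSum, Nat.floor_of_nonpos hy.le]; simp

/-- Termwise integration: the Mellin transform of `tentSum a` is the Dirichlet series of `a`
divided by `(s + 1) (s + 2)`. -/
lemma integral_tentSum {a : ℕ → ℝ} (ha : ∀ n, 0 ≤ a n)
    (hs : ∀ s : ℂ, 1 < s.re → LSeriesSummable (fun n => (a n : ℂ)) s) {s : ℂ} (h1 : 1 < s.re) :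
    ∫ x in Set.Ioi (1 : ℝ), (x : ℂ) ^ (-s - 3) * (tentSum a x : ℂ) =
      LSeries (fun n => (a n : ℂ)) s / ((s + 1) * (s + 2)) := by
  set F : ℕ → ℝ → ℂ := fun m x =>
    (a m * m : ℂ) * ((x : ℂ) ^ (-s - 3) * ((max 0 (x - m) : ℝ) : ℂ)) with hF
  have hterm : ∀ {z : ℂ}, 1 < z.re → ∀ m : ℕ, m ≠ 0 →
      (a m * m : ℂ) * ((m : ℂ) ^ (-z - 1) / ((z + 1) * (z + 2))) =
      LSeries.term (fun n => (a n : ℂ)) z m / ((z + 1) * (z + 2)) := by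
    intro z hz m hm
    have hmc : (m : ℂ) ≠ 0 := by exact_mod_cast hm
    rw [LSeries.term_of_ne_zero hm, Complex.cpow_sub _ _ hmc, Complex.cpow_one, Complex.cpow_neg]
    field_simp
  have hint : ∀ m, MeasureTheory.IntegrableOn (F m) (Set.Ioi 1) := by
    intro m
    rcases Nat.eq_zero_or_pos m with rfl | hm
    · simp [hF]
    · exact (integral_tent_kernel h1 hm).1.const_mul _
  have hval : ∀ m, ∫ x in Set.Ioi (1 : ℝ), F m x =
      LSeries.term (fun n => (a n : ℂ)) s m / ((s + 1) * (s + 2)) := by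
    intro m
    rcases Nat.eq_zero_or_pos m with rfl | hm
    · simp [hF]
    · rw [hF]
      simp only
      rw [MeasureTheory.integral_const_mul, (integral_tent_kernel h1 hm).2, hterm h1 m hm.ne']
  have hnorm : ∀ m, ((∫ x in Set.Ioi (1 : ℝ), ‖F m x‖ : ℝ) : ℂ) =
      LSeries.term (fun n => (a n : ℂ)) s.re m / (((s.re : ℂ) + 1) * (s.re + 2)) := by
    intro m
    rcases Nat.eq_zero_or_pos m with rfl | hm
    · simp [hF]
    rw [← hterm (by simpa) m hm.ne', ← (integral_tent_kernel (s := (s.re : ℂ)) (by simpa) hm).2,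
      ← MeasureTheory.integral_const_mul, ← integral_complex_ofReal]
    refine MeasureTheory.setIntegral_congr_fun measurableSet_Ioi fun x hx => ?_
    have hx0 : (0 : ℝ) < x := by have := Set.mem_Ioi.mp hx; linarith
    simp only [hF]
    rw [norm_mul, norm_mul, norm_mul, Complex.norm_cpow_eq_rpow_re_of_pos hx0, Complex.norm_real,
      Complex.norm_real, Real.norm_of_nonneg (ha m), Complex.norm_natCast,
      Real.norm_of_nonneg (le_max_left _ _)]
    push_cast
    rw [Complex.ofReal_cpow hx0.le]
    simp
  have hsum : Summable fun m => ∫ x in Set.Ioi (1 : ℝ), ‖F m x‖ := by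
    have h2 := (hs s.re (by simpa)).div_const (((s.re : ℂ) + 1) * (s.re + 2))
    have h3 : Summable fun m => ((∫ x in Set.Ioi (1 : ℝ), ‖F m x‖ : ℝ) : ℂ) := by
      simpa only [hnorm] using h2
    exact Complex.summable_ofReal.mp h3
  have key := (MeasureTheory.hasSum_integral_of_summable_integral_norm hint hsum).tsum_eq
  rw [LSeries, ← tsum_div_const, ← tsum_congr hval, key]
  refine MeasureTheory.setIntegral_congr_fun measurableSet_Ioi fun x hx => ?_
  have hx0 : (0 : ℝ) ≤ x := by have := Set.mem_Ioi.mp hx; linarith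
  rw [tentSum_max a hx0, tsum_eq_sum (s := Finset.Icc 1 ⌊x⌋₊)]
  · push_cast
    rw [Finset.mul_sum]
    refine Finset.sum_congr rfl fun m _ => ?_
    simp only [hF]
    ring
  · intro m hm
    have := tentSum_eq (a := a) hx0 m hm
    simp only [hF]
    have h4 : (a m * m : ℂ) * ((max 0 (x - m) : ℝ) : ℂ) = 0 := by exact_mod_cast this
    linear_combination (x : ℂ) ^ (-s - 3) * h4

/-! ### Analytic continuation from a smoothed count -/

/-- The error term in the asymptotics of `tentSum`, cut off to `x > 1`. -/
noncomputable def tentErr (a : ℕ → ℝ) (κ x : ℝ) : ℝ :=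
  (Set.Ioi (1 : ℝ)).indicator (fun x => tentSum a x - κ * x ^ 3) x

lemma tentErr_locallyIntegrable {a : ℕ → ℝ} (ha : ∀ n, 0 ≤ a n) (κ : ℝ) :
    MeasureTheory.LocallyIntegrableOn (fun x => (tentErr a κ x : ℂ)) (Set.Ioi 0) := by
  have h1 : MeasureTheory.LocallyIntegrable (fun x => tentSum a x - κ * x ^ 3) :=
    (tentSum_mono ha).locallyIntegrable.sub
      (Continuous.locallyIntegrable (by fun_prop))
  have h2 : MeasureTheory.LocallyIntegrable (tentErr a κ) := h1.indicator measurableSet_Ioi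
  have h3 : MeasureTheory.LocallyIntegrable (fun x => (tentErr a κ x : ℂ)) := by
    intro x
    obtain ⟨s, hs, h⟩ := h2 x
    exact ⟨s, hs, h.ofReal⟩
  exact h3.locallyIntegrableOn _

/-- Analytic continuation with polynomial growth, from a power saving in the asymptotics of
`tentSum`. -/
theorem exists_continuation {a : ℕ → ℝ} (ha : ∀ n, 0 ≤ a n)
    (hs : ∀ s : ℂ, 1 < s.re → LSeriesSummable (fun n => (a n : ℂ)) s) {κ C θ : ℝ}
    (hθ : 0 < θ) (hC : 0 ≤ C)
    (hT : ∀ x, 1 ≤ x → |tentSum a x - κ * x ^ 3| ≤ C * x ^ (3 - θ)) :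
    ∃ (f : ℂ → ℂ) (C' : ℝ), 0 < C' ∧ DifferentiableOn ℂ f {s | 1 - θ / 2 < s.re} ∧
      (∀ s : ℂ, 1 - θ / 2 < s.re → s.re ≤ 3 → ‖f s‖ ≤ C' * (‖s‖ + 1) ^ 3) ∧
      (∀ s : ℂ, 1 < s.re → f s = (s - 1) * LSeries (fun n => (a n : ℂ)) s) := by
  set E : ℝ → ℂ := fun x => (tentErr a κ x : ℂ) with hE
  have hO1 : E =O[atTop] fun x => x ^ (-(θ - 3)) := by
    refine Asymptotics.IsBigO.of_bound C ?_
    filter_upwards [eventually_gt_atTop 1] with x hx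
    rw [hE]
    simp only [tentErr]
    rw [Set.indicator_of_mem (Set.mem_Ioi.mpr hx), Complex.norm_real, Real.norm_eq_abs,
      Real.norm_of_nonneg (by positivity), neg_sub]
    exact hT x hx.le
  have hO2 : ∀ b : ℝ, E =O[nhdsWithin 0 (Set.Ioi 0)] fun x => x ^ (-b) := by
    intro b
    refine (Asymptotics.isBigO_zero _ _).congr' ?_ EventuallyEq.rfl
    have : Set.Iio (1 : ℝ) ∈ nhds 0 := Iio_mem_nhds one_pos
    filter_upwards [mem_nhdsWithin_of_mem_nhds this] with x hx
    rw [hE]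
    simp only [tentErr]
    rw [Set.indicator_of_notMem (by simpa using (Set.mem_Iio.mp hx).le)]
    simp
  have hloc := tentErr_locallyIntegrable ha κ
  -- the Mellin transform of the error term as an integral over `x > 1`
  have hker : ∀ s : ℂ, mellin E (-s - 2) = ∫ x in Set.Ioi (1 : ℝ), (x : ℂ) ^ (-s - 3) *
      ((tentSum a x - κ * x ^ 3 : ℝ) : ℂ) := by
    intro s
    have e : ∀ x : ℝ, (x : ℂ) ^ (-s - 2 - 1) • E x = (Set.Ioi (1 : ℝ)).indicator
        (fun x : ℝ => (x : ℂ) ^ (-s - 3) * ((tentSum a x - κ * x ^ 3 : ℝ) : ℂ)) x := by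
      intro x
      rw [hE]
      simp only [tentErr, smul_eq_mul]
      by_cases hx : x ∈ Set.Ioi (1 : ℝ)
      · rw [Set.indicator_of_mem hx, Set.indicator_of_mem hx]
        congr 2
        ring
      · rw [Set.indicator_of_notMem hx, Set.indicator_of_notMem hx]
        simp
    rw [mellin]
    simp_rw [e]
    rw [MeasureTheory.setIntegral_indicator measurableSet_Ioi, Set.inter_eq_right.mpr
      (Set.Ioi_subset_Ioi zero_le_one)]
  have hkint : ∀ s : ℂ, 1 - θ < s.re → MeasureTheory.IntegrableOn
      (fun x : ℝ => (x : ℂ) ^ (-s - 3) * ((tentSum a x - κ * x ^ 3 : ℝ) : ℂ)) (Set.Ioi 1) := by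
    intro s hs'
    have h1 : MellinConvergent E (-s - 2) :=
      mellinConvergent_of_isBigO_rpow hloc hO1 (by simp; linarith)
        (hO2 ((-s - 2).re - 1)) (by linarith)
    have h2 := MeasureTheory.IntegrableOn.mono_set h1 (Set.Ioi_subset_Ioi (zero_le_one (α := ℝ)))
    refine h2.congr_fun (fun x hx => ?_) measurableSet_Ioi
    rw [hE]
    simp only [tentErr, smul_eq_mul]
    rw [Set.indicator_of_mem hx]
    congr 2
    ring
  refine ⟨fun s => (s + 1) * (s + 2) * (κ + (s - 1) * mellin E (-s - 2)),
    2 * (|κ| + C * (2 / θ)) + 1, by positivity, ?_, ?_, ?_⟩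
  · intro s hs'
    have hs'' : 1 - θ / 2 < s.re := hs'
    have h1 : DifferentiableAt ℂ (mellin E) (-s - 2) :=
      mellin_differentiableAt_of_isBigO_rpow hloc hO1 (by simp; linarith)
        (hO2 ((-s - 2).re - 1)) (by linarith)
    have h2 : DifferentiableAt ℂ (fun s => mellin E (-s - 2)) s :=
      DifferentiableAt.comp (g := mellin E) (f := fun s => -s - 2) s h1 (by fun_prop)
    exact DifferentiableAt.differentiableWithinAt (by fun_prop)
  · intro s hs' _
    have hb : ‖mellin E (-s - 2)‖ ≤ C * (2 / θ) := by
      rw [hker]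
      have hi := integrableOn_Ioi_rpow_of_lt (a := -1 - θ / 2) (by linarith) one_pos
      have hbd : ∀ x ∈ Set.Ioi (1 : ℝ), ‖(x : ℂ) ^ (-s - 3) *
          ((tentSum a x - κ * x ^ 3 : ℝ) : ℂ)‖ ≤ C * x ^ (-1 - θ / 2) := by
        intro x hx
        have hx1 : (1 : ℝ) < x := hx
        have hx0 : (0 : ℝ) < x := by linarith
        rw [norm_mul, Complex.norm_cpow_eq_rpow_re_of_pos hx0, Complex.norm_real,
          Real.norm_eq_abs]
        calc _ ≤ x ^ (-s - 3).re * (C * x ^ (3 - θ)) := by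
              gcongr
              exact hT x hx1.le
          _ = C * x ^ ((-s - 3).re + (3 - θ)) := by rw [Real.rpow_add hx0]; ring
          _ ≤ _ := by
              apply mul_le_mul_of_nonneg_left _ hC
              apply Real.rpow_le_rpow_of_exponent_le hx1.le
              simp
              linarith
      refine (MeasureTheory.norm_integral_le_of_norm_le (hi.const_mul C) ?_).trans (le_of_eq ?_)
      · exact (MeasureTheory.ae_restrict_iff' measurableSet_Ioi).mpr (Eventually.of_forall hbd)
      · rw [MeasureTheory.integral_const_mul, integral_Ioi_rpow_of_lt (by linarith) one_pos,
          Real.one_rpow, show -1 - θ / 2 + 1 = -(θ / 2) by ring]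
        field_simp
    have n1 : ‖s + 1‖ ≤ ‖s‖ + 1 := (norm_add_le _ _).trans (by simp)
    have n2 : ‖s + 2‖ ≤ 2 * (‖s‖ + 1) := (norm_add_le _ _).trans (by
      simp; linarith [norm_nonneg s])
    have n3 : ‖s - 1‖ ≤ ‖s‖ + 1 := (norm_sub_le _ _).trans (by simp)
    have n4 : 1 ≤ ‖s‖ + 1 := by linarith [norm_nonneg s]
    set M := C * (2 / θ)
    have hM : 0 ≤ M := by positivity
    have n5 : ‖(κ : ℂ) + (s - 1) * mellin E (-s - 2)‖ ≤ (|κ| + M) * (‖s‖ + 1) := by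
      refine (norm_add_le _ _).trans ?_
      rw [norm_mul, Complex.norm_real, Real.norm_eq_abs]
      have : ‖s - 1‖ * ‖mellin E (-s - 2)‖ ≤ (‖s‖ + 1) * M := by gcongr
      nlinarith [abs_nonneg κ]
    rw [norm_mul, norm_mul]
    calc _ ≤ (‖s‖ + 1) * (2 * (‖s‖ + 1)) * ((|κ| + M) * (‖s‖ + 1)) := by gcongr
      _ = 2 * (|κ| + M) * (‖s‖ + 1) ^ 3 := by ring
      _ ≤ _ := by
        gcongr
        linarith
  · intro s h1
    have hi := hkint s (by linarith)
    have hi2 := (integrableOn_Ioi_cpow_of_lt (a := -s) (by simpa using h1) one_pos).const_mul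
      (κ : ℂ)
    have key : ∫ x in Set.Ioi (1 : ℝ), (x : ℂ) ^ (-s - 3) * (tentSum a x : ℂ) =
        mellin E (-s - 2) + κ / (s - 1) := by
      have e : κ / (s - 1) = ∫ x in Set.Ioi (1 : ℝ), (κ : ℂ) * (x : ℂ) ^ (-s) := by
        rw [MeasureTheory.integral_const_mul, integral_Ioi_cpow_of_lt (by simpa using h1) one_pos,
          Complex.ofReal_one, Complex.one_cpow, show -s + 1 = -(s - 1) by ring, neg_div_neg_eq]
        ring
      rw [hker, e, ← MeasureTheory.integral_add hi hi2]
      refine MeasureTheory.setIntegral_congr_fun measurableSet_Ioi fun x hx => ?_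
      have hxc : (x : ℂ) ≠ 0 := by
        have : (1 : ℝ) < x := hx
        exact_mod_cast (by linarith : x ≠ 0)
      rw [show -s = -s - 3 + (3 : ℕ) by push_cast; ring, Complex.cpow_add _ _ hxc,
        Complex.cpow_natCast]
      push_cast
      rw [show -s - 3 + 3 - 3 = -s - 3 by ring]
      ring
    rw [integral_tentSum ha hs h1] at key
    have e1 : s + 1 ≠ 0 := ne_zero_of_re (by simp; linarith)
    have e2 : s + 2 ≠ 0 := ne_zero_of_re (by simp; linarith)
    have e3 : s - 1 ≠ 0 := ne_zero_of_re (by simp; linarith)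
    rw [div_eq_iff (mul_ne_zero e1 e2)] at key
    rw [key]
    field_simp
    ring

/-- The prime number theorem for an Euler product with well-distributed coefficients. -/
theorem EulerLike.psi {a Λ : ℕ → ℝ} (h : EulerLike a Λ) {κ C θ : ℝ} (hθ : 0 < θ) (hθ1 : θ ≤ 1)
    (hC : 0 ≤ C) (hT : ∀ x, 1 ≤ x → |tentSum a x - κ * x ^ 3| ≤ C * x ^ (3 - θ)) :
    ∃ c K x₀ : ℝ, 0 < c ∧ 0 < K ∧ ∀ x, x₀ ≤ x →
      |(∑ n ∈ Finset.Icc 1 ⌊x⌋₊, Λ n) - x| ≤ K * x * errFn c x := by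
  obtain ⟨f, C', hC', hd, hb, he⟩ := exists_continuation h.a_nonneg h.summable hθ hC hT
  exact (h.zetaLike (by positivity) (by linarith) hC' hd hb he).psi

/-! ### The ideal von Mangoldt function -/

section IdealMangoldt
open NumberField Ideal

variable (K : Type*) [Field K] [NumberField K]

/-- The number of ideals of norm `n`. -/
noncomputable def aK (n : ℕ) : ℝ := (Nat.card {I : Ideal (𝓞 K) // absNorm I = n} : ℝ)

/-- The finite set of prime ideals of norm between `1` and `n`. -/
noncomputable def primesUpTo (n : ℕ) : Finset (Ideal (𝓞 K)) :=
  (finite_setOfPred_absNorm_le (S := 𝓞 K) n).toFinset.filter fun P => P.IsPrime ∧ P ≠ ⊥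

/-- The ideal von Mangoldt function, summed over the ideals of norm `d`: the sum of `log N(P)` over
the prime powers `P ^ j` of norm `d`. -/
noncomputable def lamK (d : ℕ) : ℝ :=
  ∑ q ∈ primesUpTo K d ×ˢ Finset.Icc 1 d,
    if absNorm q.1 ^ q.2 = d then Real.log (absNorm q.1) else 0

variable {K}

lemma mem_primesUpTo {n : ℕ} {P : Ideal (𝓞 K)} :
    P ∈ primesUpTo K n ↔ absNorm P ≤ n ∧ P.IsPrime ∧ P ≠ ⊥ := by
  simp [primesUpTo]

lemma absNorm_prime_ge_two {P : Ideal (𝓞 K)} (h : P.IsPrime) (h0 : P ≠ ⊥) : 2 ≤ absNorm P := by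
  have h1 : absNorm P ≠ 0 := by rwa [Ne, absNorm_eq_zero_iff]
  have h2 : absNorm P ≠ 1 := by rw [Ne, absNorm_eq_one_iff]; exact h.ne_top
  omega

lemma lamK_eq {d n : ℕ} (hd : d ≠ 0) (hdn : d ≤ n) : lamK K d =
    ∑ q ∈ primesUpTo K n ×ˢ Finset.Icc 1 n,
      if absNorm q.1 ^ q.2 = d then Real.log (absNorm q.1) else 0 := by
  refine Finset.sum_subset ?_ ?_
  · intro q hq
    rw [Finset.mem_product, mem_primesUpTo, Finset.mem_Icc] at hq ⊢
    exact ⟨⟨hq.1.1.trans hdn, hq.1.2⟩, hq.2.1, hq.2.2.trans hdn⟩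
  · intro q hq hq'
    rw [Finset.mem_product, mem_primesUpTo, Finset.mem_Icc] at hq hq'
    rw [if_neg]
    rintro rfl
    have h2 := absNorm_prime_ge_two hq.1.2.1 hq.1.2.2
    refine hq' ⟨⟨Nat.le_self_pow (by omega) _, hq.1.2⟩, hq.2.1, ?_⟩
    exact (Nat.lt_pow_self (by omega)).le

lemma lamK_nonneg (d : ℕ) : 0 ≤ lamK K d := by
  refine Finset.sum_nonneg fun q _ => ?_
  split_ifs
  · exact Real.log_natCast_nonneg _
  · exact le_rfl

lemma lamK_zero : lamK K 0 = 0 := by simp [lamK]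

/-- `log N(I)` is the sum of `log N(P)` over all prime powers `P ^ j` dividing `I`. -/
lemma log_absNorm_eq {n : ℕ} (hn : n ≠ 0) {I : Ideal (𝓞 K)} (hI : absNorm I = n) :
    Real.log n = ∑ q ∈ primesUpTo K n ×ˢ Finset.Icc 1 n,
      if q.1 ^ q.2 ∣ I then Real.log (absNorm q.1) else 0 := by
  have hI0 : I ≠ ⊥ := by rw [Ne, ← absNorm_eq_zero_iff]; omega
  set F := UniqueFactorizationMonoid.normalizedFactors I with hF
  have hprod : F.prod = I := Ideal.prod_normalizedFactors_eq_self hI0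
  have hsub : F.toFinset ⊆ primesUpTo K n := by
    intro P hP
    rw [Multiset.mem_toFinset] at hP
    rw [mem_primesUpTo]
    have hp := UniqueFactorizationMonoid.prime_of_normalized_factor P hP
    refine ⟨?_, isPrime_of_prime hp, hp.ne_zero⟩
    have hdvd := UniqueFactorizationMonoid.dvd_of_mem_normalizedFactors hP
    rw [← hI]
    exact Nat.le_of_dvd (by omega) (map_dvd absNorm hdvd)
  have h1 : (n : ℝ) = ∏ P ∈ primesUpTo K n, (absNorm P : ℝ) ^ F.count P := by
    have h2 : I = ∏ P ∈ primesUpTo K n, P ^ F.count P := by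
      rw [← Finset.prod_multiset_count_of_subset F _ hsub, hprod]
    have h3 : (n : ℝ) = ((absNorm (∏ P ∈ primesUpTo K n, P ^ F.count P) : ℕ) : ℝ) := by
      rw [← h2, hI]
    rw [h3, map_prod]
    push_cast
    refine Finset.prod_congr rfl fun P _ => ?_
    rw [map_pow]
    push_cast
    rfl
  rw [h1, Real.log_prod (fun P hP => ?_), Finset.sum_product]
  · refine Finset.sum_congr rfl fun P hP => ?_
    rw [mem_primesUpTo] at hP
    have hPp : Prime P := prime_of_isPrime hP.2.2 hP.2.1
    have hdvd : ∀ j, P ^ j ∣ I ↔ j ≤ F.count P := by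
      intro j
      rw [pow_dvd_iff_le_emultiplicity,
        UniqueFactorizationMonoid.emultiplicity_eq_count_normalizedFactors hPp.irreducible hI0,
        normalize_eq]
      exact_mod_cast Iff.rfl
    have hle : F.count P ≤ n := by
      have h3 := map_dvd absNorm ((hdvd _).mpr le_rfl)
      rw [map_pow, hI] at h3
      have h4 := Nat.le_of_dvd (by omega) h3
      exact (Nat.lt_pow_self (absNorm_prime_ge_two hP.2.1 hP.2.2)).le.trans h4
    simp only [hdvd]
    rw [← Finset.sum_filter, Finset.sum_const, Real.log_pow, nsmul_eq_mul]
    congr 2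
    have : (Finset.Icc 1 n).filter (fun j => j ≤ F.count P) = Finset.Icc 1 (F.count P) := by
      ext j
      simp only [Finset.mem_filter, Finset.mem_Icc]
      omega
    rw [this, Nat.card_Icc]
    simp
  · rw [mem_primesUpTo] at hP
    have := absNorm_prime_ge_two hP.2.1 hP.2.2
    positivity

lemma aK_eq_card {n : ℕ} : aK K n = ((finite_setOfPred_absNorm_eq (S := 𝓞 K) n).toFinset.card : ℝ) := by
  rw [aK, ← Set.ncard_eq_toFinset_card _ (finite_setOfPred_absNorm_eq (S := 𝓞 K) n)]
  rfl

/-- The Euler product in logarithmic form: `log N(I)`, written as a sum over the prime powers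
dividing `I`, is summed over all ideals `I` of norm `n`, and the multiples of `P ^ j` are
parametrized as `P ^ j * I'`. -/
lemma aK_conv {n : ℕ} (hn : n ≠ 0) :
    aK K n * Real.log n = ∑ p ∈ n.divisorsAntidiagonal, lamK K p.1 * aK K p.2 := by
  have h1 : aK K n * Real.log n = ∑ q ∈ primesUpTo K n ×ˢ Finset.Icc 1 n,
      ∑ I ∈ (finite_setOfPred_absNorm_eq (S := 𝓞 K) n).toFinset,
        if q.1 ^ q.2 ∣ I then Real.log (absNorm q.1) else 0 := by
    rw [Finset.sum_comm, aK_eq_card, ← nsmul_eq_mul, ← Finset.sum_const]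
    refine Finset.sum_congr rfl fun I hI => ?_
    exact log_absNorm_eq hn (by simpa using hI)
  have h2 : ∑ p ∈ n.divisorsAntidiagonal, lamK K p.1 * aK K p.2 =
      ∑ q ∈ primesUpTo K n ×ˢ Finset.Icc 1 n, ∑ p ∈ n.divisorsAntidiagonal,
        (if absNorm q.1 ^ q.2 = p.1 then Real.log (absNorm q.1) else 0) * aK K p.2 := by
    rw [Finset.sum_comm]
    refine Finset.sum_congr rfl fun p hp => ?_
    have hp1 : p.1 ∣ n := ⟨p.2, (Nat.mem_divisorsAntidiagonal.mp hp).1.symm⟩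
    rw [lamK_eq (ne_zero_of_dvd_ne_zero hn hp1) (Nat.le_of_dvd (by omega) hp1), Finset.sum_mul]
  rw [h1, h2]
  refine Finset.sum_congr rfl fun q hq => ?_
  rw [Finset.mem_product, mem_primesUpTo, Finset.mem_Icc] at hq
  obtain ⟨P, j⟩ := q
  simp only at hq ⊢
  have hPj0 : P ^ j ≠ ⊥ := pow_ne_zero _ hq.1.2.2
  have hN0 : absNorm P ^ j ≠ 0 := by
    have := absNorm_prime_ge_two hq.1.2.1 hq.1.2.2
    positivity
  rw [← Finset.sum_filter, Finset.sum_const]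
  by_cases hdvd : absNorm P ^ j ∣ n
  · obtain ⟨m, hm⟩ := hdvd
    rw [Finset.sum_eq_single (absNorm P ^ j, m)]
    · rw [if_pos rfl, aK_eq_card, nsmul_eq_mul, mul_comm]
      congr 2
      symm
      refine Finset.card_bij (fun J _ => P ^ j * J) ?_ ?_ ?_
      · intro J hJ
        have hJ' : absNorm J = m := by simpa using hJ
        simp [hJ', hm]
      · intro J _ J' _ h
        exact mul_left_cancel₀ hPj0 h
      · intro I hI
        simp only [Set.Finite.mem_toFinset, Finset.mem_filter] at hI
        obtain ⟨hI1, J, rfl⟩ := hI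
        refine ⟨J, ?_, rfl⟩
        have hI2 : absNorm (P ^ j * J) = n := hI1
        rw [map_mul, map_pow, hm] at hI2
        simpa using Nat.eq_of_mul_eq_mul_left (Nat.pos_of_ne_zero hN0) hI2
    · intro p hp hne
      rw [if_neg, zero_mul]
      intro h
      apply hne
      rw [Nat.mem_divisorsAntidiagonal] at hp
      refine Prod.ext h.symm ?_
      have : absNorm P ^ j * p.2 = absNorm P ^ j * m := by rw [← hm, h]; exact hp.1
      exact Nat.eq_of_mul_eq_mul_left (Nat.pos_of_ne_zero hN0) this
    · intro h
      exact absurd (Nat.mem_divisorsAntidiagonal.mpr ⟨hm.symm, hn⟩) h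
  · rw [Finset.sum_eq_zero, Finset.filter_eq_empty_iff.mpr]
    · simp
    · intro I hI hPI
      have hI' : absNorm I = n := by simpa using hI
      apply hdvd
      rw [← hI', ← map_pow]
      exact map_dvd absNorm hPI
    · intro p hp
      rw [if_neg, zero_mul]
      intro h
      exact hdvd (h.symm ▸ ⟨p.2, (Nat.mem_divisorsAntidiagonal.mp hp).1.symm⟩)

lemma aK_one : aK K 1 = 1 := by
  rw [aK]
  simp only [absNorm_eq_one_iff]
  simp

lemma aK_sum (n : ℕ) : ∑ k ∈ Finset.Icc 1 n, aK K k =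
    (Nat.card {I : (nonZeroDivisors (Ideal (𝓞 K))) // absNorm (I : Ideal (𝓞 K)) ≤ n} : ℝ) := by
  simp only [aK, ← Nat.cast_sum]
  congr
  rw [← add_left_inj 1, ← card_norm_le_eq_card_norm_le_add_one,
    show Finset.Icc 1 n = Finset.Ioc 0 n from Finset.Icc_succ_left_eq_Ioc _ _,
    show 1 = Nat.card {I : Ideal (𝓞 K) // absNorm I = 0} by simp [Ideal.absNorm_eq_zero_iff],
    Finset.sum_Ioc_add_eq_sum_Icc (n.zero_le),
    ← Finset.card_preimage_eq_sum_card_image_eq (fun k _ ↦ finite_setOfPred_absNorm_eq k)]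
  simp [Set.coe_eq_subtype]

variable (K)

lemma aK_summable {s : ℂ} (hs : 1 < s.re) : LSeriesSummable (fun n => (aK K n : ℂ)) s := by
  refine LSeriesSummable_of_sum_norm_bigO_and_nonneg (r := 1) ?_
    (fun n => Nat.cast_nonneg _) zero_le_one hs
  have h1 := (NumberField.Ideal.tendsto_norm_le_div_atTop₀ K).comp tendsto_natCast_atTop_atTop
  have h2 := h1.isBigO_one ℝ
  have h3 := h2.mul (Asymptotics.isBigO_refl (fun n : ℕ => (n : ℝ)) atTop)
  refine h3.congr' ?_ ?_
  · filter_upwards [eventually_ne_atTop 0] with n hn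
    have : (n : ℝ) ≠ 0 := by exact_mod_cast hn
    simp only [Function.comp_apply, Nat.cast_le]
    rw [aK_sum, div_mul_cancel₀ _ this]
  · filter_upwards with n
    simp

lemma eulerLike_aK : EulerLike (aK K) (lamK K) where
  a_nonneg _ := Nat.cast_nonneg _
  nonneg := lamK_nonneg
  a_one := aK_one
  conv _ hn := aK_conv hn
  zero := lamK_zero
  summable _ hs := aK_summable K hs
  pole := by
    refine ⟨dedekindZeta_residue K, dedekindZeta_residue_pos K, ?_⟩
    have := tendsto_sub_one_mul_dedekindZeta_nhdsGT K
    simpa [dedekindZeta, aK] using this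

end IdealMangoldt

/-! ### Lattice sums of Lipschitz functions -/

section LatticeSum
open MeasureTheory Metric Module

variable {E : Type*} [NormedAddCommGroup E] [NormedSpace ℝ E] [FiniteDimensional ℝ E]

lemma lattice_finite_norm_le (Λ : Submodule ℤ E) [DiscreteTopology Λ] (R : ℝ) :
    {α : Λ | ‖(α : E)‖ ≤ R}.Finite := by
  have h1 := Metric.finite_isBounded_inter_isClosed (K := closedBall (0:E) R) (s := (Λ : Set E))
    (isDiscrete_iff_discreteTopology.2 inferInstance) isBounded_closedBall
    (by
      have : DiscreteTopology Λ.toAddSubgroup := inferInstanceAs (DiscreteTopology Λ)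
      exact AddSubgroup.isClosed_of_discrete (H := Λ.toAddSubgroup))
  refine Set.Finite.of_finite_image (f := ((↑) : Λ → E)) (h1.subset ?_)
    Subtype.val_injective.injOn
  rintro _ ⟨α, hα, rfl⟩
  exact ⟨by simpa using hα, α.2⟩

/-- The Riemann sum of a compactly supported Lipschitz function over the dilated lattice
`X⁻¹ Λ` agrees with a multiple of `X ^ n` up to `O(X ^ (n - 1))`, where `n` is the dimension. -/
theorem lattice_sum (Λ : Submodule ℤ E) [DiscreteTopology Λ] [IsZLattice ℝ Λ] (F : E → ℝ)
    {M R : ℝ} (hM : 0 ≤ M) (hR : 0 ≤ R) (hF : ∀ x y, |F x - F y| ≤ M * ‖x - y‖)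
    (hS : ∀ x, F x ≠ 0 → ‖x‖ ≤ R) :
    ∃ c C : ℝ, 0 ≤ C ∧ ∀ X : ℝ, 1 ≤ X → Summable (fun α : Λ => F (X⁻¹ • (α : E))) ∧
      |(∑' α : Λ, F (X⁻¹ • (α : E))) - c * X ^ finrank ℝ E| ≤ C * X ^ finrank ℝ E / X := by
  borelize E
  have : Module.Free ℤ Λ := ZLattice.module_free ℝ Λ
  have : Module.Finite ℤ Λ := ZLattice.module_finite ℝ Λ
  let b := Module.Free.chooseBasis ℤ Λ
  let μ : Measure E := Measure.addHaar
  let D := ZSpan.fundamentalDomain (b.ofZLatticeBasis ℝ)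
  have hD : IsAddFundamentalDomain Λ D μ := ZLattice.isAddFundamentalDomain b μ
  have : VAddInvariantMeasure Λ E μ :=
    inferInstanceAs (VAddInvariantMeasure Λ.toAddSubgroup E μ)
  have hDm : MeasurableSet D := ZSpan.fundamentalDomain_measurableSet _
  obtain ⟨B, hB0, hB⟩ := (ZSpan.fundamentalDomain_isBounded (b.ofZLatticeBasis ℝ)).exists_pos_norm_le
  have hDfin : μ D ≠ ⊤ :=
    ((ZSpan.fundamentalDomain_isBounded (b.ofZLatticeBasis ℝ)).measure_lt_top).ne
  have hD0 : μ D ≠ 0 := ZSpan.measure_fundamentalDomain_ne_zero _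
  set V := μ.real D with hV
  have hVpos : 0 < V := ENNReal.toReal_pos hD0 hDfin
  have hcont : Continuous F := by
    have : LipschitzWith ⟨M, hM⟩ F := LipschitzWith.of_dist_le_mul fun x y => by
      rw [Real.dist_eq, dist_eq_norm]; exact hF x y
    exact this.continuous
  have hcs : HasCompactSupport F := by
    refine HasCompactSupport.intro (K := closedBall (0:E) R) (isCompact_closedBall _ _) ?_
    intro x hx
    by_contra h
    exact hx (by simpa using hS x h)
  set n := finrank ℝ E
  set ω := μ.real (closedBall (0:E) 1)
  refine ⟨V⁻¹ * ∫ x, F x ∂μ, V⁻¹ * (M * B) * ((R + 2 * B) ^ n * ω), by positivity, ?_⟩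
  intro X hX
  have hX0 : 0 < X := by linarith
  have hsm : ∀ x : E, F (X⁻¹ • x) ≠ 0 → ‖x‖ ≤ R * X := by
    intro x hx
    have := hS _ hx
    rw [norm_smul, Real.norm_eq_abs, abs_of_pos (by positivity), inv_mul_le_iff₀ hX0] at this
    linarith
  have hfin := lattice_finite_norm_le Λ (R * X + B)
  set S := hfin.toFinset with hSdef
  -- the lattice points involved number `O(X ^ n)`: translates of the fundamental domain are disjoint
  -- and lie in a ball of radius `R X + 2 B`
  have hcard : (S.card : ℝ) * V ≤ (R + 2 * B) ^ n * ω * X ^ n := by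
    have h1 : ∑ α ∈ S, μ (closedBall (0:E) (R * X + 2 * B) ∩ (α +ᵥ D)) ≤
        μ (closedBall (0:E) (R * X + 2 * B)) := by
      rw [hD.measure_eq_tsum' (closedBall (0:E) (R * X + 2 * B))]
      exact ENNReal.sum_le_tsum _
    have h2 : ∀ α ∈ S, μ (closedBall (0:E) (R * X + 2 * B) ∩ (α +ᵥ D)) = μ D := by
      intro α hα
      rw [Set.inter_eq_self_of_subset_right]
      · exact measure_vadd μ (α : E) D
      · rintro _ ⟨d, hd, rfl⟩
        have h3 : ‖(α : E)‖ ≤ R * X + B := by simpa [hSdef] using hα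
        have h4 := hB d hd
        change (α : E) + d ∈ _
        rw [mem_closedBall_zero_iff]
        linarith [norm_add_le (α : E) d]
    rw [Finset.sum_congr rfl h2, Finset.sum_const, nsmul_eq_mul] at h1
    have h3 : μ.real (closedBall (0:E) (R * X + 2 * B)) = (R * X + 2 * B) ^ n * ω := by
      rw [Measure.real, Measure.addHaar_closedBall' μ _ (by positivity), ENNReal.toReal_mul,
        ENNReal.toReal_ofReal (by positivity)]; rfl
    have h4 : (S.card : ℝ) * V ≤ (R * X + 2 * B) ^ n * ω := by
      rw [← h3]
      have := ENNReal.toReal_mono (isCompact_closedBall (0:E) (R*X+2*B)).measure_lt_top.ne h1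
      rwa [ENNReal.toReal_mul, ENNReal.toReal_natCast] at this
    refine h4.trans ?_
    rw [mul_right_comm, ← mul_pow]
    gcongr
    nlinarith
  have hsupp : ∀ α : Λ, α ∉ S → ∀ v : E, ‖v‖ ≤ B → F (X⁻¹ • ((α : E) + v)) = 0 := by
    intro α hα v hv
    by_contra h
    have h1 := hsm _ h
    apply hα
    simp only [hSdef, Set.Finite.mem_toFinset, Set.mem_ofPred_eq]
    have := norm_add_le ((α : E) + v) (-v)
    rw [add_neg_cancel_right, norm_neg] at this
    linarith
  have hsupp0 : ∀ α : Λ, α ∉ S → F (X⁻¹ • (α : E)) = 0 := fun α hα => by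
    simpa using hsupp α hα 0 (by simpa using hB0.le)
  have hsum : HasSum (fun α : Λ => F (X⁻¹ • (α : E))) (∑ α ∈ S, F (X⁻¹ • (α : E))) :=
    hasSum_sum_of_ne_finset_zero hsupp0
  refine ⟨hsum.summable, ?_⟩
  rw [hsum.tsum_eq]
  have hcontX : Continuous fun x : E => F (X⁻¹ • x) := hcont.comp (continuous_const_smul _)
  have hint : Integrable (fun x : E => F (X⁻¹ • x)) μ :=
    hcontX.integrable_of_hasCompactSupport (hcs.comp_smul (by positivity))
  have hI : ∫ x, F (X⁻¹ • x) ∂μ = X ^ n * ∫ x, F x ∂μ := by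
    rw [Measure.integral_comp_inv_smul_of_nonneg μ F hX0.le, smul_eq_mul]
  have hI2 : ∫ x, F (X⁻¹ • x) ∂μ = ∑ α ∈ S, ∫ v in D, F (X⁻¹ • ((α : E) + v)) ∂μ := by
    rw [hD.integral_eq_tsum'' _ hint]
    rw [tsum_eq_sum (s := S)]
    · rfl
    · intro α hα
      refine setIntegral_eq_zero_of_forall_eq_zero fun v hv => ?_
      exact hsupp α hα v (hB v hv)
  -- within a translate of the fundamental domain, the argument of `F` moves by at most `B / X`
  have hdiff : ∀ α ∈ S, |V * F (X⁻¹ • (α : E)) - ∫ v in D, F (X⁻¹ • ((α : E) + v)) ∂μ| ≤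
      M * B / X * V := by
    intro α _
    have hi : IntegrableOn (fun v => F (X⁻¹ • ((α : E) + v))) D μ :=
      (hint.comp_add_left (α : E)).integrableOn
    have h1 : V * F (X⁻¹ • (α : E)) = ∫ v in D, F (X⁻¹ • (α : E)) ∂μ := by
      rw [setIntegral_const, smul_eq_mul]
    rw [h1, ← integral_sub (μ := μ.restrict D) (integrableOn_const (C := F (X⁻¹ • (α : E))) hDfin) hi]
    rw [← Real.norm_eq_abs]
    refine norm_setIntegral_le_of_norm_le_const (μ := μ) (lt_top_iff_ne_top.2 hDfin) fun v hv => ?_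
    rw [Real.norm_eq_abs]
    refine (hF _ _).trans ?_
    rw [← smul_sub, norm_smul, Real.norm_eq_abs, abs_of_pos (by positivity : 0 < X⁻¹)]
    have : ‖(α : E) - (α + v)‖ ≤ B := by simpa using hB v hv
    calc M * (X⁻¹ * ‖(α : E) - (α + v)‖) ≤ M * (X⁻¹ * B) := by gcongr
      _ = M * B / X := by field_simp
  have key : |V * (∑ α ∈ S, F (X⁻¹ • (α : E))) - X ^ n * ∫ x, F x ∂μ| ≤
      M * B / X * ((R + 2 * B) ^ n * ω * X ^ n) := by
    rw [← hI, hI2, Finset.mul_sum, ← Finset.sum_sub_distrib]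
    refine (Finset.abs_sum_le_sum_abs _ _).trans ((Finset.sum_le_sum hdiff).trans ?_)
    rw [Finset.sum_const, nsmul_eq_mul]
    calc (S.card : ℝ) * (M * B / X * V) = M * B / X * (S.card * V) := by ring
      _ ≤ _ := by gcongr
  have h2 : (∑ α ∈ S, F (X⁻¹ • (α : E))) - (V⁻¹ * ∫ x, F x ∂μ) * X ^ n =
      V⁻¹ * (V * (∑ α ∈ S, F (X⁻¹ • (α : E))) - X ^ n * ∫ x, F x ∂μ) := by
    field_simp
  rw [h2, abs_mul, abs_of_pos (by positivity : 0 < V⁻¹)]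
  calc V⁻¹ * _ ≤ V⁻¹ * (M * B / X * ((R + 2 * B) ^ n * ω * X ^ n)) := by gcongr
    _ = _ := by ring

end LatticeSum

/-! ### A Lipschitz weight for the fundamental cone -/

section ConeWeight
open NumberField NumberField.InfinitePlace NumberField.mixedEmbedding NumberField.Units
  NumberField.Units.dirichletUnitTheorem Module

/-- The tent function, supported on `[-1, 1]`, whose integer translates sum to `1`. -/
noncomputable def tent (r : ℝ) : ℝ := max 0 (1 - |r|)

lemma tent_nonneg (r : ℝ) : 0 ≤ tent r := le_max_left _ _

lemma tent_le_one (r : ℝ) : tent r ≤ 1 := max_le zero_le_one (by linarith [abs_nonneg r])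

lemma tent_ne_zero {r : ℝ} (h : tent r ≠ 0) : |r| < 1 := by
  by_contra hr
  exact h (max_eq_left (by linarith))

lemma tent_lip (r s : ℝ) : |tent r - tent s| ≤ |r - s| := by
  refine (abs_max_sub_max_le_max 0 (1 - |r|) 0 (1 - |s|)).trans (max_le (by simp) ?_)
  rw [show 1 - |r| - (1 - |s|) = |s| - |r| by ring, abs_sub_comm r s]
  exact abs_abs_sub_abs_le _ _

lemma tent_add_tent {r : ℝ} (h0 : 0 ≤ r) (h1 : r ≤ 1) : tent r + tent (r - 1) = 1 := by
  rw [tent, tent, abs_of_nonneg h0, abs_of_nonpos (by linarith), max_eq_right (by linarith),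
    max_eq_right (by linarith)]
  ring

lemma abs_prod_sub_prod_le {ι : Type*} (s : Finset ι) (f g : ι → ℝ)
    (hf : ∀ i, 0 ≤ f i ∧ f i ≤ 1) (hg : ∀ i, 0 ≤ g i ∧ g i ≤ 1) :
    |∏ i ∈ s, f i - ∏ i ∈ s, g i| ≤ ∑ i ∈ s, |f i - g i| := by
  induction s using Finset.induction_on with
  | empty => simp
  | insert a s ha ih =>
    rw [Finset.prod_insert ha, Finset.prod_insert ha, Finset.sum_insert ha]
    have h1 : |∏ i ∈ s, g i| ≤ 1 := by
      rw [abs_of_nonneg (Finset.prod_nonneg fun i _ => (hg i).1)]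
      exact Finset.prod_le_one (fun i _ => (hg i).1) (fun i _ => (hg i).2)
    have h2 : |f a| ≤ 1 := by rw [abs_of_nonneg (hf a).1]; exact (hf a).2
    calc |f a * ∏ i ∈ s, f i - g a * ∏ i ∈ s, g i|
        = |(f a - g a) * ∏ i ∈ s, g i + f a * (∏ i ∈ s, f i - ∏ i ∈ s, g i)| := by ring_nf
      _ ≤ |f a - g a| * |∏ i ∈ s, g i| + |f a| * |∏ i ∈ s, f i - ∏ i ∈ s, g i| := by
          rw [← abs_mul, ← abs_mul]; exact abs_add_le _ _
      _ ≤ |f a - g a| * 1 + 1 * ∑ i ∈ s, |f i - g i| := by gcongr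
      _ = _ := by ring

variable (K : Type*) [Field K] [NumberField K]

/-- The basis of the logarithmic space given by the logarithms of the fundamental units. -/
noncomputable def logBasis : Basis (Fin (rank K)) ℝ (logSpace K) :=
  (basisUnitLattice K).ofZLatticeBasis ℝ (unitLattice K)

/-- A Lipschitz substitute for the indicator function of the fundamental parallelotope of the
unit lattice: its translates by the unit lattice also sum to `1`. -/
noncomputable def coneWeight (v : logSpace K) : ℝ := ∏ i, tent ((logBasis K).repr v i)

lemma coneWeight_nonneg (v : logSpace K) : 0 ≤ coneWeight K v :=
  Finset.prod_nonneg fun _ _ => tent_nonneg _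

lemma coneWeight_le_one (v : logSpace K) : coneWeight K v ≤ 1 :=
  Finset.prod_le_one (fun _ _ => tent_nonneg _) fun _ _ => tent_le_one _

lemma coneWeight_lip : ∃ M, 0 ≤ M ∧ ∀ v w : logSpace K,
    |coneWeight K v - coneWeight K w| ≤ M * ‖v - w‖ := by
  let L := (logBasis K).equivFunL
  refine ⟨rank K * ‖(L : logSpace K →L[ℝ] (Fin (rank K) → ℝ))‖, by positivity, fun v w => ?_⟩
  refine (abs_prod_sub_prod_le _ _ _ (fun i => ⟨tent_nonneg _, tent_le_one _⟩)
    (fun i => ⟨tent_nonneg _, tent_le_one _⟩)).trans ?_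
  have : ∀ i ∈ Finset.univ, |tent ((logBasis K).repr v i) - tent ((logBasis K).repr w i)| ≤
      ‖(L : logSpace K →L[ℝ] (Fin (rank K) → ℝ))‖ * ‖v - w‖ := fun i _ => by
    refine (tent_lip _ _).trans ?_
    have h1 := (L : logSpace K →L[ℝ] (Fin (rank K) → ℝ)).le_opNorm (v - w)
    refine le_trans ?_ h1
    have h2 := norm_le_pi_norm ((L : logSpace K →L[ℝ] (Fin (rank K) → ℝ)) (v - w)) i
    simpa [L] using h2
  refine (Finset.sum_le_sum this).trans ?_
  rw [Finset.sum_const, Finset.card_univ, Fintype.card_fin, nsmul_eq_mul, mul_assoc]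

lemma coneWeight_supp : ∃ A, 0 ≤ A ∧ ∀ v : logSpace K, coneWeight K v ≠ 0 → ‖v‖ ≤ A := by
  refine ⟨∑ i, ‖logBasis K i‖, by positivity, fun v hv => ?_⟩
  rw [coneWeight, Finset.prod_ne_zero_iff] at hv
  conv_lhs => rw [← (logBasis K).sum_repr v]
  refine (norm_sum_le _ _).trans (Finset.sum_le_sum fun i _ => ?_)
  rw [_root_.norm_smul, Real.norm_eq_abs]
  exact mul_le_of_le_one_left (norm_nonneg _) (tent_ne_zero (hv i (Finset.mem_univ _))).le

/-- The test function summed over the lattice: a smoothing of `y ↦ N(y) max(0, 1 - N(y))`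
restricted to the fundamental cone. -/
noncomputable def coneFun (y : mixedSpace K) : ℝ :=
  coneWeight K (logMap y) * (mixedEmbedding.norm y * max 0 (1 - mixedEmbedding.norm y))

lemma coneFun_nonneg (y : mixedSpace K) : 0 ≤ coneFun K y :=
  mul_nonneg (coneWeight_nonneg _ _) (mul_nonneg (mixedEmbedding.norm_nonneg _) (le_max_left _ _))

lemma normAtPlace_le_norm (w : InfinitePlace K) (x : mixedSpace K) : normAtPlace w x ≤ ‖x‖ := by
  rw [norm_eq_sup'_normAtPlace]
  exact Finset.le_sup' (fun w => normAtPlace w x) (Finset.mem_univ w)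

lemma abs_normAtPlace_sub_le (w : InfinitePlace K) (x y : mixedSpace K) :
    |normAtPlace w x - normAtPlace w y| ≤ ‖x - y‖ := by
  have h1 := normAtPlace_add_le w (x - y) y
  have h2 := normAtPlace_add_le w (y - x) x
  rw [sub_add_cancel] at h1 h2
  have h3 := normAtPlace_le_norm K w (x - y)
  have h4 := normAtPlace_le_norm K w (y - x)
  rw [norm_sub_rev] at h4
  rw [abs_le]; constructor <;> linarith

lemma log_norm_eq {x : mixedSpace K} (hx : mixedEmbedding.norm x ≠ 0) :
    Real.log (mixedEmbedding.norm x) = ∑ w, (mult w : ℝ) * Real.log (normAtPlace w x) := by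
  rw [mixedEmbedding.norm_apply, Real.log_prod]
  · simp [Real.log_pow]
  · intro w _
    exact pow_ne_zero _ (mixedEmbedding.norm_ne_zero_iff.1 hx w)

lemma sum_mult_real : ∑ w : InfinitePlace K, (mult w : ℝ) = finrank ℚ K := by
  rw [← sum_mult_eq (K := K)]; push_cast; rfl

/-- On the support of the weight all coordinates are comparable with `N(x) ^ (1 / n)`. -/
lemma coneWeight_normAtPlace : ∃ A, 0 ≤ A ∧ ∀ x : mixedSpace K, mixedEmbedding.norm x ≠ 0 →
    coneWeight K (logMap x) ≠ 0 → ∀ w, |Real.log (normAtPlace w x) -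
      Real.log (mixedEmbedding.norm x) / finrank ℚ K| ≤ A := by
  obtain ⟨A, hA0, hA⟩ := coneWeight_supp K
  refine ⟨Fintype.card (InfinitePlace K) * A + A, by positivity, fun x hx hw w => ?_⟩
  have hv := hA _ hw
  have hn : (finrank ℚ K : ℝ) ≠ 0 := by exact_mod_cast finrank_pos.ne'
  set u : InfinitePlace K → ℝ := fun w => Real.log (normAtPlace w x) -
      Real.log (mixedEmbedding.norm x) / finrank ℚ K with hu
  have h1 : ∀ w : InfinitePlace K, w ≠ w₀ → |mult w * u w| ≤ A := by
    intro w hw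
    have := (norm_le_pi_norm (logMap x) ⟨w, hw⟩).trans hv
    rwa [logMap_apply, Real.norm_eq_abs] at this
  have h2 : ∑ w, (mult w : ℝ) * u w = 0 := by
    simp only [hu, mul_sub, Finset.sum_sub_distrib]
    rw [← log_norm_eq K hx, ← Finset.sum_mul, sum_mult_real]
    field_simp; ring
  have h3 : ∀ w : InfinitePlace K, |u w| ≤ |mult w * u w| := by
    intro w
    rw [abs_mul]
    exact le_mul_of_one_le_left (abs_nonneg _) (by rw [Nat.abs_cast]; exact one_le_mult)
  refine (h3 w).trans ?_
  by_cases hw0 : w = w₀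
  · subst hw0
    have h4 := Finset.add_sum_erase Finset.univ (fun w : InfinitePlace K => (mult w : ℝ) * u w)
      (Finset.mem_univ (w₀ : InfinitePlace K))
    rw [h2] at h4
    rw [eq_neg_of_add_eq_zero_left h4, abs_neg]
    refine (Finset.abs_sum_le_sum_abs _ _).trans ((Finset.sum_le_sum fun w hw =>
      h1 w (Finset.ne_of_mem_erase hw)).trans ?_)
    rw [Finset.sum_const, nsmul_eq_mul]
    have : ((Finset.univ.erase (w₀ : InfinitePlace K)).card : ℝ) ≤
        Fintype.card (InfinitePlace K) := by
      exact_mod_cast (Finset.card_le_univ _)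
    nlinarith
  · have := h1 w hw0
    have h5 : (0:ℝ) ≤ Fintype.card (InfinitePlace K) * A := by positivity
    linarith

lemma le_rho {N n : ℝ} (hN : 0 < N) (hN1 : N ≤ 1) (hn : 1 ≤ n) : N ≤ Real.exp (Real.log N / n) := by
  have h := Real.log_nonpos hN.le hN1
  calc N = Real.exp (Real.log N) := (Real.exp_log hN).symm
    _ ≤ _ := Real.exp_le_exp.2 (by
      rw [le_div_iff₀ (by linarith)]
      nlinarith)

lemma abs_log_sub_le {a b : ℝ} (ha : 0 < a) (h : |a - b| ≤ a / 2) :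
    |Real.log a - Real.log b| ≤ 2 * |a - b| / a := by
  have hb : a / 2 ≤ b := by have := (abs_le.1 h).2; linarith
  have hb0 : 0 < b := by linarith
  have h1 : Real.log a - Real.log b ≤ (a - b) / b := by
    rw [← Real.log_div ha.ne' hb0.ne']
    refine (Real.log_le_sub_one_of_pos (by positivity)).trans (le_of_eq ?_)
    field_simp
  have h2 : Real.log b - Real.log a ≤ (b - a) / a := by
    rw [← Real.log_div hb0.ne' ha.ne']
    refine (Real.log_le_sub_one_of_pos (by positivity)).trans (le_of_eq ?_)
    field_simp
  have h3 : (a - b) / b ≤ 2 * |a - b| / a := by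
    rw [div_le_div_iff₀ hb0 ha]
    nlinarith [le_abs_self (a - b), abs_nonneg (a - b)]
  have h4 : (b - a) / a ≤ 2 * |a - b| / a := by
    gcongr
    have := neg_abs_le (a - b)
    linarith [abs_nonneg (a - b)]
  rw [abs_le]; constructor <;> linarith

/-- The cone function lives on vectors of norm at most `1` whose coordinates are of comparable
size, so its support is bounded. -/
lemma coneFun_supp : ∃ R, 0 ≤ R ∧ ∀ x : mixedSpace K, coneFun K x ≠ 0 → ‖x‖ ≤ R := by
  obtain ⟨A, hA0, hA⟩ := coneWeight_normAtPlace K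
  refine ⟨Real.exp A, by positivity, fun x hx => ?_⟩
  have hw := left_ne_zero_of_mul hx
  have hN := left_ne_zero_of_mul (right_ne_zero_of_mul hx)
  have hN1 : mixedEmbedding.norm x ≤ 1 := by
    by_contra h
    exact right_ne_zero_of_mul (right_ne_zero_of_mul hx) (max_eq_left (by linarith))
  rw [norm_eq_sup'_normAtPlace]
  refine Finset.sup'_le _ _ fun w _ => ?_
  have h1 := (abs_le.1 (hA x hN hw w)).2
  have h2 : 0 < normAtPlace w x :=
    lt_of_le_of_ne (normAtPlace_nonneg _ _) (mixedEmbedding.norm_ne_zero_iff.1 hN w).symm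
  rw [← Real.log_le_iff_le_exp h2]
  have h3 : Real.log (mixedEmbedding.norm x) / finrank ℚ K ≤ 0 :=
    div_nonpos_of_nonpos_of_nonneg (Real.log_nonpos (mixedEmbedding.norm_nonneg _) hN1)
      (by positivity)
  linarith

set_option maxHeartbeats 1000000 in
/-- Either `x` and `y` are so far apart that `N(x)` is bounded by `‖x - y‖`, or all coordinates
of `x` and `y` are comparable, and then logarithms can be compared. -/
lemma coneFun_lip : ∃ M, 0 ≤ M ∧ ∀ x y : mixedSpace K,
    |coneFun K x - coneFun K y| ≤ M * ‖x - y‖ := by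
  obtain ⟨A, hA0, hA⟩ := coneWeight_normAtPlace K
  obtain ⟨L, hL0, hL⟩ := coneWeight_lip K
  set n : ℝ := ((finrank ℚ K : ℕ) : ℝ) with hn
  have hn1 : 1 ≤ n := by rw [hn]; exact_mod_cast (finrank_pos (R := ℚ) (M := K))
  set M : ℝ := 2 * Real.exp A * (4 * L + n * Real.exp n + 1) with hM
  have hM0 : 0 ≤ M := by positivity
  refine ⟨M, hM0, ?_⟩
  have key : ∀ x y : mixedSpace K, coneFun K x - coneFun K y ≤ M * ‖x - y‖ := by
    intro x y
    have hy0 := coneFun_nonneg K y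
    have hxy0 := norm_nonneg (x - y)
    by_cases hx : coneFun K x = 0
    · rw [hx]; have : 0 ≤ M * ‖x - y‖ := by positivity
      linarith
    have hw := left_ne_zero_of_mul hx
    have hN := left_ne_zero_of_mul (right_ne_zero_of_mul hx)
    have hN1 : mixedEmbedding.norm x ≤ 1 := by
      by_contra h
      exact right_ne_zero_of_mul (right_ne_zero_of_mul hx) (max_eq_left (by linarith))
    have hAx := hA x hN hw
    set N := mixedEmbedding.norm x with hNdef
    have hN0 : 0 < N := lt_of_le_of_ne (mixedEmbedding.norm_nonneg _) (Ne.symm hN)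
    set ρ := Real.exp (Real.log N / n) with hρ
    have hNρ : N ≤ ρ := le_rho hN0 hN1 hn1
    have hρ0 : 0 < ρ := Real.exp_pos _
    have hlow : ∀ w, ρ * Real.exp (-A) ≤ normAtPlace w x := by
      intro w
      have h2 : 0 < normAtPlace w x :=
        lt_of_le_of_ne (normAtPlace_nonneg _ _) (mixedEmbedding.norm_ne_zero_iff.1 hN w).symm
      rw [hρ, ← Real.exp_add, ← Real.le_log_iff_exp_le h2]
      linarith [(abs_le.1 (hAx w)).1]
    have hT1 : N * max 0 (1 - N) ≤ N := mul_le_of_le_one_right hN0.le (max_le zero_le_one (by linarith))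
    have hT0 : 0 ≤ N * max 0 (1 - N) := mul_nonneg hN0.le (le_max_left _ _)
    have hFx : coneFun K x ≤ N :=
      (mul_le_of_le_one_left hT0 (coneWeight_le_one K _)).trans hT1
    have hexp : Real.exp A * Real.exp (-A) = 1 := by rw [← Real.exp_add]; simp
    by_cases hfar : ρ * Real.exp (-A) / 2 < ‖x - y‖
    · -- far case: `N(x)` itself is bounded by the distance
      have h1 : ρ ≤ 2 * Real.exp A * ‖x - y‖ := by
        have := mul_le_mul_of_nonneg_left hfar.le (Real.exp_pos A).le
        nlinarith
      have h2 : 2 * Real.exp A * ‖x - y‖ ≤ M * ‖x - y‖ := by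
        rw [hM]
        refine mul_le_mul_of_nonneg_right (le_mul_of_one_le_right (by positivity) ?_) hxy0
        have : 0 ≤ 4 * L + n * Real.exp n := by positivity
        linarith
      linarith
    · push Not at hfar
      -- near case: the logarithms of corresponding coordinates of `x` and `y` differ by at most `η`
      set η := 2 * Real.exp A * ‖x - y‖ / ρ with hη
      have hη0 : 0 ≤ η := by positivity
      have hη1 : η ≤ 1 := by
        rw [hη, div_le_one hρ0]
        have := mul_le_mul_of_nonneg_left hfar (Real.exp_pos A).le
        nlinarith
      have hxw : ∀ w, 0 < normAtPlace w x := fun w => lt_of_lt_of_le (by positivity) (hlow w)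
      have hdw : ∀ w, |normAtPlace w x - normAtPlace w y| ≤ normAtPlace w x / 2 := fun w =>
        (abs_normAtPlace_sub_le K w x y).trans (hfar.trans (by linarith [hlow w]))
      have hlogw : ∀ w, |Real.log (normAtPlace w x) - Real.log (normAtPlace w y)| ≤ η := by
        intro w
        refine (abs_log_sub_le (hxw w) (hdw w)).trans ?_
        rw [hη, div_le_div_iff₀ (hxw w) hρ0]
        have h1 := abs_normAtPlace_sub_le K w x y
        have h2 : ρ ≤ Real.exp A * normAtPlace w x := by
          have := mul_le_mul_of_nonneg_left (hlow w) (Real.exp_pos A).le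
          nlinarith
        calc 2 * |normAtPlace w x - normAtPlace w y| * ρ
            ≤ 2 * ‖x - y‖ * (Real.exp A * normAtPlace w x) := by gcongr
          _ = _ := by ring
      have hNy : mixedEmbedding.norm y ≠ 0 := by
        rw [mixedEmbedding.norm_ne_zero_iff]
        intro w h
        have := hdw w
        rw [h, sub_zero, abs_of_pos (hxw w)] at this
        linarith [hxw w]
      set N' := mixedEmbedding.norm y with hN'
      have hN'0 : 0 < N' := lt_of_le_of_ne (mixedEmbedding.norm_nonneg _) (Ne.symm hNy)
      have hlogN : |Real.log N - Real.log N'| ≤ n * η := by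
        rw [log_norm_eq K hN, log_norm_eq K hNy, ← Finset.sum_sub_distrib]
        refine (Finset.abs_sum_le_sum_abs _ _).trans ?_
        rw [hn, ← sum_mult_real K, Finset.sum_mul]
        refine Finset.sum_le_sum fun w _ => ?_
        rw [← mul_sub, abs_mul, Nat.abs_cast]
        exact mul_le_mul_of_nonneg_left (hlogw w) (by positivity)
      have hlogmap : ‖logMap x - logMap y‖ ≤ 4 * η := by
        rw [pi_norm_le_iff_of_nonneg (by positivity)]
        intro w
        rw [Pi.sub_apply, logMap_apply, logMap_apply, ← mul_sub, Real.norm_eq_abs, abs_mul,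
          Nat.abs_cast]
        have h2 : (mult w.1 : ℝ) ≤ 2 := by
          rw [mult]; split_ifs <;> norm_num
        have h3 : |Real.log (normAtPlace w.1 x) - Real.log (mixedEmbedding.norm x) * (finrank ℚ K : ℝ)⁻¹ -
            (Real.log (normAtPlace w.1 y) - Real.log (mixedEmbedding.norm y) * (finrank ℚ K : ℝ)⁻¹)|
            ≤ η + η := by
          rw [show Real.log (normAtPlace w.1 x) - Real.log (mixedEmbedding.norm x) * (finrank ℚ K : ℝ)⁻¹ -
            (Real.log (normAtPlace w.1 y) - Real.log (mixedEmbedding.norm y) * (finrank ℚ K : ℝ)⁻¹)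
            = (Real.log (normAtPlace w.1 x) - Real.log (normAtPlace w.1 y)) -
              (Real.log N - Real.log N') * n⁻¹ by rw [hn]; ring]
          refine (abs_sub _ _).trans (add_le_add (hlogw w.1) ?_)
          rw [abs_mul, abs_of_pos (by positivity : 0 < n⁻¹), ← div_eq_mul_inv,
            div_le_iff₀ (by positivity)]
          linarith
        calc _ ≤ 2 * (η + η) := by gcongr
          _ = _ := by ring
      have hw' : coneWeight K (logMap x) - coneWeight K (logMap y) ≤ L * (4 * η) :=
        (le_abs_self _).trans ((hL _ _).trans (by gcongr))
      have hNN : |N - N'| ≤ N * (n * η * Real.exp n) := by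
        have h1 : N' = N * Real.exp (Real.log N' - Real.log N) := by
          rw [Real.exp_sub, Real.exp_log hN0, Real.exp_log hN'0]; field_simp
        rw [h1, show N - N * Real.exp (Real.log N' - Real.log N) =
          -(N * (Real.exp (Real.log N' - Real.log N) - 1)) by ring, abs_neg, abs_mul,
          abs_of_pos hN0]
        refine mul_le_mul_of_nonneg_left ?_ hN0.le
        set δ := Real.log N' - Real.log N with hδ
        have hδ1 : |δ| ≤ n * η := by rw [hδ, abs_sub_comm]; exact hlogN
        have hδn : |δ| ≤ n := hδ1.trans (mul_le_of_le_one_right (by positivity) hη1)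
        have h2 : |Real.exp δ - 1| ≤ |δ| * Real.exp |δ| := by
          have h3 := Real.add_one_le_exp δ
          have h4 := Real.add_one_le_exp (-δ)
          have h5 : Real.exp δ - 1 ≤ δ * Real.exp δ := by
            have := mul_le_mul_of_nonneg_right h4 (Real.exp_pos δ).le
            rw [← Real.exp_add] at this
            simp at this; nlinarith
          have h6 : Real.exp δ ≤ Real.exp |δ| := Real.exp_le_exp.2 (le_abs_self _)
          have h7 : 1 ≤ Real.exp |δ| := Real.one_le_exp (abs_nonneg _)
          have h8 := abs_nonneg δ
          rw [abs_le]
          constructor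
          · nlinarith [neg_abs_le δ]
          · calc _ ≤ δ * Real.exp δ := h5
              _ ≤ |δ| * Real.exp δ := by gcongr; exact le_abs_self _
              _ ≤ _ := by gcongr
        exact h2.trans (by gcongr)
      have hTT : N * max 0 (1 - N) - N' * max 0 (1 - N') ≤ |N - N'| := by
        rw [max_eq_right (by linarith)]
        rcases le_or_gt N' 1 with h | h
        · rw [max_eq_right (by linarith)]
          calc N * (1 - N) - N' * (1 - N') = (N - N') * (1 - N - N') := by ring
            _ ≤ |(N - N')| * |(1 - N - N')| := by rw [← abs_mul]; exact le_abs_self _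
            _ ≤ |N - N'| * 1 := by
                refine mul_le_mul_of_nonneg_left ?_ (abs_nonneg _)
                rw [abs_le]; constructor <;> linarith
            _ = _ := mul_one _
        · rw [max_eq_left (by linarith), mul_zero, sub_zero, abs_sub_comm]
          exact le_trans (by nlinarith) (le_abs_self _)
      have hNη : N * η ≤ 2 * Real.exp A * ‖x - y‖ := by
        rw [hη, mul_div_assoc', div_le_iff₀ hρ0]
        calc N * (2 * Real.exp A * ‖x - y‖) ≤ ρ * (2 * Real.exp A * ‖x - y‖) := by gcongr
          _ = _ := by ring
      calc coneFun K x - coneFun K y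
          = (coneWeight K (logMap x) - coneWeight K (logMap y)) * (N * max 0 (1 - N)) +
            coneWeight K (logMap y) * (N * max 0 (1 - N) - N' * max 0 (1 - N')) := by
            rw [coneFun, coneFun]; ring
        _ ≤ (L * (4 * η)) * (N * max 0 (1 - N)) + coneWeight K (logMap y) * |N - N'| := by
            gcongr
            exact coneWeight_nonneg _ _
        _ ≤ (L * (4 * η)) * N + 1 * (N * (n * η * Real.exp n)) := by
            gcongr
            exact coneWeight_le_one _ _
        _ = (N * η) * (4 * L + n * Real.exp n) := by ring
        _ ≤ (2 * Real.exp A * ‖x - y‖) * (4 * L + n * Real.exp n + 1) := by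
            exact mul_le_mul hNη (by linarith) (by positivity) (by positivity)
        _ = M * ‖x - y‖ := by rw [hM]; ring
  intro x y
  rw [abs_le]
  have h1 := key x y
  have h2 := key y x
  rw [norm_sub_rev] at h2
  constructor <;> linarith

end ConeWeight

/-! ### Unfolding over the units -/

section ConeSum
open NumberField NumberField.InfinitePlace NumberField.mixedEmbedding NumberField.Units
  NumberField.Units.dirichletUnitTheorem Module NumberField.mixedEmbedding.fundamentalCone
open scoped nonZeroDivisors ENNReal

variable (K : Type*) [Field K] [NumberField K]

/-- The product of powers of the fundamental units with exponents `z`. -/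
noncomputable def unitPow (z : Fin (rank K) → ℤ) : (𝓞 K)ˣ := ∏ i, fundSystem K i ^ z i

lemma logBasis_repr_unitPow (z : Fin (rank K) → ℤ) {x : mixedSpace K}
    (hx : mixedEmbedding.norm x ≠ 0) (i : Fin (rank K)) :
    (logBasis K).repr (logMap (unitPow K z • x)) i = z i + (logBasis K).repr (logMap x) i := by
  have h1 : logEmbedding K (Additive.ofMul (unitPow K z)) = ∑ j, (z j : ℝ) • logBasis K j := by
    rw [unitPow, ofMul_prod, map_sum]
    refine Finset.sum_congr rfl fun j _ => ?_
    rw [ofMul_zpow, map_zsmul, logEmbedding_fundSystem, logBasis, Basis.ofZLatticeBasis_apply,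
      Int.cast_smul_eq_zsmul]
  rw [logMap_unit_smul _ hx, h1, map_add, Finsupp.add_apply, Basis.repr_sum_self]

lemma mem_cone_iff {x : mixedSpace K} : x ∈ fundamentalCone K ↔
    (∀ i, (logBasis K).repr (logMap x) i ∈ Set.Ico (0:ℝ) 1) ∧ mixedEmbedding.norm x ≠ 0 := by
  rw [fundamentalCone]
  rfl

lemma unitPow_add (z z' : Fin (rank K) → ℤ) : unitPow K (z + z') = unitPow K z * unitPow K z' := by
  simp [unitPow, zpow_add, Finset.prod_mul_distrib]

lemma unitPow_zero : unitPow K 0 = 1 := by simp [unitPow]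

lemma norm_unit_smul' (u : (𝓞 K)ˣ) (x : mixedSpace K) :
    mixedEmbedding.norm (u • x) = mixedEmbedding.norm x := by
  rw [unitSMul_smul, map_mul, norm_unit, one_mul]

variable (J : (Ideal (𝓞 K))⁰)

/-- The lattice attached to the integral ideal `J`. -/
noncomputable abbrev latt : Submodule ℤ (mixedSpace K) :=
  mixedEmbedding.idealLattice K (FractionalIdeal.mk0 K J)

lemma mem_latt {x : mixedSpace K} :
    x ∈ latt K J ↔ ∃ a : 𝓞 K, a ∈ (J : Ideal (𝓞 K)) ∧ mixedEmbedding K (a : K) = x := by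
  rw [latt, mem_idealLattice, FractionalIdeal.coe_mk0]
  constructor
  · rintro ⟨y, hy, rfl⟩
    obtain ⟨a, ha, rfl⟩ := (FractionalIdeal.mem_coeIdeal _).1 hy
    exact ⟨a, ha, rfl⟩
  · rintro ⟨a, ha, rfl⟩
    exact ⟨a, (FractionalIdeal.mem_coeIdeal _).2 ⟨a, ha, rfl⟩, rfl⟩

lemma unit_smul_mem_latt (u : (𝓞 K)ˣ) {x : mixedSpace K} (hx : x ∈ latt K J) :
    u • x ∈ latt K J := by
  rw [mem_latt] at hx ⊢
  obtain ⟨a, ha, rfl⟩ := hx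
  exact ⟨u * a, Ideal.mul_mem_left _ _ ha, by rw [unitSMul_smul]; simp⟩

/-- Every lattice point of nonzero norm is uniquely a product of powers of the fundamental units
times a lattice point in the fundamental cone. -/
noncomputable def coneEquiv : idealSet K J × (Fin (rank K) → ℤ) ≃
    {x : latt K J | mixedEmbedding.norm (x : mixedSpace K) ≠ 0} where
  toFun p := ⟨⟨unitPow K p.2 • (p.1 : mixedSpace K), unit_smul_mem_latt K J _ p.1.2.2⟩, by
    change mixedEmbedding.norm (unitPow K p.2 • (p.1 : mixedSpace K)) ≠ 0
    rw [norm_unit_smul']; exact p.1.2.1.2⟩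
  invFun x := ⟨⟨unitPow K (-fun i => ⌊(logBasis K).repr (logMap (x.1 : mixedSpace K)) i⌋) •
      (x.1 : mixedSpace K), by
      have hx : mixedEmbedding.norm (x.1 : mixedSpace K) ≠ 0 := x.2
      refine ⟨(mem_cone_iff K).2 ⟨fun i => ?_, ?_⟩, unit_smul_mem_latt K J _ x.1.2⟩
      · rw [logBasis_repr_unitPow K _ hx]
        have h1 := Int.floor_le ((logBasis K).repr (logMap (x.1 : mixedSpace K)) i)
        have h2 := Int.lt_floor_add_one ((logBasis K).repr (logMap (x.1 : mixedSpace K)) i)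
        simp only [Pi.neg_apply, Int.cast_neg, Set.mem_Ico]
        constructor <;> linarith
      · rwa [norm_unit_smul']⟩,
    fun i => ⌊(logBasis K).repr (logMap (x.1 : mixedSpace K)) i⌋⟩
  left_inv p := by
    have hx : mixedEmbedding.norm (p.1 : mixedSpace K) ≠ 0 := p.1.2.1.2
    have h1 : (fun i => ⌊(logBasis K).repr (logMap (unitPow K p.2 • (p.1 : mixedSpace K))) i⌋)
        = p.2 := by
      funext i
      rw [logBasis_repr_unitPow K _ hx]
      have h2 := ((mem_cone_iff K).1 p.1.2.1).1 i
      rw [Int.floor_intCast_add, Int.floor_eq_zero_iff.2 h2, add_zero]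
    ext1
    · ext1
      simp only [h1]
      rw [← mul_smul, ← unitPow_add, neg_add_cancel, unitPow_zero, one_smul]
    · exact h1
  right_inv x := by
    ext1; ext1
    simp only
    rw [← mul_smul, ← unitPow_add, add_neg_cancel, unitPow_zero, one_smul]

/-- The tent-shaped test function applied to a norm. -/
noncomputable def tentT (s : ℝ) : ℝ := s * max 0 (1 - s)

/-- The weight is a partition of unity under the action of the units: in each logarithmic
coordinate only the translates of the tent by `0` and `-1` contribute. -/
lemma tsum_coneWeight {x : mixedSpace K} (hx : x ∈ fundamentalCone K) :
    ∑' z, ENNReal.ofReal (coneWeight K (logMap (unitPow K z • x))) = 1 := by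
  have hN := ((mem_cone_iff K).1 hx).2
  have hr := ((mem_cone_iff K).1 hx).1
  set r := fun i => (logBasis K).repr (logMap x) i with hrdef
  have h0 : ∀ z, coneWeight K (logMap (unitPow K z • x)) = ∏ i, tent (z i + r i) := fun z => by
    rw [coneWeight]
    exact Finset.prod_congr rfl fun i _ => by rw [logBasis_repr_unitPow K z hN]
  simp_rw [h0]
  rw [tsum_eq_sum (s := Fintype.piFinset fun _ : Fin (rank K) => ({0, -1} : Finset ℤ))]
  · rw [← ENNReal.ofReal_sum_of_nonneg fun z _ => Finset.prod_nonneg fun i _ => tent_nonneg _]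
    have := Finset.prod_univ_sum (fun _ : Fin (rank K) => ({0, -1} : Finset ℤ))
      (fun i j => tent ((j : ℝ) + r i))
    rw [← this, Finset.prod_eq_one, ENNReal.ofReal_one]
    intro i _
    rw [Finset.sum_pair (by norm_num)]
    have h1 := tent_add_tent (hr i).1 (hr i).2.le
    rw [Int.cast_zero, zero_add, Int.cast_neg, Int.cast_one, neg_add_eq_sub]
    exact h1
  · intro z hz
    rw [Fintype.mem_piFinset] at hz
    push Not at hz
    obtain ⟨i, hi⟩ := hz
    rw [Finset.prod_eq_zero (Finset.mem_univ i), ENNReal.ofReal_zero]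
    by_contra h
    have h1 := abs_lt.1 (tent_ne_zero h)
    have h2 := hr i
    apply hi
    have h3 : -2 < z i := by
      have : (-2 : ℝ) < z i := by linarith [h2.2]
      exact_mod_cast this
    have h4 : z i < 1 := by
      have : (z i : ℝ) < 1 := by linarith [h2.1]
      exact_mod_cast this
    rw [Finset.mem_insert, Finset.mem_singleton]
    omega

/-- Unfolding: every lattice vector of nonzero norm is uniquely a unit times a vector of the
fundamental cone, and the weights of its translates add up to `1`. -/
lemma tsum_coneFun {X : ℝ} (hX : 0 < X) :
    ∑' x : latt K J, ENNReal.ofReal (coneFun K (X⁻¹ • (x : mixedSpace K))) =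
      ∑' a : idealSet K J,
        ENNReal.ofReal (tentT (mixedEmbedding.norm (a : mixedSpace K) / X ^ finrank ℚ K)) := by
  have hcf : ∀ x : mixedSpace K, mixedEmbedding.norm x ≠ 0 → coneFun K (X⁻¹ • x) =
      coneWeight K (logMap x) * tentT (mixedEmbedding.norm x / X ^ finrank ℚ K) := by
    intro x hx
    rw [coneFun, logMap_real_smul hx (by positivity), mixedEmbedding.norm_smul, tentT,
      abs_of_pos (by positivity), inv_pow, inv_mul_eq_div]
  rw [← tsum_subtype_eq_of_support_subset
    (s := {x : latt K J | mixedEmbedding.norm (x : mixedSpace K) ≠ 0})]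
  · rw [← (coneEquiv K J).tsum_eq, ENNReal.tsum_prod']
    refine tsum_congr fun a => ?_
    have h1 : ∀ z, ENNReal.ofReal (coneFun K (X⁻¹ • ((coneEquiv K J (a, z) : latt K J) :
        mixedSpace K))) = ENNReal.ofReal (coneWeight K (logMap (unitPow K z • (a : mixedSpace K)))) *
        ENNReal.ofReal (tentT (mixedEmbedding.norm (a : mixedSpace K) / X ^ finrank ℚ K)) := by
      intro z
      have h2 : ((coneEquiv K J (a, z) : latt K J) : mixedSpace K) =
        unitPow K z • (a : mixedSpace K) := rfl
      rw [h2, hcf _ (by rw [norm_unit_smul']; exact a.2.1.2), norm_unit_smul',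
        ENNReal.ofReal_mul (coneWeight_nonneg _ _)]
    simp_rw [h1]
    rw [ENNReal.tsum_mul_right, tsum_coneWeight K a.2.1, one_mul]
  · intro x hx
    rw [Function.mem_support] at hx
    intro h
    apply hx
    rw [coneFun, mixedEmbedding.norm_smul, h]
    simp

end ConeSum

/-! ### Smoothed counting of ideals -/

section IdealCount
open NumberField NumberField.InfinitePlace NumberField.mixedEmbedding NumberField.Units
  Module NumberField.mixedEmbedding.fundamentalCone
open scoped nonZeroDivisors ENNReal

lemma tsum_by_value {α : Type*} (N : α → ℕ) (f : ℕ → ℝ≥0∞) :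
    ∑' a, f (N a) = ∑' n, (ENat.card {a // N a = n} : ℝ≥0∞) * f n := by
  rw [← (Equiv.sigmaFiberEquiv N).tsum_eq, ENNReal.tsum_sigma']
  refine tsum_congr fun n => ?_
  rw [← ENNReal.tsum_const]
  refine tsum_congr fun a => ?_
  simp [Equiv.sigmaFiberEquiv, a.2]

variable (K : Type*) [Field K] [NumberField K]

/-- Vectors of the fundamental cone in the lattice of `J` are generators of the principal ideals
divisible by `J`, each ideal occurring once per root of unity. -/
lemma tsum_idealSet (J : (Ideal (𝓞 K))⁰) (f : ℝ → ℝ≥0∞) :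
    ∑' a : idealSet K J, f (mixedEmbedding.norm (a : mixedSpace K)) =
      (torsionOrder K : ℝ≥0∞) * ∑' I : {I : (Ideal (𝓞 K))⁰ // (J : Ideal (𝓞 K)) ∣ I ∧
        (I : Ideal (𝓞 K)).IsPrincipal}, f (Ideal.absNorm (I.1 : Ideal (𝓞 K))) := by
  have h1 : ∀ a : idealSet K J, f (mixedEmbedding.norm (a : mixedSpace K)) =
      (fun n : ℕ => f n) (intNorm (idealSetEquiv K J a).1) := fun a => by
    simp only [intNorm_idealSetEquiv_apply]
  simp_rw [h1]
  rw [tsum_by_value (fun a : idealSet K J => intNorm (idealSetEquiv K J a).1) (fun n => f n),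
    tsum_by_value (fun I : {I : (Ideal (𝓞 K))⁰ // (J : Ideal (𝓞 K)) ∣ I ∧
        (I : Ideal (𝓞 K)).IsPrincipal} => Ideal.absNorm (I.1 : Ideal (𝓞 K))) (fun n => f n),
    ← ENNReal.tsum_mul_left]
  refine tsum_congr fun n => ?_
  rw [← mul_assoc]
  congr 1
  have e : {a : idealSet K J // intNorm (idealSetEquiv K J a).1 = n} ≃
      {I : {I : (Ideal (𝓞 K))⁰ // (J : Ideal (𝓞 K)) ∣ I ∧
        (I : Ideal (𝓞 K)).IsPrincipal} // Ideal.absNorm (I.1 : Ideal (𝓞 K)) = n} × torsion K := by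
    refine (Equiv.subtypeEquivRight fun a => ?_).trans ((idealSetEquivNorm K J n).trans
      (Equiv.prodCongrLeft fun _ => ((Equiv.subtypeSubtypeEquivSubtypeInter
        (fun I : (Ideal (𝓞 K))⁰ ↦ (J : Ideal (𝓞 K)) ∣ I ∧ (I : Ideal (𝓞 K)).IsPrincipal)
        (fun I ↦ Ideal.absNorm (I : Ideal (𝓞 K)) = n)).trans
        (Equiv.subtypeEquivRight fun _ => by rw [and_assoc])).symm))
    rw [← intNorm_idealSetEquiv_apply, Nat.cast_inj]
  rw [ENat.card_congr e, ENat.card_prod, mul_comm, ENat.toENNReal_mul]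
  congr 1
  rw [torsionOrder, ENat.card_eq_coe_natCard]
  simp

/-- Multiplication by `J` identifies the ideals of class `C` with the principal ideals divisible
by `J`. -/
lemma tsum_class {C : ClassGroup (𝓞 K)} {J : (Ideal (𝓞 K))⁰} (hJ : ClassGroup.mk0 J = C⁻¹)
    (f : ℝ → ℝ≥0∞) :
    ∑' I : {I : (Ideal (𝓞 K))⁰ // (J : Ideal (𝓞 K)) ∣ I ∧
        (I : Ideal (𝓞 K)).IsPrincipal}, f (Ideal.absNorm (I.1 : Ideal (𝓞 K))) =
    ∑' I : {I : (Ideal (𝓞 K))⁰ // ClassGroup.mk0 I = C},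
      f (Ideal.absNorm (J : Ideal (𝓞 K)) * Ideal.absNorm (I.1 : Ideal (𝓞 K))) := by
  have key : ∀ I : (Ideal (𝓞 K))⁰, ClassGroup.mk0 I = C ↔
      ((J * I : (Ideal (𝓞 K))⁰) : Ideal (𝓞 K)).IsPrincipal := fun I => by
    rw [← ClassGroup.mk0_eq_one_iff (SetLike.coe_mem _)]
    rw [show (⟨((J * I : (Ideal (𝓞 K))⁰) : Ideal (𝓞 K)), SetLike.coe_mem _⟩ : (Ideal (𝓞 K))⁰) = J * I from rfl,
      _root_.map_mul, hJ, inv_mul_eq_one, eq_comm]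
  let e : {I : (Ideal (𝓞 K))⁰ // ClassGroup.mk0 I = C} ≃ {I : (Ideal (𝓞 K))⁰ //
      (J : Ideal (𝓞 K)) ∣ I ∧ (I : Ideal (𝓞 K)).IsPrincipal} := by
    refine Equiv.ofBijective (fun I => ⟨J * I.1, ⟨(I.1 : Ideal (𝓞 K)), by simp⟩,
      (key I.1).1 I.2⟩) ⟨fun I I' h => ?_, fun I => ?_⟩
    · exact Subtype.ext (mul_left_cancel (Subtype.ext_iff.1 h))
    · obtain ⟨I, h1, h2⟩ := I
      obtain ⟨I', rfl⟩ := nonZeroDivisors_dvd_iff_dvd_coe.2 h1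
      exact ⟨⟨I', (key I').2 h2⟩, rfl⟩
  rw [← e.tsum_eq]
  refine tsum_congr fun I => ?_
  change f (Ideal.absNorm ((J * I.1 : (Ideal (𝓞 K))⁰) : Ideal (𝓞 K))) = _
  simp

lemma card_nonZero_absNorm {n : ℕ} (hn : n ≠ 0) :
    (ENat.card {I : (Ideal (𝓞 K))⁰ // Ideal.absNorm (I : Ideal (𝓞 K)) = n} : ℝ≥0∞) =
      ENNReal.ofReal (aK K n) := by
  let e : {I : (Ideal (𝓞 K))⁰ // Ideal.absNorm (I : Ideal (𝓞 K)) = n} ≃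
      {I : Ideal (𝓞 K) // Ideal.absNorm I = n} :=
    ⟨fun I => ⟨I.1, I.2⟩, fun I => ⟨⟨I.1, mem_nonZeroDivisors_of_ne_zero fun h => hn (by
      rw [← I.2, h]; simp)⟩, I.2⟩, fun _ => rfl, fun _ => rfl⟩
  rw [ENat.card_congr e]
  have : Finite {I : Ideal (𝓞 K) // Ideal.absNorm I = n} :=
    Ideal.finite_setOfPred_absNorm_eq n
  rw [ENat.card_eq_coe_natCard, aK]
  simp

/-- `tentSum` as a sum over ideals. -/
lemma tsum_ideals {Y : ℝ} (hY : 1 ≤ Y) :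
    ∑' I : (Ideal (𝓞 K))⁰, ENNReal.ofReal (tentT (Ideal.absNorm (I : Ideal (𝓞 K)) / Y)) =
      ENNReal.ofReal (tentSum (aK K) Y / Y ^ 2) := by
  have hY0 : 0 < Y := by linarith
  rw [tsum_by_value (fun I : (Ideal (𝓞 K))⁰ => Ideal.absNorm (I : Ideal (𝓞 K)))
    (fun n : ℕ => ENNReal.ofReal (tentT (n / Y)))]
  rw [tsum_eq_sum (s := Finset.Icc 1 ⌊Y⌋₊)]
  · rw [tentSum, Finset.sum_div, ENNReal.ofReal_sum_of_nonneg]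
    · refine Finset.sum_congr rfl fun n hn => ?_
      rw [Finset.mem_Icc, Nat.le_floor_iff hY0.le] at hn
      rw [card_nonZero_absNorm K (by omega), ← ENNReal.ofReal_mul (by rw [aK]; positivity)]
      congr 1
      rw [tentT, max_eq_right (by rw [sub_nonneg, div_le_one hY0]; exact hn.2)]
      field_simp
    · intro n hn
      rw [Finset.mem_Icc, Nat.le_floor_iff hY0.le] at hn
      have : 0 ≤ aK K n := by rw [aK]; positivity
      have : 0 ≤ Y - n := by linarith [hn.2]
      positivity
  · intro n hn
    rw [Finset.mem_Icc, Nat.le_floor_iff hY0.le, not_and_or, not_le, not_le] at hn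
    have : tentT (n / Y) = 0 := by
      rw [tentT]
      rcases hn with hn | hn
      · have : n = 0 := by omega
        simp [this]
      · rw [max_eq_left, mul_zero]
        rw [sub_nonpos, one_le_div hY0]
        exact hn.le
    rw [this]
    simp

/-- The smoothed count of ideals of norm at most `x`: it is the sum over the ideal classes of
lattice sums of the cone function. -/
theorem tentSum_aK : ∃ κ C : ℝ, 0 ≤ C ∧ ∀ x : ℝ, 1 ≤ x →
    |tentSum (aK K) x - κ * x ^ 3| ≤ C * x ^ (3 - 1 / (finrank ℚ K : ℝ) : ℝ) := by
  choose J hJ using fun C : ClassGroup (𝓞 K) => ClassGroup.mk0_surjective C⁻¹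
  obtain ⟨R, hR, hS⟩ := coneFun_supp K
  obtain ⟨M, hM, hF⟩ := coneFun_lip K
  choose c C hC hb using fun D : ClassGroup (𝓞 K) =>
    lattice_sum (latt K (J D)) (coneFun K) hM hR hF hS
  set n := finrank ℚ K with hn
  have hn0 : 0 < n := finrank_pos
  have hfr : finrank ℝ (mixedSpace K) = n := mixedEmbedding.finrank K
  set NJ : ClassGroup (𝓞 K) → ℝ := fun D => Ideal.absNorm (J D : Ideal (𝓞 K)) with hNJ
  have hNJ1 : ∀ D, 1 ≤ NJ D := fun D => by
    have := Ideal.absNorm_pos_of_nonZeroDivisors (J D)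
    simp only [hNJ]
    exact_mod_cast this
  have hw : 0 < (torsionOrder K : ℝ) := by exact_mod_cast torsionOrder_pos K
  set w : ℝ := ((torsionOrder K : ℕ) : ℝ) with hwdef
  -- the ideals are sorted by class; `J D` is an ideal of the class inverse to `D`, and an ideal of
  -- norm at most `Y` corresponds to a vector of norm at most `Y N(J D) = X ^ n`
  have main : ∀ Y : ℝ, 1 ≤ Y → tentSum (aK K) Y / Y ^ 2 =
      ∑ D, w⁻¹ * ∑' α : latt K (J D),
        coneFun K (((Y * NJ D) ^ (1 / n : ℝ))⁻¹ • (α : mixedSpace K)) := by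
    intro Y hY
    have hY0 : 0 < Y := by linarith
    have hX : ∀ D, 1 ≤ (Y * NJ D) ^ (1 / n : ℝ) := fun D =>
      Real.one_le_rpow (by nlinarith [hNJ1 D]) (by positivity)
    have hXn : ∀ D, ((Y * NJ D) ^ (1 / n : ℝ)) ^ n = Y * NJ D := fun D => by
      rw [← Real.rpow_natCast, ← Real.rpow_mul (by nlinarith [hNJ1 D])]
      rw [one_div_mul_cancel (by positivity), Real.rpow_one]
    have h0 : 0 ≤ tentSum (aK K) Y / Y ^ 2 := by
      refine div_nonneg (Finset.sum_nonneg fun m hm => ?_) (by positivity)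
      rw [Finset.mem_Icc, Nat.le_floor_iff hY0.le] at hm
      have : 0 ≤ aK K m := by rw [aK]; positivity
      have : 0 ≤ Y - m := by linarith [hm.2]
      positivity
    have hpos : ∀ D, 0 ≤ ∑' α : latt K (J D),
        coneFun K (((Y * NJ D) ^ (1 / n : ℝ))⁻¹ • (α : mixedSpace K)) := fun D =>
      tsum_nonneg fun _ => coneFun_nonneg K _
    rw [← ENNReal.ofReal_eq_ofReal_iff h0
      (Finset.sum_nonneg fun D _ => mul_nonneg (by positivity) (hpos D)), ← tsum_ideals K hY,
      ← (Equiv.sigmaFiberEquiv (fun I : (Ideal (𝓞 K))⁰ => ClassGroup.mk0 I)).tsum_eq,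
      ENNReal.tsum_sigma', tsum_fintype, ENNReal.ofReal_sum_of_nonneg
      (fun D _ => mul_nonneg (by positivity) (hpos D))]
    refine Finset.sum_congr rfl fun D _ => ?_
    rw [ENNReal.ofReal_mul (by positivity), ENNReal.ofReal_tsum_of_nonneg
      (fun _ => coneFun_nonneg K _) (hb D _ (hX D)).1, tsum_coneFun K (J D) (by linarith [hX D]),
      hXn, tsum_idealSet K (J D) (fun s => ENNReal.ofReal (tentT (s / (Y * NJ D)))),
      tsum_class K (hJ D) (fun s => ENNReal.ofReal (tentT (s / (Y * NJ D)))), ← mul_assoc]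
    have : ENNReal.ofReal w⁻¹ * (torsionOrder K : ℝ≥0∞) = 1 := by
      rw [← ENNReal.ofReal_natCast, ← ENNReal.ofReal_mul (by positivity), ← hwdef,
        inv_mul_cancel₀ hw.ne', ENNReal.ofReal_one]
    rw [this, one_mul]
    refine tsum_congr fun I => ?_
    congr 2
    change _ = NJ D * _ / (Y * NJ D)
    rw [mul_comm Y, mul_div_mul_left _ _ (by linarith [hNJ1 D])]
    rfl
  refine ⟨∑ D, w⁻¹ * (c D * NJ D), ∑ D, w⁻¹ * (C D * NJ D), Finset.sum_nonneg fun D _ =>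
    mul_nonneg (by positivity) (mul_nonneg (hC D) (by linarith [hNJ1 D])), fun Y hY => ?_⟩
  have hY0 : 0 < Y := by linarith
  have hm := main Y hY
  rw [div_eq_iff (by positivity)] at hm
  rw [hm, Finset.sum_mul, Finset.sum_mul, ← Finset.sum_sub_distrib, Finset.sum_mul]
  refine (Finset.abs_sum_le_sum_abs _ _).trans (Finset.sum_le_sum fun D _ => ?_)
  have hX : 1 ≤ (Y * NJ D) ^ (1 / n : ℝ) :=
      Real.one_le_rpow (by nlinarith [hNJ1 D]) (by positivity)
  have hXn : ((Y * NJ D) ^ (1 / n : ℝ)) ^ n = Y * NJ D := by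
      rw [← Real.rpow_natCast, ← Real.rpow_mul (by nlinarith [hNJ1 D])]
      rw [one_div_mul_cancel (by positivity), Real.rpow_one]
  have hXY : Y ^ (1 / n : ℝ) ≤ (Y * NJ D) ^ (1 / n : ℝ) :=
    Real.rpow_le_rpow hY0.le (by nlinarith [hNJ1 D]) (by positivity)
  have h1 := (hb D _ hX).2
  rw [hfr, hXn] at h1
  set S := ∑' α : latt K (J D), coneFun K (((Y * NJ D) ^ (1 / n : ℝ))⁻¹ • (α : mixedSpace K))
  have h2 : w⁻¹ * S * Y ^ 2 - w⁻¹ * (c D * NJ D) * Y ^ 3 =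
      w⁻¹ * Y ^ 2 * (S - c D * (Y * NJ D)) := by ring
  rw [h2, abs_mul, abs_of_nonneg (by positivity)]
  have h3 : Y ^ (3 - 1 / n : ℝ) = Y ^ 3 / Y ^ (1 / n : ℝ) := by
    rw [Real.rpow_sub hY0]
    congr 1
    exact_mod_cast Real.rpow_natCast Y 3
  have hYn : 0 < Y ^ (1 / n : ℝ) := by positivity
  have hp : 0 ≤ C D * (Y * NJ D) := mul_nonneg (hC D) (by nlinarith [hNJ1 D])
  calc w⁻¹ * Y ^ 2 * |S - c D * (Y * NJ D)|
      ≤ w⁻¹ * Y ^ 2 * (C D * (Y * NJ D) / Y ^ (1 / n : ℝ)) := by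
        refine mul_le_mul_of_nonneg_left (h1.trans ?_) (by positivity)
        exact div_le_div_of_nonneg_left hp hYn hXY
    _ = w⁻¹ * (C D * NJ D) * Y ^ (3 - 1 / n : ℝ) := by
        rw [h3]; field_simp

/-- The prime ideal theorem with classical error term, in terms of the von Mangoldt function
of the Dedekind zeta function. -/
theorem psi_lamK : ∃ c A x₀ : ℝ, 0 < c ∧ 0 < A ∧ ∀ x : ℝ, x₀ ≤ x →
    |(∑ n ∈ Finset.Icc 1 ⌊x⌋₊, lamK K n) - x| ≤ A * x * errFn c x := by
  obtain ⟨κ, C, hC, h⟩ := tentSum_aK K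
  have hn : 1 ≤ (finrank ℚ K : ℝ) := by exact_mod_cast (finrank_pos : 0 < finrank ℚ K)
  exact (eulerLike_aK K).psi (by positivity) ((div_le_one (by linarith)).2 hn) hC h

end IdealCount

/-! ### From prime ideals to rational primes -/

section PrimeIdealTheta
open NumberField Ideal

variable (K : Type*) [Field K] [NumberField K]

/-- At most `[K : ℚ]` prime ideals contain a given rational prime. -/
lemma card_primes_above {p : ℕ} (hp : p.Prime) (T : Finset (Ideal (𝓞 K)))
    (hT : ∀ P ∈ T, P.IsPrime ∧ P ≠ ⊥ ∧ (p : 𝓞 K) ∈ P) : T.card ≤ Module.finrank ℚ K := by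
  have h1 : ∏ P ∈ T, P ∣ span {(p : 𝓞 K)} :=
    Finset.prod_primes_dvd _ (fun P hP => (prime_iff_isPrime (hT P hP).2.1).2 (hT P hP).1)
      fun P hP => by rw [dvd_span_singleton]; exact (hT P hP).2.2
  have hN : absNorm (span {(p : 𝓞 K)}) = p ^ Module.finrank ℚ K := by
    rw [absNorm_span_singleton, ← RingOfIntegers.rank K]
    have := Algebra.norm_algebraMap (R := ℤ) (S := 𝓞 K) (p : ℤ)
    simp only [map_natCast] at this
    rw [this, Int.natAbs_pow, Int.natAbs_natCast]
  have h2 : ∏ P ∈ T, absNorm P ∣ p ^ Module.finrank ℚ K := by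
    rw [← hN, ← map_prod]
    exact map_dvd absNorm h1
  have h3 : p ^ T.card ∣ ∏ P ∈ T, absNorm P := by
    rw [← Finset.prod_const]
    refine Finset.prod_dvd_prod_of_dvd _ _ fun P hP => ?_
    have h4 : absNorm P ∣ p ^ Module.finrank ℚ K := by
      rw [← hN]
      exact map_dvd absNorm ((dvd_span_singleton).2 (hT P hP).2.2)
    obtain ⟨m, -, hm⟩ := (Nat.dvd_prime_pow hp).1 h4
    have h5 := absNorm_prime_ge_two (hT P hP).1 (hT P hP).2.1
    rw [hm] at h5 ⊢
    refine dvd_pow_self p ?_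
    rintro rfl
    simp at h5
  exact (Nat.pow_dvd_pow_iff_le_right hp.one_lt).1 (h3.trans h2)

lemma lamK_le {n : ℕ} (hn : IsPrimePow n) :
    lamK K n ≤ Module.finrank ℚ K * Real.log n := by
  have hn0 : n ≠ 0 := hn.ne_zero
  have hn1 : n ≠ 1 := hn.ne_one
  set p := n.minFac with hp
  have hpp : p.Prime := Nat.minFac_prime hn1
  obtain ⟨k, hk, hpk⟩ : ∃ k, 0 < k ∧ p ^ k = n := by
    obtain ⟨q, k, hq, hk, rfl⟩ := (isPrimePow_nat_iff n).1 hn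
    refine ⟨k, hk, ?_⟩
    rw [hp, Nat.Prime.pow_minFac hq hk.ne']
  set T := (primesUpTo K n).filter fun P => (p : 𝓞 K) ∈ P with hT
  have hTc : T.card ≤ Module.finrank ℚ K := card_primes_above K hpp T fun P hP => by
    rw [hT, Finset.mem_filter, mem_primesUpTo] at hP
    exact ⟨hP.1.2.1, hP.1.2.2, hP.2⟩
  have h1 : lamK K n ≤ ∑ P ∈ T, Real.log n := by
    rw [lamK, Finset.sum_product, hT, Finset.sum_filter]
    refine Finset.sum_le_sum fun P hP => ?_
    rw [mem_primesUpTo] at hP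
    have h2 := absNorm_prime_ge_two hP.2.1 hP.2.2
    by_cases hex : ∃ j ∈ Finset.Icc 1 n, absNorm P ^ j = n
    · obtain ⟨j, hj, hjn⟩ := hex
      rw [Finset.mem_Icc] at hj
      have hmem : (p : 𝓞 K) ∈ P := by
        have h3 : absNorm P ∣ p ^ k := by
          rw [hpk, ← hjn]
          exact dvd_pow_self _ (by omega)
        obtain ⟨m, -, hm⟩ := (Nat.dvd_prime_pow hpp).1 h3
        have h4 := absNorm_mem P
        rw [hm, Nat.cast_pow] at h4
        exact hP.2.1.mem_of_pow_mem _ h4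
      rw [if_pos hmem, Finset.sum_eq_single j]
      · rw [if_pos hjn]
        have : (1 : ℝ) ≤ absNorm P := by exact_mod_cast (by omega : 1 ≤ absNorm P)
        refine Real.log_le_log (by linarith) ?_
        exact_mod_cast hP.1
      · intro i _ hij
        rw [if_neg]
        intro h
        exact hij (Nat.pow_right_injective h2 (h.trans hjn.symm))
      · intro h
        exact absurd (Finset.mem_Icc.2 hj) h
    · push Not at hex
      rw [Finset.sum_eq_zero fun j hj => by rw [if_neg (hex j hj)]]
      split_ifs
      · exact Real.log_natCast_nonneg _
      · exact le_rfl
  refine h1.trans ?_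
  rw [Finset.sum_const, nsmul_eq_mul]
  exact mul_le_mul_of_nonneg_right (by exact_mod_cast hTc) (Real.log_natCast_nonneg _)

lemma lamK_eq_zero {n : ℕ} (hn : ¬ IsPrimePow n) : lamK K n = 0 := by
  rw [lamK]
  refine Finset.sum_eq_zero fun q hq => ?_
  rw [Finset.mem_product, mem_primesUpTo, Finset.mem_Icc] at hq
  rw [if_neg]
  intro h
  have h2 := absNorm_prime_ge_two hq.1.2.1 hq.1.2.2
  have : NeZero q.1 := ⟨hq.1.2.2⟩
  have hpr := hq.1.2.1
  have hpp : (absNorm (under ℤ q.1)).Prime := Nat.absNorm_under_prime q.1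
  have hmem : ((absNorm (under ℤ q.1) : ℕ) : 𝓞 K) ∈ q.1 := by
    have := Int.absNorm_under_mem q.1
    simpa using this
  have h3 : absNorm q.1 ∣ absNorm (under ℤ q.1) ^ Module.finrank ℚ K := by
    have hN : absNorm (span {((absNorm (under ℤ q.1) : ℕ) : 𝓞 K)}) =
        absNorm (under ℤ q.1) ^ Module.finrank ℚ K := by
      rw [absNorm_span_singleton, ← RingOfIntegers.rank K]
      have := Algebra.norm_algebraMap (R := ℤ) (S := 𝓞 K) ((absNorm (under ℤ q.1) : ℕ) : ℤ)
      simp only [map_natCast] at this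
      rw [this, Int.natAbs_pow, Int.natAbs_natCast]
    rw [← hN]
    exact map_dvd absNorm ((dvd_span_singleton).2 hmem)
  obtain ⟨m, -, hm⟩ := (Nat.dvd_prime_pow hpp).1 h3
  refine hn ((isPrimePow_nat_iff n).2 ⟨_, m * q.2, hpp, ?_, by rw [pow_mul, ← hm, h]⟩)
  refine Nat.mul_pos (Nat.pos_of_ne_zero ?_) hq.2.1
  rintro rfl
  rw [hm] at h2
  simp at h2

lemma lamK_prime {p : ℕ} (hp : p.Prime) : lamK K p = aK K p * Real.log p := by
  have h1 : lamK K 1 = 0 := lamK_eq_zero K not_isPrimePow_one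
  rw [aK_conv hp.ne_zero, Nat.sum_divisorsAntidiagonal (fun i j => lamK K i * aK K j),
    hp.sum_divisors, Nat.div_self hp.pos, h1, aK_one]
  ring

lemma log_sq_le_errFn {c x : ℝ} (hc : 0 < c) (hx : Real.exp (16 * c ^ 2) ≤ x) :
    √x * Real.log x ^ 2 ≤ 32 * x * errFn c x := by
  have hx0 : 0 < x := (Real.exp_pos _).trans_le hx
  set L := Real.log x with hL
  have hL1 : 16 * c ^ 2 ≤ L := by rwa [hL, Real.le_log_iff_exp_le hx0]
  have hL0 : 0 < L := by nlinarith [sq_nonneg c, mul_pos hc hc]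
  have hxL : x = Real.exp L := (Real.exp_log hx0).symm
  have hs : √x = Real.exp (L / 2) := by rw [hxL, Real.exp_half]
  have h1 : c * √L ≤ L / 4 := by
    have h2 : 4 * c ≤ √L := Real.le_sqrt_of_sq_le (by nlinarith)
    nlinarith [Real.sq_sqrt hL0.le, Real.sqrt_nonneg L]
  have h2 : L ^ 2 ≤ 32 * Real.exp (L / 4) := by
    have := Real.quadratic_le_exp_of_nonneg (show 0 ≤ L / 4 by positivity)
    nlinarith
  have h3 : Real.exp (3 * L / 4) ≤ x * errFn c x := by
    rw [errFn, ← hL, hxL, ← Real.exp_add, Real.exp_le_exp]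
    linarith
  calc √x * L ^ 2 ≤ Real.exp (L / 2) * (32 * Real.exp (L / 4)) := by
        rw [hs]; gcongr
    _ = 32 * Real.exp (3 * L / 4) := by
        rw [mul_left_comm, ← Real.exp_add]; ring_nf
    _ ≤ 32 * x * errFn c x := by rw [mul_assoc]; gcongr

/-- The prime ideal theorem for prime ideals of degree one, weighted by `log`. -/
theorem theta_aK : ∃ c A x₀ : ℝ, 0 < c ∧ 0 < A ∧ ∀ x : ℝ, x₀ ≤ x →
    |(∑ p ∈ (Finset.Icc 1 ⌊x⌋₊).filter Nat.Prime, aK K p * Real.log p) - x|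
      ≤ A * x * errFn c x := by
  obtain ⟨c, A, x₀, hc, hA, h⟩ := psi_lamK K
  set d : ℝ := (Module.finrank ℚ K : ℝ) with hd
  have hd0 : 0 ≤ d := by positivity
  have hl2 : 0 < Real.log 2 := Real.log_pos (by norm_num)
  refine ⟨c, A + d / Real.log 2 * 64, max x₀ (max 1 (Real.exp (16 * c ^ 2))), hc, by positivity,
    fun x hx => ?_⟩
  rw [max_le_iff, max_le_iff] at hx
  obtain ⟨hx1, hx2, hx3⟩ := hx
  have hlx : 0 ≤ Real.log x := Real.log_nonneg hx2
  have hsplit : ∑ n ∈ Finset.Icc 1 ⌊x⌋₊, lamK K n =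
      (∑ p ∈ (Finset.Icc 1 ⌊x⌋₊).filter Nat.Prime, aK K p * Real.log p) +
      ∑ n ∈ (Finset.Icc 1 ⌊x⌋₊).filter (fun n => ¬ n.Prime), lamK K n := by
    rw [← Finset.sum_filter_add_sum_filter_not _ Nat.Prime]
    congr 1
    exact Finset.sum_congr rfl fun p hp => lamK_prime K (Finset.mem_filter.1 hp).2
  have hrest : ∑ n ∈ (Finset.Icc 1 ⌊x⌋₊).filter (fun n => ¬ n.Prime), lamK K n ≤
      d / Real.log 2 * Real.log x * (2 * √x * Real.log x) := by
    refine le_trans ?_ (mul_le_mul_of_nonneg_left (Chebyshev.psi_sub_theta_le hx2) (by positivity))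
    rw [Chebyshev.psi_sub_theta_eq_sum_not_prime, Finset.mul_sum]
    rw [show Finset.Icc 1 ⌊x⌋₊ = Finset.Ioc 0 ⌊x⌋₊ from Finset.Icc_succ_left_eq_Ioc _ _]
    refine Finset.sum_le_sum fun n hn => ?_
    rw [Finset.mem_filter, Finset.mem_Ioc, Nat.le_floor_iff (by linarith)] at hn
    by_cases hpp : IsPrimePow n
    · refine (lamK_le K hpp).trans ?_
      rw [ArithmeticFunction.vonMangoldt_apply, if_pos hpp]
      have h1 : Real.log 2 ≤ Real.log n.minFac :=
        Real.log_le_log (by norm_num) (by exact_mod_cast (Nat.minFac_prime hpp.ne_one).two_le)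
      have h2 : Real.log n ≤ Real.log x :=
        Real.log_le_log (by exact_mod_cast hn.1.1) hn.1.2
      calc d * Real.log n ≤ d * Real.log x := by gcongr
        _ = d / Real.log 2 * Real.log x * Real.log 2 := by field_simp
        _ ≤ _ := by gcongr
    · rw [lamK_eq_zero K hpp]
      have := ArithmeticFunction.vonMangoldt_nonneg (n := n)
      positivity
  have hrest0 : 0 ≤ ∑ n ∈ (Finset.Icc 1 ⌊x⌋₊).filter (fun n => ¬ n.Prime), lamK K n :=
    Finset.sum_nonneg fun _ _ => lamK_nonneg _
  have h1 := h x hx1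
  rw [hsplit] at h1
  have h2 : d / Real.log 2 * Real.log x * (2 * √x * Real.log x) ≤
      d / Real.log 2 * 64 * x * errFn c x := by
    have := mul_le_mul_of_nonneg_left (log_sq_le_errFn hc hx3)
      (show 0 ≤ 2 * (d / Real.log 2) by positivity)
    nlinarith
  rw [abs_le] at h1 ⊢
  have h4 : (A + d / Real.log 2 * 64) * x * errFn c x =
    A * x * errFn c x + d / Real.log 2 * 64 * x * errFn c x := by ring
  have h5 : 0 ≤ A * x * errFn c x := by have := errFn_pos c x; positivity
  constructor <;> linarith

end PrimeIdealTheta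

/-! ### Partial summation -/

section PartialSummation

/-- Abel summation against a decreasing weight. -/
lemma abel_bound (f w : ℕ → ℝ) (hw : Antitone w) {M : ℝ} (N : ℕ)
    (hM : ∀ n ≤ N, |∑ k ∈ Finset.range (n + 1), f k| ≤ M) :
    |∑ k ∈ Finset.range (N + 1), f k * w k - (∑ k ∈ Finset.range (N + 1), f k) * w N| ≤
      M * (w 0 - w N) := by
  induction N with
  | zero => simp
  | succ N ih =>
    have h1 := ih fun n hn => hM n (by omega)
    have h2 := hM N (by omega)
    set S := ∑ k ∈ Finset.range (N + 1), f k
    rw [Finset.sum_range_succ _ (N + 1), Finset.sum_range_succ f (N + 1)]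
    have h3 : |S * (w N - w (N + 1))| ≤ M * (w N - w (N + 1)) := by
      rw [abs_mul, abs_of_nonneg (sub_nonneg.2 (hw (Nat.le_succ N)))]
      exact mul_le_mul_of_nonneg_right h2 (sub_nonneg.2 (hw (Nat.le_succ N)))
    calc _ = |(∑ k ∈ Finset.range (N + 1), f k * w k - S * w N) + S * (w N - w (N + 1))| := by
          congr 1; ring
      _ ≤ _ := abs_add_le _ _
      _ ≤ M * (w 0 - w N) + M * (w N - w (N + 1)) := add_le_add h1 h3
      _ = _ := by ring

lemma mul_errFn_mono {c u x : ℝ} (hc : 0 < c) (hu : Real.exp (c ^ 2) ≤ u) (hux : u ≤ x) :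
    u * errFn c u ≤ x * errFn c x := by
  have hu0 : 0 < u := (Real.exp_pos _).trans_le hu
  have hx0 : 0 < x := hu0.trans_le hux
  have h1 : c ^ 2 ≤ Real.log u := by rwa [Real.le_log_iff_exp_le hu0]
  have h2 : Real.log u ≤ Real.log x := Real.log_le_log hu0 hux
  have h3 : c ≤ √(Real.log u) := Real.le_sqrt_of_sq_le h1
  have h4 : √(Real.log u) ≤ √(Real.log x) := Real.sqrt_le_sqrt h2
  rw [errFn, errFn]
  have h7 : ∀ y z : ℝ, 0 < y → y * Real.exp z = Real.exp (Real.log y + z) := fun y z hy => by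
    rw [Real.exp_add, Real.exp_log hy]
  rw [h7 u _ hu0, h7 x _ hx0, Real.exp_le_exp]
  have h5 := Real.sq_sqrt (show 0 ≤ Real.log u by nlinarith [sq_nonneg c])
  have h6 := Real.sq_sqrt (show 0 ≤ Real.log x by nlinarith [sq_nonneg c])
  nlinarith

/-- Partial summation: a bound for a sum over primes weighted by `log` gives one for the
unweighted sum. -/
lemma sum_primes_bound {b : ℕ → ℝ} {c A x₀ : ℝ} (hc : 0 < c) (hA : 0 ≤ A)
    (h : ∀ x : ℝ, x₀ ≤ x → |∑ p ∈ (Finset.Icc 1 ⌊x⌋₊).filter Nat.Prime, b p * Real.log p|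
      ≤ A * x * errFn c x) :
    ∃ A' x₁ : ℝ, ∀ x : ℝ, x₁ ≤ x → |∑ p ∈ (Finset.Icc 1 ⌊x⌋₊).filter Nat.Prime, b p|
      ≤ A' * x * errFn c x := by
  set f : ℕ → ℝ := fun n => if n.Prime then b n * Real.log n else 0 with hf
  set w : ℕ → ℝ := fun n => (Real.log (max n 2 : ℕ))⁻¹ with hwdef
  have hl2 : 0 < Real.log 2 := Real.log_pos (by norm_num)
  have hlog : ∀ n : ℕ, Real.log 2 ≤ Real.log (max n 2 : ℕ) := fun n =>
    Real.log_le_log (by norm_num) (by exact_mod_cast le_max_right n 2)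
  have hw : Antitone w := by
    intro m n hmn
    refine inv_anti₀ (hl2.trans_le (hlog m)) (Real.log_le_log ?_ ?_)
    · exact_mod_cast (by omega : 0 < max m 2)
    · exact_mod_cast max_le_max_right 2 hmn
  have hw0 : ∀ n, 0 ≤ w n := fun n => by
    have := hl2.trans_le (hlog n)
    positivity
  have hrange : ∀ (n : ℕ) (F : ℕ → ℝ), ∑ p ∈ (Finset.Icc 1 n).filter Nat.Prime, F p =
      ∑ k ∈ Finset.range (n + 1), if k.Prime then F k else 0 := fun n F => by
    rw [← Finset.sum_filter]
    refine Finset.sum_congr (Finset.ext fun k => ?_) fun _ _ => rfl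
    simp only [Finset.mem_filter, Finset.mem_Icc, Finset.mem_range]
    refine ⟨fun hk => ⟨by omega, hk.2⟩, fun hk => ⟨⟨hk.2.one_le, by omega⟩, hk.2⟩⟩
  set x₂ : ℝ := max x₀ (Real.exp (c ^ 2)) with hx2
  set C₀ : ℝ := ∑ n ∈ Finset.range (⌊x₂⌋₊ + 1), |∑ k ∈ Finset.range (n + 1), f k| with hC0
  have hC00 : 0 ≤ C₀ := Finset.sum_nonneg fun _ _ => abs_nonneg _
  refine ⟨(C₀ + A) * (2 * w 0), x₂, fun x hx => ?_⟩
  have hx3 : Real.exp (c ^ 2) ≤ x := (le_max_right _ _).trans hx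
  have hx0 : 0 < x := (Real.exp_pos _).trans_le hx3
  have hone := one_le_mul_errFn hx3
  have hE : 0 < errFn c x := errFn_pos c x
  set M := (C₀ + A) * (x * errFn c x) with hMdef
  have hM0 : 0 ≤ M := by positivity
  have hM : ∀ n ≤ ⌊x⌋₊, |∑ k ∈ Finset.range (n + 1), f k| ≤ M := by
    intro n hn
    rw [Nat.le_floor_iff hx0.le] at hn
    rcases lt_or_ge ⌊x₂⌋₊ n with hn2 | hn2
    · have hn3 : x₂ ≤ n := (Nat.lt_of_floor_lt hn2).le
      have h1 := h n ((le_max_left _ _).trans hn3)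
      rw [Nat.floor_natCast, hrange] at h1
      refine h1.trans ?_
      have h2 := mul_errFn_mono hc ((le_max_right _ _).trans hn3) hn
      rw [mul_assoc]
      nlinarith [mul_nonneg hC00 (zero_le_one.trans hone), mul_le_mul_of_nonneg_left h2 hA]
    · have h1 : |∑ k ∈ Finset.range (n + 1), f k| ≤ C₀ :=
        Finset.single_le_sum (f := fun n => |∑ k ∈ Finset.range (n + 1), f k|)
          (fun _ _ => abs_nonneg _) (Finset.mem_range.2 (by omega))
      nlinarith [mul_le_mul_of_nonneg_left hone hC00, mul_nonneg hA (zero_le_one.trans hone)]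
  have h1 := abel_bound f w hw ⌊x⌋₊ hM
  have h2 : ∑ p ∈ (Finset.Icc 1 ⌊x⌋₊).filter Nat.Prime, b p =
      ∑ k ∈ Finset.range (⌊x⌋₊ + 1), f k * w k := by
    rw [hrange]
    refine Finset.sum_congr rfl fun k _ => ?_
    simp only [hf, hwdef]
    split_ifs with hk
    · rw [max_eq_left hk.two_le, mul_inv_cancel_right₀]
      exact (Real.log_pos (by exact_mod_cast hk.one_lt)).ne'
    · simp
  rw [h2]
  have h3 : |(∑ k ∈ Finset.range (⌊x⌋₊ + 1), f k) * w ⌊x⌋₊| ≤ M * w 0 := by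
    rw [abs_mul, abs_of_nonneg (hw0 _)]
    exact mul_le_mul (hM _ le_rfl) (hw (Nat.zero_le _)) (hw0 _) hM0
  have h4 : M * (w 0 - w ⌊x⌋₊) ≤ M * w 0 :=
    mul_le_mul_of_nonneg_left (by linarith [hw0 ⌊x⌋₊]) hM0
  have h5 : (C₀ + A) * (2 * w 0) * x * errFn c x = M * w 0 + M * w 0 := by rw [hMdef]; ring
  rw [h5]
  rw [abs_le] at h1 h3 ⊢
  constructor <;> linarith

/-- Two number fields have equally many degree-one prime ideals, up to the classical error. -/
theorem aK_sub_aK (K L : Type) [Field K] [NumberField K] [Field L] [NumberField L] :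
    ∃ c A x₀ : ℝ, 0 < c ∧ ∀ x : ℝ, x₀ ≤ x →
      |∑ p ∈ (Finset.Icc 1 ⌊x⌋₊).filter Nat.Prime, (aK K p - aK L p)| ≤ A * x * errFn c x := by
  obtain ⟨c, A, x₀, hc, hA, h⟩ := theta_aK K
  obtain ⟨c', A', x₀', hc', hA', h'⟩ := theta_aK L
  obtain ⟨B, x₁, hB⟩ := sum_primes_bound (b := fun p => aK K p - aK L p) (c := min c c')
    (A := A + A') (x₀ := max (max x₀ x₀') 0) (lt_min hc hc') (by positivity) (fun x hx => by
      rw [max_le_iff, max_le_iff] at hx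
      have h1 := h x hx.1.1
      have h2 := h' x hx.1.2
      have hm : ∀ c'' : ℝ, min c c' ≤ c'' → errFn c'' x ≤ errFn (min c c') x := fun c'' hc'' => by
        rw [errFn, errFn, Real.exp_le_exp]
        have := Real.sqrt_nonneg (Real.log x)
        nlinarith
      have h3 := mul_le_mul_of_nonneg_left (hm c (min_le_left _ _)) (mul_nonneg hA.le hx.2)
      have h4 := mul_le_mul_of_nonneg_left (hm c' (min_le_right _ _)) (mul_nonneg hA'.le hx.2)
      simp only [sub_mul, Finset.sum_sub_distrib]
      rw [add_mul, add_mul]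
      rw [abs_le] at h1 h2 ⊢
      constructor <;> linarith)
  exact ⟨_, B, x₁, lt_min hc hc', hB⟩

end PartialSummation

/-! ### Ideals of prime norm -/

section SplitCount
open NumberField Ideal

variable (K : Type*) [Field K] [NumberField K]

/-- Norm-`p` ideals are exactly the primes above `p` when every prime above `p` has degree one,
and without ramification there are `[K : ℚ]` of them by the fundamental identity `∑ e f = n`. -/
lemma aK_eq_finrank {p : ℕ} (hp : p.Prime) (hd : ¬ (p : ℤ) ∣ discr K)
    (hP : ∀ P : Ideal (𝓞 K), P.IsPrime → (p : 𝓞 K) ∈ P → absNorm P = p) :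
    aK K p = Module.finrank ℚ K := by
  have hpZ : Prime (p : ℤ) := Nat.prime_iff_prime_int.1 hp
  have hspan : (span {(p : ℤ)}).IsPrime := (span_singleton_prime hpZ.ne_zero).2 hpZ
  have hne : span {(p : ℤ)} ≠ ⊥ := by simpa using hpZ.ne_zero
  have hmax : (span {(p : ℤ)}).IsMaximal := hspan.isMaximal hne
  have hunr := (not_dvd_discr_iff_forall_mem K (𝓞 K) hpZ).1 hd
  have hset : {I : Ideal (𝓞 K) | absNorm I = p} = (span {(p : ℤ)}).primesOver (𝓞 K) := by
    ext I
    rw [Set.mem_ofPred_eq]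
    constructor
    · intro hI
      have hIp : I.IsPrime := isPrime_of_irreducible_absNorm (by rw [hI]; exact hp)
      refine ⟨hIp, (liesOver_span_iff hIp.ne_top hpZ).2 ?_⟩
      have := absNorm_mem I
      rw [hI] at this
      simpa using this
    · rintro ⟨hIp, hIl⟩
      refine hP I hIp ?_
      have := (liesOver_span_iff hIp.ne_top hpZ).1 hIl
      simpa using this
  have hfin : ((span {(p : ℤ)}).primesOver (𝓞 K)).Finite := IsDedekindDomain.primesOver_finite _ _
  haveI : Fintype ((span {(p : ℤ)}).primesOver (𝓞 K)) := hfin.fintype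
  have hsum := sum_ramification_inertia_eq_finrank (span {(p : ℤ)}) (𝓞 K)
  rw [RingOfIntegers.rank K] at hsum
  have hone : ∀ q : (span {(p : ℤ)}).primesOver (𝓞 K),
      q.1.ramificationIdx ℤ * q.1.inertiaDeg ℤ = 1 := by
    rintro ⟨q, hq, hl⟩
    have hmem : ((p : ℤ) : 𝓞 K) ∈ q := by
      have := (liesOver_span_iff hq.ne_top hpZ).1 hl
      simpa using this
    haveI := hunr q hq hmem
    have h1 := ramificationIdx_eq_one q (R := ℤ)
    have h2 := natAbs_pow_inertiaDeg (p : ℤ) q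
    rw [hP q hq (by simpa using hmem), Int.natAbs_natCast] at h2
    have h3 : q.inertiaDeg ℤ = 1 := Nat.pow_right_injective hp.two_le (by simpa using h2)
    simp [h1, h3]
  rw [Finset.sum_congr rfl fun q _ => hone q] at hsum
  rw [aK, ← hsum]
  simp only [Finset.sum_const, Finset.card_univ, smul_eq_mul, mul_one]
  rw [← Nat.card_eq_fintype_card]
  have : Nat.card {I : Ideal (𝓞 K) // absNorm I = p} =
      Nat.card {I : Ideal (𝓞 K) | absNorm I = p} := rfl
  rw [this, hset]

end SplitCount

/-! ### Splitting of primes in Kummer extensions -/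

section Splitting
open NumberField Ideal

/-- `p ≡ 1 (mod t)` and `g` is a `k`-th power modulo `p`. -/
def PowRes (g : ℚ) (t k p : ℕ) : Prop :=
  p ≡ 1 [MOD t] ∧ ∃ y : ZMod p, (g.den : ZMod p) * y ^ k = (g.num : ZMod p)

variable (K : Type*) [Field K] [NumberField K]

/-- If `s ⊆ 𝓞 K` generates `K` over `ℚ`, the order `ℤ[s]` has finite index in `𝓞 K`. -/
lemma exists_mul_mem_adjoin (s : Set (𝓞 K))
    (hs : Algebra.adjoin ℚ ((algebraMap (𝓞 K) K) '' s) = ⊤) :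
    ∃ m : ℕ, m ≠ 0 ∧ ∀ x : 𝓞 K, (m : 𝓞 K) * x ∈ Algebra.adjoin ℤ s := by
  have key : ∀ x : K, ∃ m : ℕ, m ≠ 0 ∧ ∃ y ∈ Algebra.adjoin ℤ s,
      algebraMap (𝓞 K) K y = m * x := by
    intro x
    have hx : x ∈ Algebra.adjoin ℚ ((algebraMap (𝓞 K) K) '' s) := by rw [hs]; trivial
    induction hx using Algebra.adjoin_induction with
    | mem x hx =>
      obtain ⟨y, hy, rfl⟩ := hx
      exact ⟨1, one_ne_zero, y, Algebra.subset_adjoin hy, by simp⟩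
    | algebraMap r =>
      refine ⟨r.den, r.den_nz, (r.num : 𝓞 K), intCast_mem _ _, ?_⟩
      have : (r.den : ℚ) * r = r.num := Rat.den_mul_eq_num r
      have h2 := congrArg (algebraMap ℚ K) this
      simp only [map_mul, map_natCast, map_intCast] at h2
      rw [map_intCast, h2]
    | add x y _ _ hx hy =>
      obtain ⟨m, hm, u, hu, hu'⟩ := hx
      obtain ⟨n, hn, v, hv, hv'⟩ := hy
      refine ⟨m * n, mul_ne_zero hm hn, (n : 𝓞 K) * u + m * v,
        add_mem (mul_mem (natCast_mem _ _) hu) (mul_mem (natCast_mem _ _) hv), ?_⟩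
      simp only [map_add, map_mul, map_natCast, hu', hv']
      push_cast
      ring
    | mul x y _ _ hx hy =>
      obtain ⟨m, hm, u, hu, hu'⟩ := hx
      obtain ⟨n, hn, v, hv, hv'⟩ := hy
      refine ⟨m * n, mul_ne_zero hm hn, u * v, mul_mem hu hv, ?_⟩
      simp only [map_mul, hu', hv']
      push_cast
      ring
  have key' : ∀ x : 𝓞 K, ∃ m : ℕ, m ≠ 0 ∧ (m : 𝓞 K) * x ∈ Algebra.adjoin ℤ s := by
    intro x
    obtain ⟨m, hm, y, hy, h⟩ := key (algebraMap (𝓞 K) K x)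
    refine ⟨m, hm, ?_⟩
    have : (m : 𝓞 K) * x = y := by
      apply RingOfIntegers.coe_injective
      rw [h]; simp
    rwa [this]
  choose m hm hmem using key'
  obtain ⟨S, hS⟩ := (inferInstance : Module.Finite ℤ (𝓞 K)).fg_top
  refine ⟨∏ i ∈ S, m i, Finset.prod_ne_zero_iff.2 fun i _ => hm i, fun x => ?_⟩
  have hx : x ∈ Submodule.span ℤ (S : Set (𝓞 K)) := by rw [hS]; trivial
  induction hx using Submodule.span_induction with
  | mem x hx =>
    rw [← Finset.prod_erase_mul S m (Finset.mem_coe.1 hx)]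
    push_cast
    rw [mul_assoc]
    refine mul_mem ?_ (hmem x)
    exact prod_mem fun i _ => natCast_mem _ _
  | zero => simp
  | add x y _ _ hx hy => rw [mul_add]; exact add_mem hx hy
  | smul a x _ hx => rw [mul_smul_comm]; exact Subalgebra.smul_mem _ hx a

variable {K}

lemma mem_of_absNorm_eq {p : ℕ} {P : Ideal (𝓞 K)} (h : absNorm P = p) : (p : 𝓞 K) ∈ P := by
  have := absNorm_mem P
  rwa [h] at this

/-- The Frobenius congruence `x ^ p ≡ x` propagates from `ℤ[ζ, b]` to `𝓞 K` away from the index,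
so that all residue fields above `p` are prime fields. -/
lemma absNorm_eq_of_pow {s : Set (𝓞 K)} {m p : ℕ} (hp : p.Prime) (hmp : ¬ p ∣ m)
    (hm : ∀ x : 𝓞 K, (m : 𝓞 K) * x ∈ Algebra.adjoin ℤ s)
    {P : Ideal (𝓞 K)} (hP : P.IsPrime) (hpP : (p : 𝓞 K) ∈ P)
    (hs : ∀ x ∈ s, (Ideal.Quotient.mk P x) ^ p = Ideal.Quotient.mk P x) :
    absNorm P = p := by
  have hP0 : P ≠ ⊥ := by
    rintro rfl
    exact hp.ne_zero (by simpa using hpP)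
  have hmax : P.IsMaximal := hP.isMaximal hP0
  letI := Ideal.Quotient.field P
  have : Fact p.Prime := ⟨hp⟩
  have hfin : Finite (𝓞 K ⧸ P) := Ideal.finiteQuotientOfFreeOfNeBot P hP0
  have := Fintype.ofFinite (𝓞 K ⧸ P)
  have hp0 : (p : 𝓞 K ⧸ P) = 0 := by
    rw [← map_natCast (Ideal.Quotient.mk P)]
    exact Ideal.Quotient.eq_zero_iff_mem.2 hpP
  have hchar : CharP (𝓞 K ⧸ P) p := (CharP.charP_iff_prime_eq_zero hp).2 hp0
  have hS : ∀ x ∈ Algebra.adjoin ℤ s,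
      (Ideal.Quotient.mk P x) ^ p = Ideal.Quotient.mk P x := by
    intro x hx
    induction hx using Algebra.adjoin_induction with
    | mem x hx => exact hs x hx
    | algebraMap r =>
      have : (Ideal.Quotient.mk P) (algebraMap ℤ (𝓞 K) r) = (r : 𝓞 K ⧸ P) := by simp
      rw [this, ← frobenius_def, map_intCast]
    | add x y _ _ hx hy => rw [map_add, add_pow_char, hx, hy]
    | mul x y _ _ hx hy => rw [map_mul, mul_pow, hx, hy]
  have hall : ∀ z : 𝓞 K ⧸ P, z ^ p = z := by
    intro z
    obtain ⟨x, rfl⟩ := Ideal.Quotient.mk_surjective z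
    have h1 := hS _ (hm x)
    have hm0 : (m : 𝓞 K ⧸ P) ≠ 0 := by rwa [Ne, CharP.cast_eq_zero_iff _ p]
    rw [map_mul, mul_pow, map_natCast, ← frobenius_def p (m : 𝓞 K ⧸ P), map_natCast] at h1
    exact mul_left_cancel₀ hm0 h1
  have hcard : absNorm P = Fintype.card (𝓞 K ⧸ P) := by
    rw [absNorm_apply, Submodule.cardQuot_apply, Nat.card_eq_fintype_card]
  rw [hcard]
  -- all elements of `𝓞 K ⧸ P` are roots of `X ^ p - X`
  apply le_antisymm
  · have hdeg : (X ^ p - X : (𝓞 K ⧸ P)[X]).natDegree = p :=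
      FiniteField.X_pow_card_sub_X_natDegree_eq _ hp.one_lt
    have hne : (X ^ p - X : (𝓞 K ⧸ P)[X]) ≠ 0 :=
      FiniteField.X_pow_card_sub_X_ne_zero _ hp.one_lt
    rw [← hdeg]
    refine le_trans ?_ (card_roots' _)
    refine le_trans ?_ (Multiset.toFinset_card_le _)
    rw [← Finset.card_univ]
    refine Finset.card_le_card fun z _ => ?_
    rw [Multiset.mem_toFinset, mem_roots hne]
    simp [hall z]
  · have := Fintype.card_le_of_injective (ZMod.castHom dvd_rfl (𝓞 K ⧸ P))
      (RingHom.injective _)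
    rwa [ZMod.card] at this

/-- Away from finitely many primes, the field `ℚ(ζ_t, g ^ (1/k))` has `[K : ℚ]` primes of norm `p`
or none, according to whether `p ≡ 1 (mod t)` and `g` is a `k`-th power modulo `p`, or not. -/
theorem aK_kummer {g : ℚ} (hg : g ≠ 0) {t k : ℕ} (ht : t ≠ 0) (hk : k ∣ t) {ζ b : K}
    (hζ : IsPrimitiveRoot ζ t) (hb : b ^ k = algebraMap ℚ K g)
    (htop : Algebra.adjoin ℚ {ζ, b} = ⊤) :
    ∃ N : ℕ, N ≠ 0 ∧ ∀ p : ℕ, p.Prime → ¬ p ∣ N →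
      aK K p = if PowRes g t k p then (Module.finrank ℚ K : ℝ) else 0 := by
  have hk0 : k ≠ 0 := by rintro rfl; exact ht (zero_dvd_iff.1 hk)
  have hgK : (g.den : K) * algebraMap ℚ K g = g.num := by
    have h2 := congrArg (algebraMap ℚ K) (Rat.den_mul_eq_num g)
    simpa only [map_mul, map_natCast, map_intCast] using h2
  -- `b` is rescaled by the denominator of `g` to make it integral
  have hb' : ((g.den : K) * b) ^ k = (((g.den : ℤ) ^ (k - 1) * g.num : ℤ) : K) := by
    obtain ⟨j, rfl⟩ := Nat.exists_eq_succ_of_ne_zero hk0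
    rw [mul_pow, hb, pow_succ]
    push_cast
    rw [mul_assoc, hgK]
  have hint : IsIntegral ℤ ((g.den : K) * b) := by
    refine IsIntegral.of_pow (Nat.pos_of_ne_zero hk0) ?_
    rw [hb']
    exact isIntegral_algebraMap (R := ℤ) (x := (g.den : ℤ) ^ (k - 1) * g.num)
  obtain ⟨β, hβ⟩ : ∃ β : 𝓞 K, algebraMap (𝓞 K) K β = (g.den : K) * b := ⟨⟨_, hint⟩, rfl⟩
  obtain ⟨z, hz⟩ : ∃ z : 𝓞 K, algebraMap (𝓞 K) K z = ζ :=
    ⟨⟨ζ, hζ.isIntegral (Nat.pos_of_ne_zero ht)⟩, rfl⟩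
  have hinj : Function.Injective (algebraMap (𝓞 K) K) := RingOfIntegers.coe_injective
  have hzp : IsPrimitiveRoot z t := by
    refine IsPrimitiveRoot.of_map_of_injective (f := algebraMap (𝓞 K) K) ?_ hinj
    rwa [hz]
  have hβk : β ^ k = (g.den : 𝓞 K) ^ (k - 1) * (g.num : 𝓞 K) := by
    apply hinj
    rw [map_pow, hβ, hb']
    simp
  have htop' : Algebra.adjoin ℚ ((algebraMap (𝓞 K) K) '' {z, β}) = ⊤ := by
    rw [eq_top_iff, ← htop]
    refine Algebra.adjoin_le ?_
    rintro x (rfl | rfl)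
    · exact Algebra.subset_adjoin ⟨z, by simp, hz⟩
    · have h1 : (g.den : K) * x ∈ Algebra.adjoin ℚ ((algebraMap (𝓞 K) K) '' {z, β}) :=
        Algebra.subset_adjoin ⟨β, by simp, hβ⟩
      have h2 := Subalgebra.smul_mem _ h1 ((g.den : ℚ)⁻¹)
      have h3 : ((g.den : ℚ)⁻¹) • ((g.den : K) * x) = x := by
        rw [Algebra.smul_def, map_inv₀, map_natCast, ← mul_assoc,
          inv_mul_cancel₀ (Nat.cast_ne_zero.2 g.den_nz), one_mul]
      rwa [h3] at h2
  obtain ⟨m, hm, hmem⟩ := exists_mul_mem_adjoin K {z, β} htop'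
  have hdisc : (discr K).natAbs ≠ 0 := Int.natAbs_ne_zero.2 (discr_ne_zero K)
  have hnum : g.num.natAbs ≠ 0 := Int.natAbs_ne_zero.2 (Rat.num_ne_zero.2 hg)
  refine ⟨m * (discr K).natAbs * t * g.num.natAbs * g.den, by
    simp only [ne_eq, mul_eq_zero, not_or]
    exact ⟨⟨⟨⟨hm, hdisc⟩, ht⟩, hnum⟩, g.den_nz⟩, fun p hp hN => ?_⟩
  simp only [hp.dvd_mul, not_or] at hN
  obtain ⟨⟨⟨⟨hpm, hpd⟩, hpt⟩, hpn⟩, hpden⟩ := hN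
  have : Fact p.Prime := ⟨hp⟩
  have hden0 : (g.den : ZMod p) ≠ 0 := by rwa [Ne, CharP.cast_eq_zero_iff _ p]
  have hnum0 : (g.num : ZMod p) ≠ 0 := by
    rwa [Ne, ZMod.intCast_zmod_eq_zero_iff_dvd, Int.natCast_dvd]
  split_ifs with hcond
  · obtain ⟨hp1, y, hy⟩ := hcond
    refine aK_eq_finrank K hp (by rwa [Int.natCast_dvd]) fun P hP hpP => ?_
    refine absNorm_eq_of_pow hp hpm hmem hP hpP ?_
    have hp0 : (p : 𝓞 K ⧸ P) = 0 := by
      rw [← map_natCast (Ideal.Quotient.mk P)]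
      exact Ideal.Quotient.eq_zero_iff_mem.2 hpP
    have hnt : Nontrivial (𝓞 K ⧸ P) := Ideal.Quotient.nontrivial_iff.2 hP.ne_top
    have hchar : CharP (𝓞 K ⧸ P) p := (CharP.charP_iff_prime_eq_zero hp).2 hp0
    have htp : t ∣ p - 1 := (Nat.modEq_iff_dvd' hp.one_lt.le).1 hp1.symm
    -- modulo `P`, `z` is a `t`-th root of unity and `β ^ k` is the `k`-th power of an element of
    -- `𝔽_p^*`; as `k ∣ t ∣ p - 1`, both generators satisfy `x ^ (p - 1) = 1`
    suffices h : ∀ x ∈ ({z, β} : Set (𝓞 K)), (Ideal.Quotient.mk P x) ^ (p - 1) = 1 by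
      intro x hx
      have h1 := h x hx
      calc (Ideal.Quotient.mk P x) ^ p = (Ideal.Quotient.mk P x) ^ (p - 1 + 1) := by
            rw [Nat.sub_add_cancel hp.one_lt.le]
        _ = _ := by rw [pow_succ, h1, one_mul]
    rintro x (rfl | rfl)
    · obtain ⟨q, hq⟩ := htp
      rw [hq, pow_mul, ← map_pow, hzp.pow_eq_one, map_one, one_pow]
    · obtain ⟨q, hq⟩ := hk.trans htp
      set φ := ZMod.castHom (dvd_refl p) (𝓞 K ⧸ P)
      have h1 : (Ideal.Quotient.mk P x) ^ k = φ ((g.den : ZMod p) * y) ^ k := by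
        obtain ⟨j, rfl⟩ := Nat.exists_eq_succ_of_ne_zero hk0
        rw [← map_pow, hβk, ← map_pow φ, mul_pow, pow_succ, mul_assoc, hy]
        simp
      have hy0 : (g.den : ZMod p) * y ≠ 0 := by
        refine mul_ne_zero hden0 ?_
        rintro rfl
        rw [zero_pow hk0, mul_zero] at hy
        exact hnum0 hy.symm
      rw [hq, pow_mul, h1, ← pow_mul, ← hq, ← map_pow, ZMod.pow_card_sub_one_eq_one hy0, map_one]
  · rw [aK, Nat.cast_eq_zero, Nat.card_eq_zero]
    left
    refine ⟨fun ⟨P, hPn⟩ => hcond ?_⟩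
    -- an ideal of norm `p` gives a homomorphism `𝓞 K → 𝔽_p`; the image of `z` has order `t`, and the
    -- image of `β` yields a `k`-th root of `g`
    have hP : P.IsPrime := isPrime_of_irreducible_absNorm (by rw [hPn]; exact hp)
    have hpP := mem_of_absNorm_eq hPn
    have hP0 : P ≠ ⊥ := by
      rintro rfl
      exact hp.ne_zero (by simpa using hpP)
    have hfin : Finite (𝓞 K ⧸ P) := Ideal.finiteQuotientOfFreeOfNeBot P hP0
    have := Fintype.ofFinite (𝓞 K ⧸ P)
    have hcard : Fintype.card (𝓞 K ⧸ P) = p := by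
      rw [← hPn, absNorm_apply, Submodule.cardQuot_apply, Nat.card_eq_fintype_card]
    let e := (ZMod.ringEquivOfPrime (𝓞 K ⧸ P) hp hcard).symm
    let f : 𝓞 K →+* ZMod p := (e : (𝓞 K ⧸ P) →+* ZMod p).comp (Ideal.Quotient.mk P)
    have ht0 : (t : ZMod p) ≠ 0 := by rwa [Ne, CharP.cast_eq_zero_iff _ p]
    have : NeZero (t : ZMod p) := ⟨ht0⟩
    have hprim : IsPrimitiveRoot (f z) t := by
      rw [← isRoot_cyclotomic_iff, ← map_cyclotomic t f]
      exact (hzp.isRoot_cyclotomic (Nat.pos_of_ne_zero ht)).map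
    unfold PowRes
    constructor
    · have h1 : orderOf (f z) ∣ p - 1 :=
        ZMod.orderOf_dvd_card_sub_one (hprim.ne_zero ht)
      rw [← hprim.eq_orderOf] at h1
      exact ((Nat.modEq_iff_dvd' hp.one_lt.le).2 h1).symm
    · refine ⟨f β / g.den, ?_⟩
      have h1 := congrArg f hβk
      obtain ⟨j, rfl⟩ := Nat.exists_eq_succ_of_ne_zero hk0
      simp only [map_pow, map_mul, map_natCast, map_intCast, Nat.succ_sub_one] at h1
      rw [div_pow, h1]
      field_simp
      exact (pow_succ' _ _).symm

end Splitting

/-! ### Degrees of Kummer extensions -/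

section KummerDegree

/-- A rational number that is not a perfect power has only the obvious roots of its powers. -/
lemma dvd_of_pow_eq_pow {q g₀ : ℚ} (hq : 0 < q) (hg : 0 < g₀)
    (hpow : ¬ ∃ (r : ℚ) (k : ℕ), 2 ≤ k ∧ r ^ k = g₀) {m n : ℕ} (hm : m ≠ 0)
    (h : q ^ m = g₀ ^ n) : m ∣ n := by
  have hd : 0 < Nat.gcd m n := Nat.gcd_pos_of_pos_left _ (Nat.pos_of_ne_zero hm)
  obtain ⟨m', n', hcop, hm', hn'⟩ := Nat.exists_coprime m n
  set d := Nat.gcd m n with hdd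
  have h1 : q ^ m' = g₀ ^ n' := by
    refine (pow_left_inj₀ (by positivity) (by positivity) hd.ne').1 ?_
    rw [← pow_mul, ← pow_mul, ← hm', ← hn', h]
  have h2 : m' = 1 := by
    by_contra hne
    have hm0 : m' ≠ 0 := by
      rintro rfl
      simp at hm'
      exact hm hm'
    refine hpow ⟨g₀ ^ (Nat.gcdA m' n') * q ^ (Nat.gcdB m' n'), m', by omega, ?_⟩
    have h3 := Nat.gcd_eq_gcd_ab m' n'
    rw [hcop.gcd_eq_one] at h3
    push_cast at h3
    rw [mul_pow, ← zpow_natCast, ← zpow_natCast, ← zpow_mul, ← zpow_mul,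
      mul_comm (Nat.gcdB m' n'), zpow_mul q, zpow_natCast q, h1, ← zpow_natCast, ← zpow_mul,
      ← zpow_add₀ hg.ne', mul_comm (Nat.gcdA m' n'), ← h3, zpow_one]
  rw [h2, one_mul] at hm'
  rw [hm']
  exact Nat.gcd_dvd_right _ _

lemma natDegree_minpoly_le {E : IntermediateField ℚ ℂ} {x : ℂ} {n : ℕ} (hn : n ≠ 0)
    (hx : x ^ n ∈ E) : (minpoly E x).natDegree ≤ n := by
  have h := minpoly.dvd E x (p := X ^ n - C (⟨x ^ n, hx⟩ : E)) (by
    simp only [map_sub, map_pow, aeval_X, aeval_C]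
    exact sub_self _)
  have h2 := natDegree_le_of_dvd h (X_pow_sub_C_ne_zero (Nat.pos_of_ne_zero hn) _)
  rwa [natDegree_X_pow_sub_C] at h2

/-- If `E` contains the `t`-th roots of unity and `β ^ t ∈ E`, then `β ^ [E(β) : E] ∈ E`: the norm
of `β` is this power of `β` up to a root of unity. -/
lemma pow_natDegree_minpoly_mem {E : IntermediateField ℚ ℂ} {ζ β : ℂ} {t : ℕ} (ht : t ≠ 0)
    (hζ : IsPrimitiveRoot ζ t) (hζE : ζ ∈ E) (hβ0 : β ≠ 0) (hβ : β ^ t ∈ E) :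
    β ^ (minpoly E β).natDegree ∈ E := by
  have hint : IsIntegral E β := by
    refine IsIntegral.of_pow (Nat.pos_of_ne_zero ht) ?_
    exact isIntegral_algebraMap (R := E) (x := (⟨β ^ t, hβ⟩ : E))
  set M := (minpoly E β).map (algebraMap E ℂ) with hM
  have hMm : M.Monic := (minpoly.monic hint).map _
  have hsplit : M.Splits := IsAlgClosed.splits M
  have hdeg : M.natDegree = (minpoly E β).natDegree := natDegree_map _
  have hdvd : minpoly E β ∣ X ^ t - C (⟨β ^ t, hβ⟩ : E) := minpoly.dvd E β (by
    simp only [map_sub, map_pow, aeval_X, aeval_C]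
    exact sub_self _)
  -- the conjugates of `β` are of the form `β ζ ^ i`
  have hroots : ∀ r ∈ M.roots, ∃ ω ∈ E, ω ≠ 0 ∧ r = β * ω := by
    intro r hr
    have h1 : M.eval r = 0 := (mem_roots'.1 hr).2
    have h2 : r ^ t = β ^ t := by
      obtain ⟨Q, hQ⟩ := hdvd
      have h3 := congrArg (aeval r) hQ
      rw [map_mul, aeval_def r (minpoly E β), ← eval_map, ← hM, h1, zero_mul] at h3
      simp only [map_sub, map_pow, aeval_X, aeval_C] at h3
      exact sub_eq_zero.1 h3
    have h4 : (r / β) ^ t = 1 := by rw [div_pow, h2, div_self (pow_ne_zero _ hβ0)]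
    have : NeZero t := ⟨ht⟩
    obtain ⟨i, -, hi⟩ := hζ.eq_pow_of_pow_eq_one h4
    refine ⟨ζ ^ i, pow_mem hζE i, pow_ne_zero _ (hζ.ne_zero ht), ?_⟩
    rw [hi]
    field_simp
  have hprod : ∀ s : Multiset ℂ, (∀ r ∈ s, ∃ ω ∈ E, ω ≠ 0 ∧ r = β * ω) →
      ∃ ω ∈ E, ω ≠ 0 ∧ s.prod = β ^ (Multiset.card s) * ω := by
    intro s
    induction s using Multiset.induction_on with
    | empty => exact fun _ => ⟨1, one_mem _, one_ne_zero, by simp⟩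
    | cons a s ih =>
      intro hs
      obtain ⟨ω, hω, hω0, h⟩ := ih fun r hr => hs r (Multiset.mem_cons_of_mem hr)
      obtain ⟨ω', hω', hω0', h'⟩ := hs a (Multiset.mem_cons_self _ _)
      refine ⟨ω' * ω, mul_mem hω' hω, mul_ne_zero hω0' hω0, ?_⟩
      rw [Multiset.prod_cons, Multiset.card_cons, h, h']
      ring
  obtain ⟨ω, hω, hω0, h⟩ := hprod _ hroots
  have hc := hsplit.coeff_zero_eq_prod_roots_of_monic hMm
  rw [h, ← hsplit.natDegree_eq_card_roots, hdeg] at hc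
  have hcE : M.coeff 0 ∈ E := by
    rw [hM, coeff_map]
    exact ((minpoly E β).coeff 0).2
  have h5 : β ^ (minpoly E β).natDegree =
      (-1) ^ (minpoly E β).natDegree * M.coeff 0 * ω⁻¹ := by
    rw [hc, ← mul_assoc, ← mul_assoc, ← mul_pow]
    field_simp
    simp
  rw [h5]
  exact mul_mem (mul_mem (pow_mem (neg_mem (one_mem _)) _) hcE) (inv_mem hω)

/-- An element of `ℚ(ζ)` one of whose powers is rational has rational squared absolute value: the
Galois group of `ℚ(ζ)` commutes with complex conjugation, so all conjugates of the squared
absolute value coincide. -/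
lemma exists_rat_norm_sq {ζ γ : ℂ} {t m : ℕ} (ht : t ≠ 0) (hζ : IsPrimitiveRoot ζ t)
    (hγ : γ ∈ IntermediateField.adjoin ℚ {ζ}) (hm : m ≠ 0) {g : ℚ} (hg : γ ^ m = g) :
    ∃ q : ℚ, (q : ℝ) = ‖γ‖ ^ 2 := by
  set E := IntermediateField.adjoin ℚ {ζ} with hE
  have hint : IsIntegral ℚ ζ := (hζ.isIntegral (Nat.pos_of_ne_zero ht)).tower_top
  have hfd : FiniteDimensional ℚ E := IntermediateField.adjoin.finiteDimensional hint
  obtain ⟨P, hP⟩ : ∃ P : ℚ[X], aeval ζ P = γ := by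
    have h1 : γ ∈ Algebra.adjoin ℚ {ζ} := by
      rw [← IntermediateField.adjoin_simple_toSubalgebra_of_isAlgebraic hint.isAlgebraic]
      exact hγ
    rw [Algebra.adjoin_singleton_eq_range_aeval] at h1
    exact h1
  have hζE : ζ ∈ E := IntermediateField.mem_adjoin_simple_self ℚ ζ
  let z : E := ⟨ζ, hζE⟩
  have hconj : ∀ w : ℂ, w ^ t = 1 → aeval (w⁻¹) P = (starRingEnd ℂ) (aeval w P) := by
    intro w hw
    rw [Complex.inv_eq_conj (Complex.norm_eq_one_of_pow_eq_one hw ht), aeval_def, aeval_def,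
      hom_eval₂]
    congr 1
    exact RingHom.ext_rat _ _
  -- `x = γ γ̄`, and every embedding of `ℚ(ζ)` maps it to `‖γ‖ ^ 2`; its trace is thus rational
  let x : E := aeval z P * aeval z⁻¹ P
  have hσ : ∀ σ : E →ₐ[ℚ] ℂ, σ x = ((‖γ‖ ^ 2 : ℝ) : ℂ) := by
    intro σ
    have h1 : σ x = aeval (σ z) P * aeval (σ z)⁻¹ P := by
      rw [map_mul, ← aeval_algHom_apply, ← aeval_algHom_apply, map_inv₀]
    have hzt : z ^ t = 1 := Subtype.ext hζ.pow_eq_one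
    have h2 : (σ z) ^ t = 1 := by rw [← map_pow, hzt, map_one]
    rw [h1, hconj _ h2, Complex.mul_conj, Complex.normSq_eq_norm_sq]
    have h3 : (aeval z P) ^ m = algebraMap ℚ E g := by
      apply Subtype.ext
      have h4 : ((aeval z P : E) : ℂ) = γ := by
        rw [← hP]
        exact (aeval_algHom_apply E.val z P).symm
      push_cast
      rw [h4, hg]
      simp
    have h5 : (aeval (σ z) P) ^ m = (g : ℂ) := by
      rw [aeval_algHom_apply, ← map_pow, h3]
      simp
    have h6 : ‖aeval (σ z) P‖ = ‖γ‖ := by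
      refine (pow_left_inj₀ (norm_nonneg _) (norm_nonneg _) hm).1 ?_
      rw [← norm_pow, ← norm_pow, h5, hg]
    rw [h6]
  have htr := trace_eq_sum_embeddings (K := ℚ) (L := E) ℂ (x := x)
  rw [Finset.sum_congr rfl fun σ _ => hσ σ, Finset.sum_const, Finset.card_univ,
    AlgHom.card ℚ E ℂ, nsmul_eq_mul] at htr
  have hn : (Module.finrank ℚ E : ℝ) ≠ 0 := Nat.cast_ne_zero.2 Module.finrank_pos.ne'
  refine ⟨Algebra.trace ℚ E x / Module.finrank ℚ E, ?_⟩
  have h7 : ((Algebra.trace ℚ E x : ℚ) : ℝ) = Module.finrank ℚ E * ‖γ‖ ^ 2 := by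
    have : ((((Algebra.trace ℚ E x : ℚ) : ℝ)) : ℂ) =
        ((Module.finrank ℚ E * ‖γ‖ ^ 2 : ℝ) : ℂ) := by
      rw [Complex.ofReal_mul, Complex.ofReal_natCast, ← htr]
      simp
    exact_mod_cast this
  push_cast
  rw [h7]
  field_simp

/-- The degree of `ℚ(ζ_t, β)` over `ℚ(ζ_t, β ^ n)`, in terms of minimal polynomials over
`ℚ(ζ_t)`, where `β ^ t = ± g₀ ^ h` and `n = t / gcd (2h, t)`. If `j` is the degree of `β`, then
`j ∣ t` and `|β ^ j|²` is a rational number with `(t / j)`-th power `g₀ ^ (2h)`. As `g₀` is not a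
power, `t / j` divides `gcd (2h, t)`, that is `n ∣ j`. -/
lemma natDegree_minpoly_eq {g g₀ : ℚ} {h t n : ℕ} (hg₀ : 0 < g₀)
    (hpow : ¬ ∃ (r : ℚ) (k : ℕ), 2 ≤ k ∧ r ^ k = g₀) (hg : g = g₀ ^ h ∨ g = -(g₀ ^ h))
    (ht : t ≠ 0) (hn : t = Nat.gcd (2 * h) t * n) {ζ β : ℂ} (hζ : IsPrimitiveRoot ζ t)
    (hβ : β ^ t = g) :
    (minpoly (IntermediateField.adjoin ℚ {ζ}) β).natDegree =
      n * (minpoly (IntermediateField.adjoin ℚ {ζ}) (β ^ n)).natDegree := by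
  set E := IntermediateField.adjoin ℚ {ζ} with hE
  have hζE : ζ ∈ E := IntermediateField.mem_adjoin_simple_self ℚ ζ
  have hg0 : g ≠ 0 := by
    have : g₀ ^ h ≠ 0 := by positivity
    rcases hg with rfl | rfl <;> simpa using this
  have hβ0 : β ≠ 0 := by
    rintro rfl
    rw [zero_pow ht] at hβ
    exact hg0 (by exact_mod_cast hβ.symm)
  have hβE : β ^ t ∈ E := by
    rw [hβ]
    exact E.algebraMap_mem g
  set j := (minpoly E β).natDegree with hj
  have hjE : β ^ j ∈ E := pow_natDegree_minpoly_mem ht hζ hζE hβ0 hβE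
  have hn0 : n ≠ 0 := by
    rintro rfl
    exact ht (by simpa using hn)
  have hint : IsIntegral E β := by
    refine IsIntegral.of_pow (Nat.pos_of_ne_zero ht) ?_
    exact isIntegral_algebraMap (R := E) (x := (⟨β ^ t, hβE⟩ : E))
  have hj0 : j ≠ 0 := (minpoly.natDegree_pos hint).ne'
  have hjt : j ∣ t := by
    have hd : β ^ (Nat.gcd j t) ∈ E := by
      have h1 : β ^ (Nat.gcd j t) = (β ^ j) ^ (Nat.gcdA j t) * (β ^ t) ^ (Nat.gcdB j t) := by
        rw [← zpow_natCast, Nat.gcd_eq_gcd_ab, zpow_add₀ hβ0, zpow_mul, zpow_mul, zpow_natCast,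
          zpow_natCast]
      rw [h1]
      exact mul_mem (zpow_mem hjE _) (zpow_mem hβE _)
    have h2 := natDegree_minpoly_le (Nat.gcd_pos_of_pos_left t (Nat.pos_of_ne_zero hj0)).ne' hd
    have h3 : Nat.gcd j t = j :=
      le_antisymm (Nat.le_of_dvd (Nat.pos_of_ne_zero hj0) (Nat.gcd_dvd_left _ _)) h2
    rw [← h3]
    exact Nat.gcd_dvd_right _ _
  obtain ⟨m, hm⟩ := hjt
  have hm0 : m ≠ 0 := by
    rintro rfl
    exact ht (by simpa using hm)
  have hγ : (β ^ j) ^ m = (g : ℂ) := by rw [← pow_mul, ← hm, hβ]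
  obtain ⟨q, hq⟩ := exists_rat_norm_sq ht hζ hjE hm0 hγ
  have hqpos : 0 < q := by
    have : (0 : ℝ) < q := by
      rw [hq]
      have : 0 < ‖β ^ j‖ := norm_pos_iff.2 (pow_ne_zero _ hβ0)
      positivity
    exact_mod_cast this
  have hqm : q ^ m = g₀ ^ (2 * h) := by
    have h1 : (q : ℝ) ^ m = ((g ^ 2 : ℚ) : ℝ) := by
      rw [hq, ← pow_mul, mul_comm, pow_mul, ← norm_pow, hγ]
      have : ‖(g : ℂ)‖ = |(g : ℝ)| := by
        rw [← Complex.ofReal_ratCast, Complex.norm_real, Real.norm_eq_abs]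
      rw [this, sq_abs]
      push_cast
      rfl
    have h2 : q ^ m = g ^ 2 := by exact_mod_cast h1
    rw [h2]
    rcases hg with rfl | rfl
    · ring
    · ring
  have hmk : m ∣ Nat.gcd (2 * h) t :=
    Nat.dvd_gcd (dvd_of_pow_eq_pow hqpos hg₀ hpow hm0 hqm) (Dvd.intro_left _ hm.symm)
  obtain ⟨c, hc⟩ := hmk
  have hjn : j = n * c := by
    have : m * j = m * (n * c) := by
      rw [mul_comm m j, ← hm, hn, hc]
      ring
    exact Nat.eq_of_mul_eq_mul_left (Nat.pos_of_ne_zero hm0) this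
  have hc0 : c ≠ 0 := by
    rintro rfl
    exact hj0 (by simpa using hjn)
  have hle : (minpoly E (β ^ n)).natDegree ≤ c := by
    refine natDegree_minpoly_le hc0 ?_
    rw [← pow_mul, ← hjn]
    exact hjE
  have hge : j ≤ n * (minpoly E (β ^ n)).natDegree := by
    have hne : (minpoly E (β ^ n)).comp (X ^ n) ≠ 0 := by
      have hm1 := minpoly.monic (hint.pow n)
      have := hm1.comp (monic_X_pow n) (by simpa using hn0)
      exact this.ne_zero
    have h1 : minpoly E β ∣ (minpoly E (β ^ n)).comp (X ^ n) := by
      refine minpoly.dvd E β ?_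
      rw [aeval_comp]
      simp
    have h2 := natDegree_le_of_dvd h1 hne
    rw [natDegree_comp, natDegree_X_pow, mul_comm] at h2
    exact h2
  refine le_antisymm hge ?_
  rw [hjn]
  exact Nat.mul_le_mul_left _ hle

end KummerDegree

/-! ### Kummer fields inside ℂ -/

section KummerFields

/-- The field `ℚ(ζ)(b)` as a number field, with its degree and its prime splitting law. -/
lemma exists_kummer_field {g : ℚ} (hg : g ≠ 0) {t k : ℕ} (ht : t ≠ 0) (hk : k ∣ t) {ζ b : ℂ}
    (hζ : IsPrimitiveRoot ζ t) (hb : b ^ k = g) :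
    ∃ (K : Type) (_ : Field K) (_ : NumberField K),
      Module.finrank ℚ K = Module.finrank ℚ (IntermediateField.adjoin ℚ {ζ}) *
        (minpoly (IntermediateField.adjoin ℚ {ζ}) b).natDegree ∧
      ∃ N : ℕ, N ≠ 0 ∧ ∀ p : ℕ, p.Prime → ¬ p ∣ N →
        aK K p = if PowRes g t k p then (Module.finrank ℚ K : ℝ) else 0 := by
  have hk0 : k ≠ 0 := by rintro rfl; exact ht (zero_dvd_iff.1 hk)
  set E := IntermediateField.adjoin ℚ {ζ} with hE
  have hintζ : IsIntegral ℚ ζ := (hζ.isIntegral (Nat.pos_of_ne_zero ht)).tower_top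
  have hfd : FiniteDimensional ℚ E := IntermediateField.adjoin.finiteDimensional hintζ
  have hintb : IsIntegral E b := by
    refine IsIntegral.of_pow (Nat.pos_of_ne_zero hk0) ?_
    rw [hb]
    exact isIntegral_algebraMap (R := E) (x := (algebraMap ℚ E g))
  set F := IntermediateField.adjoin E {b} with hF
  have hfdF : FiniteDimensional E F := IntermediateField.adjoin.finiteDimensional hintb
  have hfdQ : FiniteDimensional ℚ F := FiniteDimensional.trans ℚ E F
  have hchar : CharZero F := charZero_of_injective_algebraMap (algebraMap E F).injective
  have hnf : NumberField F := ⟨⟩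
  have hζE : ζ ∈ E := IntermediateField.mem_adjoin_simple_self ℚ ζ
  have hbF : b ∈ F := IntermediateField.mem_adjoin_simple_self E b
  let z : F := algebraMap E F ⟨ζ, hζE⟩
  let β : F := ⟨b, hbF⟩
  refine ⟨F, inferInstance, hnf, ?_, ?_⟩
  · rw [← Module.finrank_mul_finrank ℚ E F, hF, IntermediateField.adjoin.finrank hintb]
  · refine aK_kummer (ζ := z) (b := β) hg ht hk ?_ ?_ ?_
    · exact IsPrimitiveRoot.of_map_of_injective (f := algebraMap F ℂ) hζ
        (algebraMap F ℂ).injective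
    · apply Subtype.ext
      change b ^ k = _
      rw [hb]
      simp
    · rw [eq_top_iff]
      have h1 : ∀ e : E, algebraMap E F e ∈ Algebra.adjoin ℚ {z, β} := by
        intro e
        have he : (e : ℂ) ∈ Algebra.adjoin ℚ {ζ} := by
          rw [← IntermediateField.adjoin_simple_toSubalgebra_of_isAlgebraic hintζ.isAlgebraic]
          exact e.2
        rw [Algebra.adjoin_singleton_eq_range_aeval] at he
        obtain ⟨P, hP⟩ := he
        have h2 : algebraMap E F e = aeval z P := by
          apply Subtype.ext
          have h3 : ((aeval z P : F) : ℂ) = aeval ζ P :=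
            (aeval_algHom_apply (F.val.restrictScalars ℚ) z P).symm
          rw [h3]
          exact hP.symm
        rw [h2]
        exact aeval_mem_adjoin_singleton ℚ z |> (Algebra.adjoin_mono (by simp) ·)
      intro x _
      have hx : (x : ℂ) ∈ Algebra.adjoin E {b} := by
        rw [← IntermediateField.adjoin_simple_toSubalgebra_of_isAlgebraic hintb.isAlgebraic]
        exact x.2
      rw [Algebra.adjoin_singleton_eq_range_aeval] at hx
      obtain ⟨P, hP⟩ := hx
      have h2 : x = aeval β P := by
        apply Subtype.ext
        have h3 : ((aeval β P : F) : ℂ) = aeval b P := (aeval_algHom_apply F.val β P).symm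
        rw [h3]
        exact hP.symm
      rw [h2, aeval_eq_sum_range]
      refine sum_mem fun i _ => ?_
      rw [Algebra.smul_def]
      exact mul_mem (h1 _) (pow_mem (Algebra.subset_adjoin (by simp)) _)

end KummerFields

/-! ### Characters and the residual index -/

section Characters

lemma pow_eq_one_iff_exists {p : ℕ} [Fact p.Prime] {k : ℕ} (hk : k ∣ p - 1) {a : ZMod p}
    (ha : a ≠ 0) : a ^ ((p - 1) / k) = 1 ↔ ∃ y, y ^ k = a := by
  obtain ⟨q, hq⟩ := hk
  have hp1 : 0 < p - 1 := Nat.sub_pos_of_lt (Fact.out : p.Prime).one_lt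
  have hk0 : 0 < k := Nat.pos_of_ne_zero (by rintro rfl; omega)
  have hq0 : 0 < q := Nat.pos_of_ne_zero (by rintro rfl; omega)
  have hdiv : (p - 1) / k = q := by rw [hq, Nat.mul_div_cancel_left _ hk0]
  rw [hdiv]
  have hcard : Nat.card (ZMod p)ˣ = p - 1 := by
    rw [Nat.card_eq_fintype_card, ZMod.card_units_eq_totient, Nat.totient_prime Fact.out]
  constructor
  · intro h
    -- the `k`-th powers form a subgroup of the kernel of `x ↦ x ^ q`, and both have order `q`
    have hle : (powMonoidHom k : (ZMod p)ˣ →* (ZMod p)ˣ).range ≤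
        (powMonoidHom q : (ZMod p)ˣ →* (ZMod p)ˣ).ker := by
      rintro _ ⟨y, rfl⟩
      rw [MonoidHom.mem_ker, powMonoidHom_apply, powMonoidHom_apply, ← pow_mul, ← hq, ← hcard]
      exact pow_card_eq_one'
    have heq := Subgroup.eq_of_le_of_card_ge hle (by
      rw [IsCyclic.card_powMonoidHom_range, IsCyclic.card_powMonoidHom_ker, hcard, hq,
        Nat.gcd_eq_right (Dvd.intro _ rfl), Nat.gcd_eq_right (Dvd.intro_left _ rfl),
        Nat.mul_div_cancel_left _ hk0])
    have hu : Units.mk0 a ha ∈ (powMonoidHom q : (ZMod p)ˣ →* (ZMod p)ˣ).ker := by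
      rw [MonoidHom.mem_ker, powMonoidHom_apply]
      exact Units.ext (by simpa using h)
    rw [← heq] at hu
    obtain ⟨y, hy⟩ := hu
    exact ⟨y, by simpa using congrArg Units.val hy⟩
  · rintro ⟨y, rfl⟩
    have hy : y ≠ 0 := by
      rintro rfl
      exact ha (zero_pow hk0.ne')
    rw [← pow_mul, ← hq, ZMod.pow_card_sub_one_eq_one hy]

/-- The characters of order dividing `k` detect `k`-th powers, by orthogonality. -/
lemma sum_psiSum {g : ℚ} {p : ℕ} (hp : p.Prime) {k : ℕ} (hk : k ∣ p - 1)
    (ha : ratRed g p ≠ 0) :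
    ∑ d ∈ k.divisors, psiSum g p d = if ∃ y, y ^ k = ratRed g p then (k : ℂ) else 0 := by
  have : Fact p.Prime := ⟨hp⟩
  have hp1 : 0 < p - 1 := Nat.sub_pos_of_lt hp.one_lt
  have hk0 : 0 < k := Nat.pos_of_ne_zero (by rintro rfl; rw [zero_dvd_iff] at hk; omega)
  set a := ratRed g p with hadef
  have hcard : Nat.card (ZMod p)ˣ = p - 1 := by
    rw [Nat.card_eq_fintype_card, ZMod.card_units_eq_totient, Nat.totient_prime Fact.out]
  obtain ⟨e⟩ := MulChar.mulEquiv_units (ZMod p) ℂ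
  have hfin : Finite (MulChar (ZMod p) ℂ) := Finite.of_equiv _ e.symm.toEquiv
  have := Fintype.ofFinite (MulChar (ZMod p) ℂ)
  have hcardM : Nat.card (MulChar (ZMod p) ℂ) = p - 1 := by
    rw [Nat.card_congr e.toEquiv, hcard]
  have hcyc : IsCyclic (MulChar (ZMod p) ℂ) :=
    isCyclic_of_surjective e.symm e.symm.surjective
  have hpsi : ∀ d, psiSum g p d =
      ∑ χ : MulChar (ZMod p) ℂ with orderOf χ = d, χ a := by
    intro d
    rw [psiSum, finsum_mem_eq_finite_toFinset_sum _ (Set.toFinite _)]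
    refine Finset.sum_congr ?_ fun _ _ => rfl
    ext χ
    simp
  have hsum : ∑ d ∈ k.divisors, psiSum g p d =
      ∑ χ : MulChar (ZMod p) ℂ with χ ^ k = 1, χ a := by
    rw [Finset.sum_congr rfl fun d _ => hpsi d]
    rw [← Finset.sum_fiberwise_of_maps_to (s := Finset.univ.filter
      fun χ : MulChar (ZMod p) ℂ => χ ^ k = 1) (t := k.divisors) (g := orderOf)]
    · refine Finset.sum_congr rfl fun d hd => Finset.sum_congr ?_ fun _ _ => rfl
      ext χ
      simp only [Finset.mem_filter, Finset.mem_univ, true_and]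
      constructor
      · intro h
        exact ⟨orderOf_dvd_iff_pow_eq_one.1 (h ▸ Nat.dvd_of_mem_divisors hd), h⟩
      · exact fun h => h.2
    · intro χ hχ
      rw [Finset.mem_filter] at hχ
      exact Nat.mem_divisors.2 ⟨orderOf_dvd_of_pow_eq_one hχ.2, hk0.ne'⟩
  rw [hsum]
  split_ifs with h
  · obtain ⟨y, hy⟩ := h
    have hyu : y ≠ 0 := by
      rintro rfl
      rw [zero_pow hk0.ne'] at hy
      exact ha hy.symm
    have h1 : ∀ χ ∈ Finset.univ.filter fun χ : MulChar (ZMod p) ℂ => χ ^ k = 1, χ a = 1 := by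
      intro χ hχ
      rw [Finset.mem_filter] at hχ
      rw [← hy, map_pow, ← MulChar.pow_apply' χ hk0.ne', hχ.2,
        MulChar.one_apply (isUnit_iff_ne_zero.2 hyu)]
    rw [Finset.sum_congr rfl h1, Finset.sum_const, nsmul_eq_mul, mul_one]
    have h2 := IsCyclic.card_powMonoidHom_ker (G := MulChar (ZMod p) ℂ) k
    rw [hcardM, Nat.gcd_eq_right hk] at h2
    rw [← Fintype.card_subtype, ← Nat.card_eq_fintype_card]
    exact congrArg _ h2
  · have h1 : a ^ ((p - 1) / k) ≠ 1 := fun h' => h ((pow_eq_one_iff_exists hk ha).1 h')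
    obtain ⟨χ₀, hχ₀⟩ := MulChar.exists_apply_ne_one_of_hasEnoughRootsOfUnity (ZMod p) ℂ h1
    obtain ⟨q, hq⟩ := hk
    have hq0 : q ≠ 0 := by rintro rfl; omega
    have hdiv : (p - 1) / k = q := by rw [hq, Nat.mul_div_cancel_left _ hk0]
    rw [hdiv, map_pow, ← MulChar.pow_apply' χ₀ hq0] at hχ₀
    have hχk : (χ₀ ^ q) ^ k = 1 := by
      rw [← pow_mul, mul_comm, ← hq, ← hcardM]
      exact pow_card_eq_one'
    -- multiplication by `χ₀ ^ q` permutes the characters killed by `k` and multiplies the sum by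
    -- `(χ₀ ^ q) a ≠ 1`
    refine eq_zero_of_mul_eq_self_left hχ₀ ?_
    rw [Finset.mul_sum]
    refine Finset.sum_bijective (fun χ => χ₀ ^ q * χ) (Group.mulLeft_bijective _) ?_ ?_
    · intro χ
      simp only [Finset.mem_filter, Finset.mem_univ, true_and, mul_pow, hχk, one_mul]
    · intro χ _
      rw [MulChar.mul_apply]

/-- In the cyclic group `𝔽_p^*`, an element has index divisible by `t` exactly if `t` divides the
group order and the element is a `t`-th power. -/
lemma dvd_resIndex_iff {g : ℚ} {p : ℕ} (hp : p.Prime) {t : ℕ} (ht : t ≠ 0)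
    (ha : ratRed g p ≠ 0) :
    t ∣ resIndex g p ↔ p ≡ 1 [MOD t] ∧ ∃ y, y ^ t = ratRed g p := by
  have : Fact p.Prime := ⟨hp⟩
  have hp1 : 0 < p - 1 := Nat.sub_pos_of_lt hp.one_lt
  obtain ⟨r, hr⟩ := ZMod.orderOf_dvd_card_sub_one ha
  have ho : 0 < orderOf (ratRed g p) := Nat.pos_of_ne_zero (by
    intro h; rw [h] at hr; omega)
  have hres : resIndex g p = r := by
    rw [resIndex]
    nth_rewrite 1 [hr]
    exact Nat.mul_div_cancel_left _ ho
  have hmod : p ≡ 1 [MOD t] ↔ t ∣ p - 1 :=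
    ⟨fun h => (Nat.modEq_iff_dvd' hp.one_lt.le).1 h.symm,
      fun h => ((Nat.modEq_iff_dvd' hp.one_lt.le).2 h).symm⟩
  rw [hres, hmod]
  constructor
  · rintro ⟨s, rfl⟩
    have htp : t ∣ p - 1 := by rw [hr]; exact ⟨orderOf (ratRed g p) * s, by ring⟩
    refine ⟨htp, (pow_eq_one_iff_exists htp ha).1 ?_⟩
    have : (p - 1) / t = orderOf (ratRed g p) * s := by
      refine Nat.div_eq_of_eq_mul_right (Nat.pos_of_ne_zero ht) ?_
      conv_lhs => rw [hr]
      ring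
    rw [this, pow_mul, pow_orderOf_eq_one, one_pow]
  · rintro ⟨htp, hy⟩
    have h1 := orderOf_dvd_of_pow_eq_one ((pow_eq_one_iff_exists htp ha).2 hy)
    obtain ⟨q, hq⟩ := htp
    have hdiv : (p - 1) / t = q := by
      rw [hq, Nat.mul_div_cancel_left _ (Nat.pos_of_ne_zero ht)]
    rw [hdiv] at h1
    obtain ⟨c, hc⟩ := h1
    refine ⟨c, Nat.eq_of_mul_eq_mul_left ho ?_⟩
    rw [← hr, hq, hc]
    ring

end Characters

/-! ### Residual indices and the prime ideal theorem -/

section Combination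

lemma ratRed_ne_zero {g : ℚ} {p : ℕ} (hp : p.Prime) (h : OrdZero g p) : ratRed g p ≠ 0 := by
  have : Fact p.Prime := ⟨hp⟩
  rw [ratRed]
  refine mul_ne_zero ?_ (inv_ne_zero ?_)
  · rw [Ne, ZMod.intCast_zmod_eq_zero_iff_dvd]
    exact h.1
  · rw [Ne, CharP.cast_eq_zero_iff _ p]
    exact h.2

lemma exists_pow_eq_ratRed {g : ℚ} {p : ℕ} (hp : p.Prime) (h : OrdZero g p) (k : ℕ) :
    (∃ y, y ^ k = ratRed g p) ↔ ∃ y : ZMod p, (g.den : ZMod p) * y ^ k = (g.num : ZMod p) := by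
  have : Fact p.Prime := ⟨hp⟩
  have hden : (g.den : ZMod p) ≠ 0 := by
    rw [Ne, CharP.cast_eq_zero_iff _ p]
    exact h.2
  refine exists_congr fun y => ?_
  rw [ratRed, eq_mul_inv_iff_mul_eq₀ hden, mul_comm]

/-- The contribution of `p` to `R - M`, where `n = t / gcd (2h, t)`. -/
noncomputable def powResDiff (g : ℚ) (t k n p : ℕ) : ℝ :=
  (if PowRes g t t p then 1 else 0) - (1 / n) * (if PowRes g t k p then 1 else 0)

/-- The divisors `d` of `gcd (2h, t)` are those with `d ∣ h` together with the others, so `M` counts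
with weight `1 / n` the primes `p ≡ 1 (mod t)` for which `g` is a `gcd (2h, t)`-th power. -/
lemma Rgt_sub_Mgt {g : ℚ} {h t n : ℕ} (ht : t ≠ 0) (hn : t = Nat.gcd (2 * h) t * n) (x : ℝ) :
    (Rgt g t x : ℂ) - Mgt g h t x =
      ((∑ p ∈ ((Finset.Icc 1 ⌊x⌋₊).filter Nat.Prime).filter (fun p => Odd p ∧ OrdZero g p),
        powResDiff g t (Nat.gcd (2 * h) t) n p : ℝ) : ℂ) := by
  set k := Nat.gcd (2 * h) t with hk
  have hkt : k ∣ t := Nat.gcd_dvd_right _ _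
  have hk0 : k ≠ 0 := by rintro h0; rw [h0, zero_mul] at hn; exact ht hn
  have hn0 : n ≠ 0 := by rintro rfl; exact ht (by simpa using hn)
  set G := ((Finset.Icc 1 ⌊x⌋₊).filter Nat.Prime).filter (fun p => Odd p ∧ OrdZero g p) with hG
  have hGmem : ∀ p, p ∈ G ↔ p ∈ Finset.range (⌊x⌋₊ + 1) ∧ p.Prime ∧ Odd p ∧ OrdZero g p := by
    intro p
    simp only [hG, Finset.mem_filter, Finset.mem_Icc, Finset.mem_range]
    constructor
    · rintro ⟨⟨⟨h1, h2⟩, h3⟩, h4⟩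
      exact ⟨by omega, h3, h4⟩
    · rintro ⟨h1, h3, h4⟩
      exact ⟨⟨⟨h3.one_lt.le, by omega⟩, h3⟩, h4⟩
  have hR : (Rgt g t x : ℂ) = ∑ p ∈ G, if PowRes g t t p then 1 else 0 := by
    have hset : ((Finset.range (⌊x⌋₊ + 1)).filter fun p =>
        p.Prime ∧ (Odd p ∧ OrdZero g p ∧ t ∣ resIndex g p)) = G.filter (PowRes g t t) := by
      ext p
      rw [Finset.mem_filter, Finset.mem_filter, hGmem]
      constructor
      · rintro ⟨h1, h2, h3, h4, h5⟩
        refine ⟨⟨h1, h2, h3, h4⟩, ?_⟩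
        rw [dvd_resIndex_iff h2 ht (ratRed_ne_zero h2 h4), exists_pow_eq_ratRed h2 h4] at h5
        exact h5
      · rintro ⟨⟨h1, h2, h3, h4⟩, h5⟩
        refine ⟨h1, h2, h3, h4, ?_⟩
        rw [dvd_resIndex_iff h2 ht (ratRed_ne_zero h2 h4), exists_pow_eq_ratRed h2 h4]
        exact h5
    have hcard : Rgt g t x = (G.filter (PowRes g t t)).card := by
      rw [← hset, Rgt, countPrimes]
      congr!
    rw [hcard, ← Finset.sum_filter, Finset.sum_const, nsmul_eq_mul, mul_one]
  have hM : Mgt g h t x = (1 / (n : ℂ)) * ∑ p ∈ G, if PowRes g t k p then 1 else 0 := by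
    -- the divisors of `gcd (2h, t)` dividing `h` are the divisors of `gcd (h, t)`
    have hdiv : (Nat.gcd h t).divisors = k.divisors.filter (fun d => d ∣ h) := by
      ext d
      simp only [Nat.mem_divisors, Finset.mem_filter, hk, Nat.dvd_gcd_iff]
      constructor
      · rintro ⟨⟨h1, h2⟩, -⟩
        exact ⟨⟨⟨h1.mul_left 2, h2⟩, hk0⟩, h1⟩
      · rintro ⟨⟨⟨-, h2⟩, -⟩, h1⟩
        exact ⟨⟨h1, h2⟩, (Nat.gcd_pos_of_pos_right _ (Nat.pos_of_ne_zero ht)).ne'⟩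
    rw [Mgt, Lgt, Qgt, ← mul_add, ← Finset.sum_add_distrib, hdiv]
    have hset : primesTo g t x = G.filter (fun p => p ≡ 1 [MOD t]) := by
      ext p
      rw [primesTo, Finset.mem_filter, Finset.mem_filter, hGmem]
      tauto
    have hterm : ∀ p ∈ primesTo g t x,
        (∑ d ∈ k.divisors.filter (fun d => d ∣ h), psiSum g p d +
          ∑ d ∈ k.divisors.filter (fun d => ¬ d ∣ h), psiSum g p d) =
        (k : ℂ) * if PowRes g t k p then 1 else 0 := by
      intro p hp
      rw [hset, Finset.mem_filter, hGmem] at hp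
      obtain ⟨⟨-, h2, h3, h4⟩, h5⟩ := hp
      have htp : t ∣ p - 1 := (Nat.modEq_iff_dvd' h2.one_lt.le).1 h5.symm
      rw [Finset.sum_filter_add_sum_filter_not, sum_psiSum h2 (hkt.trans htp)
        (ratRed_ne_zero h2 h4), exists_pow_eq_ratRed h2 h4, mul_ite, mul_one, mul_zero]
      simp only [PowRes, h5, true_and]
    rw [Finset.sum_congr rfl hterm, ← Finset.mul_sum, ← mul_assoc, hset, Finset.sum_filter]
    congr 1
    · have h1 : (t : ℂ) = k * n := by exact_mod_cast hn
      have h2 : (k : ℂ) ≠ 0 := Nat.cast_ne_zero.2 hk0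
      have h3 : (n : ℂ) ≠ 0 := Nat.cast_ne_zero.2 hn0
      rw [h1]
      field_simp
    · refine Finset.sum_congr rfl fun p _ => ?_
      by_cases hp : p ≡ 1 [MOD t]
      · rw [if_pos hp]
      · rw [if_neg hp, if_neg fun hh => hp hh.1]
  rw [hR, hM, Finset.mul_sum, ← Finset.sum_sub_distrib, Complex.ofReal_sum]
  refine Finset.sum_congr rfl fun p _ => ?_
  rw [powResDiff]
  split_ifs <;> simp

/-- The contribution of `p` to `R - M` is, for almost all `p`, a multiple of the difference of the
`p`-th Dedekind zeta coefficients of two number fields, namely `ℚ(ζ_t, β)` with `β ^ t = g` and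
its subfield `ℚ(ζ_t, β ^ n)`. -/
lemma exists_fields {g g₀ : ℚ} {h t n : ℕ} (hd : Decomp g g₀ h) (ht : t ≠ 0)
    (hn : t = Nat.gcd (2 * h) t * n) :
    ∃ (L : Type) (_ : Field L) (_ : NumberField L) (F : Type) (_ : Field F) (_ : NumberField F)
      (N : ℕ) (c : ℝ), N ≠ 0 ∧ ∀ p : ℕ, p.Prime → ¬ p ∣ N →
        powResDiff g t (Nat.gcd (2 * h) t) n p = c * (aK L p - aK F p) := by
  have hn0 : n ≠ 0 := by rintro rfl; exact ht (by simpa using hn)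
  have hζ := Complex.isPrimitiveRoot_exp t ht
  set ζ := Complex.exp (2 * Real.pi * Complex.I / t)
  obtain ⟨β, hβ⟩ := IsAlgClosed.exists_pow_nat_eq (g : ℂ) (Nat.pos_of_ne_zero ht)
  have hβn : (β ^ n) ^ (Nat.gcd (2 * h) t) = g := by
    rw [← pow_mul, mul_comm, ← hn, hβ]
  obtain ⟨L, iL, nL, hLd, NL, hNL, hL⟩ := exists_kummer_field hd.ne_zero ht dvd_rfl hζ hβ
  obtain ⟨F, iF, nF, hFd, NF, hNF, hF⟩ := exists_kummer_field hd.ne_zero ht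
    (Nat.gcd_dvd_right (2 * h) t) hζ hβn
  have hdeg : Module.finrank ℚ L = n * Module.finrank ℚ F := by
    rw [hLd, hFd, natDegree_minpoly_eq hd.g₀_pos hd.not_power hd.eq ht hn hζ hβ]
    ring
  refine ⟨L, iL, nL, F, iF, nF, NL * NF, 1 / Module.finrank ℚ L, mul_ne_zero hNL hNF,
    fun p hp hpN => ?_⟩
  rw [hp.dvd_mul, not_or] at hpN
  have h1 : (n : ℝ) ≠ 0 := Nat.cast_ne_zero.2 hn0
  have h2 : (Module.finrank ℚ F : ℝ) ≠ 0 := Nat.cast_ne_zero.2 Module.finrank_pos.ne'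
  have e1 : aK L p = n * Module.finrank ℚ F * if PowRes g t t p then 1 else 0 := by
    rw [hL p hp hpN.1, hdeg]
    by_cases hA : PowRes g t t p
    · rw [if_pos hA, if_pos hA]
      push_cast
      ring
    · rw [if_neg hA, if_neg hA, mul_zero]
  have e2 : aK F p = Module.finrank ℚ F * if PowRes g t (Nat.gcd (2 * h) t) p then 1 else 0 := by
    rw [hF p hp hpN.2]
    by_cases hA : PowRes g t (Nat.gcd (2 * h) t) p
    · rw [if_pos hA, if_pos hA, mul_one]
    · rw [if_neg hA, if_neg hA, mul_zero]
  rw [e1, e2, powResDiff, hdeg]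
  push_cast
  field_simp

end Combination

/-- `R_{g,t}(x) = M_{g,t}(x) + O(x e^{-c₅ √(log x)})`. -/
theorem stmt11 (g g₀ : ℚ) (h t : ℕ) (hd : Decomp g g₀ h) (ht : 1 ≤ t) :
    ∃ c₅ : ℝ, 0 < c₅ ∧
      (fun x : ℝ => (Rgt g t x : ℂ) - Mgt g h t x) =O[atTop]
        fun x : ℝ => x * Real.exp (-c₅ * Real.sqrt (Real.log x)) := by
  have ht0 : t ≠ 0 := by omega
  obtain ⟨n, hn⟩ := Nat.gcd_dvd_right (2 * h) t
  obtain ⟨L, iL, nL, F, iF, nF, N, c, hN, hLF⟩ := exists_fields hd ht0 hn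
  obtain ⟨c₅, A, x₀, hc₅, hmain⟩ := aK_sub_aK L F
  set u := powResDiff g t (Nat.gcd (2 * h) t) n with hu
  set v : ℕ → ℝ := fun p => c * (aK L p - aK F p) with hv
  set N' := N * 2 * g.num.natAbs * g.den with hN'
  have hN'0 : N' ≠ 0 := by
    have := Int.natAbs_ne_zero.2 (Rat.num_ne_zero.2 hd.ne_zero)
    have := g.den_nz
    simp only [hN', ne_eq, mul_eq_zero, not_or]
    tauto
  -- `w` measures the effect of the finitely many exceptional primes, all dividing `N'`
  set w : ℕ → ℝ := fun p => (if Odd p ∧ OrdZero g p then u p else 0) - v p with hw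
  have hw0 : ∀ p, p.Prime → ¬ p ∣ N' → w p = 0 := by
    intro p hp hpN
    simp only [hN', hp.dvd_mul, not_or] at hpN
    obtain ⟨⟨⟨h1, h2⟩, h3⟩, h4⟩ := hpN
    have hodd : Odd p := hp.odd_of_ne_two (by rintro rfl; exact h2 dvd_rfl)
    have hord : OrdZero g p := ⟨by rwa [Int.natCast_dvd], h4⟩
    simp only [hw, hv]
    rw [if_pos ⟨hodd, hord⟩, hLF p hp h1, sub_self]
  refine ⟨c₅, hc₅, Asymptotics.IsBigO.of_bound (|c| * A + ∑ p ∈ N'.divisors, |w p|) ?_⟩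
  filter_upwards [eventually_ge_atTop x₀, eventually_ge_atTop (Real.exp (c₅ ^ 2))] with x hx hx1
  have h1 : 1 ≤ x * errFn c₅ x := one_le_mul_errFn hx1
  change _ ≤ _ * ‖x * errFn c₅ x‖
  rw [Rgt_sub_Mgt ht0 hn, Complex.norm_real, Real.norm_eq_abs, Real.norm_eq_abs,
    abs_of_nonneg (zero_le_one.trans h1), Finset.sum_filter]
  set Q := (Finset.Icc 1 ⌊x⌋₊).filter Nat.Prime with hQ
  have hsplit : ∑ p ∈ Q, (if Odd p ∧ OrdZero g p then u p else 0) =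
      c * ∑ p ∈ Q, (aK L p - aK F p) + ∑ p ∈ Q, w p := by
    rw [Finset.mul_sum, ← Finset.sum_add_distrib]
    refine Finset.sum_congr rfl fun p _ => ?_
    simp only [hw, hv]
    ring
  have hwsum : |∑ p ∈ Q, w p| ≤ ∑ p ∈ N'.divisors, |w p| := by
    rw [← Finset.sum_filter_ne_zero]
    refine (Finset.abs_sum_le_sum_abs _ _).trans
      (Finset.sum_le_sum_of_subset_of_nonneg (fun p hp => ?_) fun _ _ _ => abs_nonneg _)
    rw [Finset.mem_filter, hQ, Finset.mem_filter] at hp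
    refine Nat.mem_divisors.2 ⟨?_, hN'0⟩
    by_contra hpN
    exact hp.2 (hw0 p hp.1.2 hpN)
  rw [hsplit]
  have hnn : 0 ≤ ∑ p ∈ N'.divisors, |w p| := Finset.sum_nonneg fun _ _ => abs_nonneg _
  calc |c * ∑ p ∈ Q, (aK L p - aK F p) + ∑ p ∈ Q, w p|
      ≤ |c| * |∑ p ∈ Q, (aK L p - aK F p)| + |∑ p ∈ Q, w p| := by
        rw [← abs_mul]
        exact abs_add_le _ _
    _ ≤ |c| * (A * x * errFn c₅ x) + (∑ p ∈ N'.divisors, |w p|) * (x * errFn c₅ x) :=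
        add_le_add (mul_le_mul_of_nonneg_left (hmain x hx) (abs_nonneg _))
          (hwsum.trans (le_mul_of_one_le_right hnn h1))
    _ = _ := by ring
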